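/- The set of pairs (t,x) ∈ ℚ × ℚ satisfying x⁶ − p(t)x⁴ + q(t)x² + r(t) = 0 is exactly {(−5, 20), (−5, −20)}. -/

import Mathlib

/-!
A point of `ℬ₄` determines a point of a conic over `ℚ`, hence a rational parameter `τ` for which
`(τ² + 1)(1 - 2τ³)` is a square; the point is one of the two known ones as soon as this forces
`τ = 0` or `τ = -1/2`.

Write `τ = a / b` in lowest terms. Up to squares `a² + b²` and `b (b³ - 2a³)` are both `1` or both
`5`. In the first case one obtains a point on `y² = x³ + 4`, and a descent in `ℤ[θ]`, `θ = ∛2`,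
shows that the only affine points there have `x = 0`. In the second case the factorization of
`b³ - 2a³` in `ℤ[θ]`, a principal ideal domain with fundamental unit `θ - 1`, yields a point on the
elliptic curve `E : y² = x (x² - 2ρx + 5ρ)` over `ℚ(θ)`, where `5 = (1 + θ²) ρ`, with first
coordinate `5θ/2 - 4θρg` for the rational number `g = (2τ + 1) / 8`. A two-isogeny descent shows
that `E(ℚ(θ))` is generated modulo doubling by `T = (0, 0)` and `P = (5θ/2, 5ρ/2)`. Hence the rank
is smaller than the degree of `ℚ(θ)`, and Chabauty's method applies: in the formal group of `E` at
the prime above two the parameter of a combination of `T`, `P` and doubles that reduces to zero is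
`0` or `2ᵏθ/ρ` times an element of `1 + 2𝒪`, whereas the difference of a point as above and `P` has
parameter `4θg` times such an element, so that `g = 0`.
-/

open IsLocalRing (maximalIdeal)

theorem exists_squarefree_mul_sq {R : Type*} [CommRing R] [IsDomain R] [WfDvdMonoid R] {g : R}
    (hg : g ≠ 0) : ∃ S h : R, Squarefree S ∧ g = S * h ^ 2 := by
  induction g using WellFounded.induction (wellFounded_dvdNotUnit (α := R)) with
  | _ g ih =>
    by_cases hs : Squarefree g
    · exact ⟨g, 1, hs, by ring⟩
    · simp only [Squarefree, not_forall] at hs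
      obtain ⟨x, ⟨g', rfl⟩, hx⟩ := hs
      have hg' : g' ≠ 0 := right_ne_zero_of_mul hg
      obtain ⟨S, h, hS, rfl⟩ :=
        ih g' ⟨hg', x * x, fun h => hx (isUnit_of_mul_isUnit_left h), mul_comm _ _⟩ hg'
      exact ⟨S, x * h, hS, by ring⟩

theorem exists_squarefree_of_mul_eq_sq {R : Type*} [CommRing R] [IsDomain R]
    [UniqueFactorizationMonoid R] {g f n : R} (hg : g ≠ 0) (h : g * f = n ^ 2) :
    ∃ S a b : R, Squarefree S ∧ g = S * a ^ 2 ∧ f = S * b ^ 2 := by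
  obtain ⟨S, a, hS, rfl⟩ := exists_squarefree_mul_sq hg
  have ha : a ≠ 0 := by rintro rfl; simp at hg
  have hS0 : S ≠ 0 := left_ne_zero_of_mul hg
  obtain ⟨m, rfl⟩ : a ∣ n :=
    (IsIntegrallyClosed.pow_dvd_pow_iff two_ne_zero).1 ⟨S * f, by rw [← h]; ring⟩
  have hm : S * f = m ^ 2 := mul_left_cancel₀ (pow_ne_zero 2 ha) (by linear_combination h)
  obtain ⟨b, rfl⟩ : S ∣ m := (hS.dvd_pow_iff_dvd two_ne_zero).1 ⟨f, hm.symm⟩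
  exact ⟨S, a, b, hS, rfl, mul_left_cancel₀ hS0 (by linear_combination hm)⟩

lemma exists_eq_mul_sq_of_isCoprime {a b c : ℤ} (hab : IsCoprime a b) (h : a * b = c ^ 2) :
    ∃ (s : ℤ) (p q : ℤ), s ^ 2 = 1 ∧ a = s * p ^ 2 ∧ b = s * q ^ 2 := by
  obtain ⟨p, hp⟩ := Int.sq_of_isCoprime hab h
  obtain ⟨q, hq⟩ := Int.sq_of_isCoprime hab.symm (by rw [mul_comm, h])
  rcases hp with rfl | rfl <;> rcases hq with rfl | rfl
  · exact ⟨1, p, q, by norm_num, by ring, by ring⟩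
  · have h₀ : p * q = 0 := by nlinarith
    rcases mul_eq_zero.1 h₀ with rfl | rfl
    · exact ⟨-1, 0, q, by norm_num, by ring, by ring⟩
    · exact ⟨1, p, 0, by norm_num, by ring, by ring⟩
  · have h₀ : p * q = 0 := by nlinarith
    rcases mul_eq_zero.1 h₀ with rfl | rfl
    · exact ⟨1, 0, q, by norm_num, by ring, by ring⟩
    · exact ⟨-1, p, 0, by norm_num, by ring, by ring⟩
  · exact ⟨-1, p, q, by norm_num, by ring, by ring⟩

/-! ### Two-isogeny descent over a principal ideal domain -/

section TwoDescent

variable {R K : Type*} [CommRing R] [Field K] [Algebra R K] [IsFractionRing R K]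

lemma exists_sq_eq_of_sq_eq_algebraMap [IsIntegrallyClosed R] {n : K} {m : R}
    (h : n ^ 2 = algebraMap R K m) : ∃ k : R, k ^ 2 = m := by
  obtain ⟨k, rfl⟩ := IsIntegrallyClosed.exists_algebraMap_eq_of_isIntegral_pow (R := R) two_pos
    (h ▸ isIntegral_algebraMap)
  exact ⟨k, IsFractionRing.injective R K (by rw [map_pow, h])⟩

variable [IsDomain R] [IsPrincipalIdealRing R]

lemma exists_isCoprime_eq_div (x : K) :
    ∃ p q : R, q ≠ 0 ∧ IsCoprime p q ∧ x = algebraMap R K p / algebraMap R K q := by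
  obtain ⟨p, q, h, rfl⟩ := IsFractionRing.exists_reduced_fraction (A := R) x
  exact ⟨p, q, nonZeroDivisors.coe_ne_zero q, h.isCoprime, IsFractionRing.mk'_eq_div _⟩

variable {a b : R} {x y : K}

lemma exists_squarefree_dvd_eq_mul_sq (hx : x ≠ 0)
    (h : y ^ 2 = x * (x ^ 2 + algebraMap R K a * x + algebraMap R K b)) :
    ∃ (S : R) (v : K), Squarefree S ∧ S ∣ b ∧ x = algebraMap R K S * v ^ 2 := by
  obtain ⟨p, q, hq, hpq, rfl⟩ := exists_isCoprime_eq_div (R := R) x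
  have hq' : algebraMap R K q ≠ 0 := by simpa
  have hp : p ≠ 0 := by rintro rfl; simp at hx
  obtain ⟨n, hn⟩ : ∃ n, n ^ 2 = p * q * (p ^ 2 + a * (p * q) + b * q ^ 2) := by
    refine exists_sq_eq_of_sq_eq_algebraMap (n := y * algebraMap R K q ^ 2) ?_
    simp only [mul_pow, h, map_mul, map_add, map_pow]
    field_simp
  obtain ⟨S, c, d, hS, hc, hd⟩ := exists_squarefree_of_mul_eq_sq (mul_ne_zero hp hq) hn.symm
  have hSp : S ∣ p := (hS.dvd_pow_iff_dvd three_ne_zero).1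
    ⟨p * d ^ 2 - a * p * c ^ 2 - b * q * c ^ 2, by
      linear_combination p * hd - (a * p + b * q) * hc⟩
  have hSb : S ∣ b * q ^ 3 :=
    ⟨q * d ^ 2 - p * c ^ 2 - a * q * c ^ 2, by linear_combination q * hd - (p + a * q) * hc⟩
  refine ⟨S, algebraMap R K c / algebraMap R K q, hS,
    (hpq.of_isCoprime_of_dvd_left hSp).pow_right.dvd_of_dvd_mul_right hSb, ?_⟩
  have := congrArg (algebraMap R K) hc
  simp only [map_mul, map_pow] at this
  field_simp
  exact this

lemma exists_isCoprime_sq_eq_quartic {S D : R} {v : K} (hS : S ≠ 0) (hv : v ≠ 0)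
    (hSD : S * D = b) (hx : x = algebraMap R K S * v ^ 2)
    (h : y ^ 2 = x * (x ^ 2 + algebraMap R K a * x + algebraMap R K b)) :
    ∃ u w n : R, IsCoprime u w ∧ n ^ 2 = S * u ^ 4 + a * u ^ 2 * w ^ 2 + D * w ^ 4 := by
  obtain ⟨u, w, hw, huw, rfl⟩ := exists_isCoprime_eq_div (R := R) v
  have hw' : algebraMap R K w ≠ 0 := by simpa
  have hS' : algebraMap R K S ≠ 0 := by simpa
  have hu' : algebraMap R K u ≠ 0 := fun h => hv (by rw [h, zero_div])
  obtain ⟨n, hn⟩ : ∃ n, n ^ 2 = S * u ^ 4 + a * u ^ 2 * w ^ 2 + D * w ^ 4 := by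
    refine exists_sq_eq_of_sq_eq_algebraMap
      (n := y * algebraMap R K w ^ 3 / (algebraMap R K S * algebraMap R K u)) ?_
    rw [div_pow, mul_pow, h, hx, ← hSD]
    simp only [map_add, map_mul, map_pow]
    field_simp
  exact ⟨u, w, n, huw, hn⟩

end TwoDescent

/-! ### Valuation rings -/

lemma exists_one_add_mul_eq_one {R : Type*} [CommRing R] [IsLocalRing R] {z : R}
    (hz : z ∈ maximalIdeal R) : ∃ u, (1 + z) * u = 1 :=
  isUnit_iff_exists_inv.1 <| by
    simpa [add_comm] using
      (IsLocalRing.isUnit_one_sub_self_of_mem_nonunits (-z) ((maximalIdeal R).neg_mem hz))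

lemma exists_coe_eq_of_sq_eq {F : Type*} [Field F] {O : ValuationSubring F} {v : F} {m : O}
    (h : v ^ 2 = m) : ∃ z : O, z = v :=
  IsIntegrallyClosed.exists_algebraMap_eq_of_isIntegral_pow two_pos
    (h ▸ isIntegral_algebraMap (x := m))

lemma exists_coe_eq_or_exists_mul_eq_one {F : Type*} [Field F] (O : ValuationSubring F) (x : F) :
    (∃ z : O, z = x) ∨ ∃ g ∈ maximalIdeal O, x * g = 1 := by
  by_cases hx : x ∈ O
  · exact .inl ⟨⟨x, hx⟩, rfl⟩
  have hx₀ : x ≠ 0 := fun h => hx (h ▸ O.zero_mem)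
  refine .inr ⟨⟨x⁻¹, (O.mem_or_inv_mem x).resolve_left hx⟩, fun hu => hx ?_, mul_inv_cancel₀ hx₀⟩
  obtain ⟨u, hu⟩ := isUnit_iff_exists_inv.1 hu
  have hu' : x⁻¹ * u = 1 := congrArg Subtype.val hu
  rw [(inv_mul_eq_one₀ hx₀).1 hu']
  exact u.2

open WeierstrassCurve WeierstrassCurve.Affine

/-! ### Curves with a rational two-torsion point -/

/-- The Weierstrass curve `y² = x(x² + ax + b)`, on which `(0, 0)` is a point of order two. -/
def twoTorsionCurve {F : Type*} [Field F] (a b : F) : Affine F := ⟨0, a, 0, b, 0⟩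

namespace twoTorsionCurve

section Chord

variable {F : Type*} [Field F] {a b : F}

lemma equation_iff {x y : F} :
    (twoTorsionCurve a b).Equation x y ↔ y ^ 2 = x * (x ^ 2 + a * x + b) := by
  rw [Affine.equation_iff]
  simp only [twoTorsionCurve]
  ring_nf

@[simp]
lemma negY_eq (x y : F) : (twoTorsionCurve a b).negY x y = -y := by
  simp [negY, twoTorsionCurve]

lemma isElliptic (h : 16 * b ^ 2 * (a ^ 2 - 4 * b) ≠ 0) : (twoTorsionCurve a b).IsElliptic := by
  refine ⟨isUnit_iff_ne_zero.2 ?_⟩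
  convert h using 1
  simp only [Δ, b₂, b₄, b₆, b₈, twoTorsionCurve]
  ring

/-- The line `y = ℓx + n` meets `y² = x(x² + ax + b)` in points with first coordinates
`x₁, x₂, x₃`, counted with multiplicity; the condition is written out as Vieta's formulas. -/
structure IsChord (a b ℓ n x₁ x₂ x₃ : F) : Prop where
  sum : x₁ + x₂ + x₃ = ℓ ^ 2 - a
  sum_mul : x₁ * x₂ + x₁ * x₃ + x₂ * x₃ = b - 2 * ℓ * n
  prod : x₁ * x₂ * x₃ = n ^ 2

lemma some_eq_or_eq_neg {x y y' : F} (h : (twoTorsionCurve a b).Nonsingular x y)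
    (h' : (twoTorsionCurve a b).Nonsingular x y') :
    Point.some x y h = .some x y' h' ∨ Point.some x y h = -.some x y' h' := by
  rcases Y_eq_of_X_eq h.1 h'.1 rfl with hy | hy
  · exact .inl (by simp [hy])
  · exact .inr (by simp [hy])

lemma y_eq_zero {y : F} (h : (twoTorsionCurve a b).Equation 0 y) : y = 0 := by
  simpa using equation_iff.1 h

variable [DecidableEq F]

theorem exists_some_add_some {x₁ y₁ x₂ y₂ : F} (h₁ : (twoTorsionCurve a b).Nonsingular x₁ y₁)
    (h₂ : (twoTorsionCurve a b).Nonsingular x₂ y₂) (hne : ¬(x₁ = x₂ ∧ y₁ = -y₂)) :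
    ∃ ℓ n x₃, ∃ h₃ : (twoTorsionCurve a b).Nonsingular x₃ (-(ℓ * x₃ + n)),
      Point.some x₁ y₁ h₁ + .some x₂ y₂ h₂ = .some x₃ _ h₃ ∧
      y₁ = ℓ * x₁ + n ∧ y₂ = ℓ * x₂ + n ∧ IsChord a b ℓ n x₁ x₂ x₃ := by
  rw [← negY_eq (a := a) (b := b) x₂] at hne
  set ℓ := (twoTorsionCurve a b).slope x₁ x₂ y₁ y₂ with hℓ
  set x₃ := (twoTorsionCurve a b).addX x₁ x₂ ℓ with hx₃
  have hy₃ : (twoTorsionCurve a b).addY x₁ x₂ y₁ ℓ = -(ℓ * x₃ + (y₁ - ℓ * x₁)) := by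
    simp only [addY, negAddY, negY_eq, ← hx₃]
    ring
  have hy₂ : y₂ = ℓ * x₂ + (y₁ - ℓ * x₁) := by
    by_cases hx : x₁ = x₂
    · linear_combination ℓ * hx - Y_eq_of_Y_ne h₁.1 h₂.1 hx fun h => hne ⟨hx, h⟩
    · have hℓ' : ℓ * (x₁ - x₂) = y₁ - y₂ := by
        rw [hℓ, slope_of_X_ne hx, div_mul_cancel₀ _ (sub_ne_zero.2 hx)]
      linear_combination hℓ'
  have hroots := addPolynomial_slope h₁.1 h₂.1 hne
  rw [addPolynomial_eq, neg_inj, Cubic.prod_X_sub_C_eq, Cubic.toPoly_injective, ← hℓ, ← hx₃]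
    at hroots
  simp only [Cubic.mk.injEq, twoTorsionCurve, zero_mul, sub_zero, add_zero, true_and] at hroots
  obtain ⟨hb, hc, hd⟩ := hroots
  have h₃ := nonsingular_add h₁ h₂ hne
  rw [← hℓ, ← hx₃, hy₃] at h₃
  refine ⟨ℓ, y₁ - ℓ * x₁, x₃, h₃, ?_, by ring, hy₂, by linear_combination hb,
    by linear_combination -hc, by linear_combination hd⟩
  rw [Point.add_some hne, Point.some.injEq]
  exact ⟨rfl, hy₃⟩

lemma exists_some_add_self {x y : F} (h : (twoTorsionCurve a b).Nonsingular x y)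
    (hy : 2 * y ≠ 0) : ∃ x' y', ∃ h' : (twoTorsionCurve a b).Nonsingular x' y',
      Point.some x y h + .some x y h = .some x' y' h' ∧ x' * (2 * y) ^ 2 = (x ^ 2 - b) ^ 2 := by
  have hx : x ≠ 0 := by
    rintro rfl
    exact hy (by rw [y_eq_zero h.1, mul_zero])
  obtain ⟨ℓ, n, x', h', hadd, hn, -, hchord⟩ := exists_some_add_some h h
    fun h => hy (by linear_combination h.2)
  refine ⟨x', _, h', hadd, mul_left_cancel₀ (pow_ne_zero 2 hx) ?_⟩
  have hyn : 2 * y * n = -x * (x ^ 2 - b) := by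
    linear_combination 2 * n * hn - 2 * hchord.prod + x * hchord.sum_mul
  linear_combination (2 * y * n - x * (x ^ 2 - b)) * hyn + (2 * y) ^ 2 * hchord.prod

lemma exists_some_add_origin {x y : F} (h : (twoTorsionCurve a b).Nonsingular x y)
    (h₀ : (twoTorsionCurve a b).Nonsingular 0 0) (hx : x ≠ 0) :
    ∃ x' y', ∃ h' : (twoTorsionCurve a b).Nonsingular x' y',
      Point.some x y h + .some 0 0 h₀ = .some x' y' h' ∧ x * x' = b := by
  obtain ⟨ℓ, n, x', h', hadd, -, hn, hchord⟩ := exists_some_add_some h h₀ (fun h => hx h.1)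
  exact ⟨x', _, h', hadd, by linear_combination hchord.sum_mul + 2 * ℓ * hn⟩

lemma origin_add_origin (h₀ : (twoTorsionCurve a b).Nonsingular 0 0) :
    Point.some 0 0 h₀ + .some 0 0 h₀ = 0 :=
  Point.add_self_of_Y_eq (by rw [negY_eq, neg_zero])

/-- A point `(v², vn)` is divisible by two as soon as one of the slopes `g` of the lines through
half points, `g² = 2v² + a + 2n`, is rational. -/
theorem exists_add_self_eq_some [(twoTorsionCurve a b).IsElliptic] (h2 : (2 : F) ≠ 0) (hb : b ≠ 0)
    {v n g : F} (hv : v ≠ 0) (hg : 2 * v ^ 2 + a + 2 * n = g ^ 2) (hg₀ : g ≠ 0)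
    (h : (twoTorsionCurve a b).Nonsingular (v ^ 2) (v * n)) :
    ∃ S, S + S = Point.some _ _ h := by
  have hn : n ^ 2 = v ^ 4 + a * v ^ 2 + b := by
    refine mul_left_cancel₀ (pow_ne_zero 2 hv) ?_
    linear_combination equation_iff.1 h.1
  set x := v ^ 2 + n + v * g with hx
  have hquad : g ^ 2 * x = x ^ 2 + a * x + b := by
    rw [hx]
    linear_combination -(n + v * g) * hg + hn
  have hx₀ : x ≠ 0 := fun h₀ => hb (by linear_combination (g ^ 2 - x - a) * h₀ - hquad)
  have hxy : (twoTorsionCurve a b).Nonsingular x (g * x) :=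
    equation_iff_nonsingular.1 (equation_iff.2 (by linear_combination x * hquad))
  have h2y : 2 * (g * x) ≠ 0 := mul_ne_zero h2 (mul_ne_zero hg₀ hx₀)
  obtain ⟨ℓ, m, x₃, h₃, hadd, hm, -, hchord⟩ := exists_some_add_some hxy hxy
    fun h => h2y (by linear_combination h.2)
  have hℓ : ℓ = g + v := by
    refine mul_right_cancel₀ h2y ?_
    linear_combination 2 * ℓ * hm + 2 * x * hx + x * hg - hquad + hchord.sum_mul -
      2 * x * hchord.sum
  obtain rfl : x₃ = v ^ 2 := by
    linear_combination hchord.sum + (ℓ + g + v) * hℓ - hg - 2 * hx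
  rcases some_eq_or_eq_neg h h₃ with h' | h'
  · exact ⟨_, hadd.trans h'.symm⟩
  · exact ⟨-.some _ _ hxy, by rw [h', ← hadd, neg_add]⟩

end Chord

/-! ### The kernel of reduction -/

section KernelOfReduction

variable {F : Type*} [Field F] {O : ValuationSubring F} {a b : O}

/-- The point `R` reduces to `0` at the valuation ring `O`, with formal parameters `t = x / y`
and `w = 1 / y`; their usual signs are dropped, so that `w = t³ + at²w + btw²`. -/
def HasFormalCoords (R : (twoTorsionCurve (a : F) b).Point) (t w : O) : Prop :=
  t ∈ maximalIdeal O ∧ (R = 0 ∧ t = 0 ∧ w = 0 ∨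
    ∃ x y h, R = .some x y h ∧ x * w = t ∧ y * w = 1)

namespace HasFormalCoords

variable {R : (twoTorsionCurve (a : F) b).Point} {t w t' w' : O}

lemma zero : HasFormalCoords (0 : (twoTorsionCurve (a : F) b).Point) 0 0 :=
  ⟨zero_mem _, .inl ⟨rfl, rfl, rfl⟩⟩

lemma unique (h : HasFormalCoords R t w) (h' : HasFormalCoords R t' w') : t = t' ∧ w = w' := by
  obtain ⟨-, ⟨rfl, rfl, rfl⟩ | ⟨x, y, hxy, rfl, hx, hy⟩⟩ := h
  · obtain ⟨-, ⟨-, rfl, rfl⟩ | ⟨x, y, hxy, h, -⟩⟩ := h'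
    · exact ⟨rfl, rfl⟩
    · cases h
  · obtain ⟨-, ⟨h, -⟩ | ⟨x, y, hxy, h, hx', hy'⟩⟩ := h'
    · cases h
    · cases h
      have hw : w = w' :=
        Subtype.ext (mul_left_cancel₀ (left_ne_zero_of_mul_eq_one hy) (hy.trans hy'.symm))
      exact ⟨Subtype.ext (by rw [← hx, ← hx', hw]), hw⟩

lemma neg (h : HasFormalCoords R t w) : HasFormalCoords (-R) (-t) (-w) := by
  obtain ⟨ht, ⟨rfl, rfl, rfl⟩ | ⟨x, y, hxy, rfl, hx, hy⟩⟩ := h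
  · simpa using zero
  · refine ⟨neg_mem ht, .inr ⟨x, _, (nonsingular_neg x y).2 hxy, Point.neg_some hxy, ?_, ?_⟩⟩
    · simp [← hx]
    · rw [negY_eq]
      simpa using hy

lemma w_eq (h : HasFormalCoords R t w) : w = t ^ 3 + a * t ^ 2 * w + b * t * w ^ 2 := by
  obtain ⟨-, ⟨rfl, rfl, rfl⟩ | ⟨x, y, hxy, rfl, hx, hy⟩⟩ := h
  · ring
  · apply Subtype.ext
    push_cast
    rw [← hx]
    linear_combination (w : F) ^ 3 * equation_iff.1 hxy.1 - (w * (y * w + 1)) * hy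

lemma pow_three_dvd (h : HasFormalCoords R t w) : t ^ 3 ∣ w := by
  obtain ⟨u, hu⟩ := exists_one_add_mul_eq_one
    (z := -(a * t + b * w) * t) (Ideal.mul_mem_left _ _ h.1)
  exact ⟨u, by linear_combination u * h.w_eq - w * hu⟩

lemma w_mem (h : HasFormalCoords R t w) : w ∈ maximalIdeal O :=
  Ideal.mem_of_dvd _ h.pow_three_dvd (Ideal.pow_mem_of_mem _ h.1 3 three_pos)

end HasFormalCoords

/-- `L` is the slope of the chord (or tangent) through two points of the formal curve
`w = t³ + at²w + btw²`. -/
def IsFormalSlope (a b t₁ w₁ t₂ w₂ L : O) : Prop :=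
  (1 - a * t₂ ^ 2 - b * t₂ * (w₁ + w₂)) * L =
    t₁ ^ 2 + t₁ * t₂ + t₂ ^ 2 + a * (t₁ + t₂) * w₁ + b * w₁ ^ 2

lemma exists_isFormalSlope {t₁ w₁ t₂ w₂ : O} (ht₁ : t₁ ∈ maximalIdeal O) (hw₁ : w₁ ∈ maximalIdeal O)
    (ht₂ : t₂ ∈ maximalIdeal O) : ∃ L ∈ maximalIdeal O, IsFormalSlope a b t₁ w₁ t₂ w₂ L := by
  obtain ⟨u, hu⟩ := exists_one_add_mul_eq_one
    (z := -(a * t₂ + b * (w₁ + w₂)) * t₂) (Ideal.mul_mem_left _ _ ht₂)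
  refine ⟨(t₁ + t₂) * u * t₁ + u * t₂ * t₂ + (a * (t₁ + t₂) + b * w₁) * u * w₁,
    add_mem (add_mem ?_ ?_) ?_, ?_⟩
  · exact Ideal.mul_mem_left _ _ ht₁
  · exact Ideal.mul_mem_left _ _ ht₂
  · exact Ideal.mul_mem_left _ _ hw₁
  · rw [IsFormalSlope]
    linear_combination (t₁ ^ 2 + t₁ * t₂ + t₂ ^ 2 + a * (t₁ + t₂) * w₁ + b * w₁ ^ 2) * hu

namespace HasFormalCoords

variable {R₁ R₂ : (twoTorsionCurve (a : F) b).Point} {t w t₁ w₁ t₂ w₂ g L U ν : O}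

lemma sub_eq (h₁ : HasFormalCoords R₁ t₁ w₁) (h₂ : HasFormalCoords R₂ t₂ w₂)
    (hL : IsFormalSlope a b t₁ w₁ t₂ w₂ L) : w₁ - w₂ = L * (t₁ - t₂) := by
  obtain ⟨u, hu⟩ := exists_one_add_mul_eq_one
    (z := -(a * t₂ + b * (w₁ + w₂)) * t₂) (Ideal.mul_mem_left _ _ h₂.1)
  rw [IsFormalSlope] at hL
  linear_combination u * (h₁.w_eq - h₂.w_eq) - (t₁ - t₂) * u * hL -
    (w₁ - w₂ - L * (t₁ - t₂)) * hu

/-- In the affine chart of the formal coordinates the line `y = ℓx + n` reads `ℓt + nw = 1`. -/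
lemma slope_eq {x₁ y₁ x₂ y₂ ℓ n x₃ : F} (h₁ : HasFormalCoords R₁ t₁ w₁)
    (h₂ : HasFormalCoords R₂ t₂ w₂)
    (hx₁ : x₁ * w₁ = t₁) (hy₁ : y₁ * w₁ = 1) (hx₂ : x₂ * w₂ = t₂) (hy₂ : y₂ * w₂ = 1)
    (hℓ₁ : y₁ = ℓ * x₁ + n) (hℓ₂ : y₂ = ℓ * x₂ + n) (hchord : IsChord (a : F) b ℓ n x₁ x₂ x₃)
    (hL : IsFormalSlope a b t₁ w₁ t₂ w₂ L) : ℓ = -n * L := by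
  have hsub : (w₁ - w₂ : F) = L * (t₁ - t₂) := mod_cast h₁.sub_eq h₂ hL
  by_cases ht : t₁ = t₂
  · subst ht
    obtain rfl : w₁ = w₂ := Subtype.ext (by linear_combination hsub)
    have hw : (w₁ : F) ≠ 0 := right_ne_zero_of_mul_eq_one hy₁
    obtain rfl : x₁ = x₂ := mul_right_cancel₀ hw (hx₁.trans hx₂.symm)
    obtain ⟨u, hu⟩ := exists_one_add_mul_eq_one
      (z := -(a * t₁ + b * (w₁ + w₁)) * t₁) (Ideal.mul_mem_left _ _ h₁.1)
    have hB : (3 * t₁ ^ 2 + 2 * a * t₁ * w₁ + b * w₁ ^ 2 : F) = 2 * ℓ * w₁ := by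
      rw [← hx₁]
      linear_combination w₁ ^ 2 * (2 * x₁ * hchord.sum - hchord.sum_mul - 2 * ℓ * hℓ₁) +
        2 * ℓ * w₁ * hy₁
    have hA : (1 - a * t₁ ^ 2 - b * t₁ * (w₁ + w₁) : F) = -2 * n * w₁ := by
      refine mul_right_cancel₀ hw ?_
      have hw' : (w₁ : F) = t₁ ^ 3 + a * t₁ ^ 2 * w₁ + b * t₁ * w₁ ^ 2 := mod_cast h₁.w_eq
      linear_combination t₁ * hB + 3 * hw' - 2 * ℓ * w₁ * hx₁ - 2 * w₁ ^ 2 * hℓ₁ + 2 * w₁ * hy₁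
    have hL' := congrArg Subtype.val hL
    have hu' := congrArg Subtype.val hu
    push_cast at hL' hu'
    linear_combination n * u * (hL' + hB) + ℓ * u * hA - (ℓ + n * L) * hu'
  · refine mul_right_cancel₀ (sub_ne_zero.2 fun h => ht (Subtype.ext h)) (b := (t₁ - t₂ : F)) ?_
    linear_combination (-ℓ) * (hx₁ - hx₂) - w₁ * hℓ₁ + w₂ * hℓ₂ + hy₁ - hy₂ - n * hsub

lemma some_of_isChord {x₁ y₁ x₂ y₂ ℓ n x₃ : F}
    (h₃ : (twoTorsionCurve (a : F) b).Nonsingular x₃ (-(ℓ * x₃ + n)))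
    (hx₁ : x₁ * w₁ = t₁) (hy₁ : y₁ * w₁ = 1) (hx₂ : x₂ * w₂ = t₂) (hy₂ : y₂ * w₂ = 1)
    (hℓ₁ : y₁ = ℓ * x₁ + n) (hℓ₂ : y₂ = ℓ * x₂ + n) (hchord : IsChord (a : F) b ℓ n x₁ x₂ x₃)
    (hℓ : ℓ = -n * L) (hU : (1 + a * L + b * L ^ 2) * U = 1) (hν : ν = w₁ - L * t₁)
    (ht : t = t₁ + t₂ + ν * (a + 2 * b * L) * U) (htm : t ∈ maximalIdeal O) :
    HasFormalCoords (.some x₃ _ h₃ : (twoTorsionCurve (a : F) b).Point) t (L * t - ν) := by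
  have hU' : (1 + a * L + b * L ^ 2 : F) * U = 1 := mod_cast congrArg Subtype.val hU
  have hn : n * ν = 1 := by
    rw [hν]
    push_cast
    linear_combination hy₁ - w₁ * hℓ₁ + n * L * hx₁ - x₁ * w₁ * hℓ
  have hprod : ℓ * x₃ + n = n ^ 3 * (1 + a * L + b * L ^ 2) * (w₁ * w₂) := by
    have h : y₁ * y₂ * (ℓ * x₃ + n) = n ^ 3 * (1 + a * L + b * L ^ 2) := by
      rw [hℓ₁, hℓ₂]
      linear_combination ℓ ^ 3 * hchord.prod + ℓ ^ 2 * n * hchord.sum_mul +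
        ℓ * n ^ 2 * hchord.sum + (b * n * (ℓ - n * L) - a * n ^ 2) * hℓ
    linear_combination w₁ * w₂ * h - (ℓ * x₃ + n) * (y₂ * w₂ * hy₁ + hy₂)
  have hsum : (t₁ + t₂ : F) * (ℓ * x₃ + n) + x₃ = -n ^ 2 * (a + 2 * b * L) * (w₁ * w₂) := by
    have h : (x₁ * y₂ + y₁ * x₂) * (ℓ * x₃ + n) + y₁ * y₂ * x₃ = -n ^ 2 * (a + 2 * b * L) := by
      rw [hℓ₁, hℓ₂]
      linear_combination 3 * ℓ ^ 2 * hchord.prod + 2 * ℓ * n * hchord.sum_mul +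
        n ^ 2 * hchord.sum + 2 * b * n * hℓ
    rw [← hx₁, ← hx₂]
    linear_combination w₁ * w₂ * h - (x₁ * w₁ * (ℓ * x₃ + n) + x₃) * hy₂ -
      (x₂ * w₂ * (ℓ * x₃ + n) + y₂ * w₂ * x₃) * hy₁
  have hx₃ : x₃ = t * -(ℓ * x₃ + n) := by
    have ht' : (t : F) = t₁ + t₂ + ν * (a + 2 * b * L) * U := congrArg Subtype.val ht
    rw [ht']
    linear_combination hsum + ν * (a + 2 * b * L) * U * hprod +
      ν * (a + 2 * b * L) * (w₁ * w₂) * n ^ 3 * hU' + n ^ 2 * (a + 2 * b * L) * (w₁ * w₂) * hn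
  have hy₃ : -(ℓ * x₃ + n) * (L * t - ν : O) = 1 := by
    push_cast
    linear_combination -L * hx₃ + (1 - L * x₃) * hn + x₃ * ν * hℓ
  refine ⟨htm, .inr ⟨x₃, _, h₃, rfl, ?_, hy₃⟩⟩
  linear_combination (L * t - ν : O) * hx₃ + t * hy₃

theorem add [DecidableEq F] (h₁ : HasFormalCoords R₁ t₁ w₁) (h₂ : HasFormalCoords R₂ t₂ w₂)
    (hL : IsFormalSlope a b t₁ w₁ t₂ w₂ L) (hU : (1 + a * L + b * L ^ 2) * U = 1)
    (hν : ν = w₁ - L * t₁) (ht : t = t₁ + t₂ + ν * (a + 2 * b * L) * U) :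
    HasFormalCoords (R₁ + R₂) t (L * t - ν) := by
  have hsub := h₁.sub_eq h₂ hL
  have htm : t ∈ maximalIdeal O := by
    rw [ht, hν]
    refine add_mem (add_mem h₁.1 h₂.1) (Ideal.mul_mem_right _ _ (Ideal.mul_mem_right _ _ ?_))
    exact sub_mem h₁.w_mem (Ideal.mul_mem_left _ _ h₁.1)
  by_cases hneg : R₁ = -R₂
  · obtain ⟨rfl, rfl⟩ := h₁.unique (hneg ▸ h₂.neg)
    obtain rfl : ν = 0 := by
      obtain ⟨u, hu⟩ := exists_one_add_mul_eq_one (z := -(a * t₂) * t₂)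
        (Ideal.mul_mem_left _ _ h₂.1)
      rw [IsFormalSlope] at hL
      rw [hν]
      linear_combination -u * h₂.w_eq + u * t₂ * hL + (w₂ - L * t₂) * hu
    simpa [hneg, ht] using zero
  obtain ⟨-, ⟨rfl, rfl, rfl⟩ | ⟨x₁, y₁, hxy₁, rfl, hx₁, hy₁⟩⟩ := id h₁
  · convert h₂ using 1
    · exact zero_add _
    · linear_combination ht + (a + 2 * b * L) * U * hν
    · linear_combination L * ht + (L * (a + 2 * b * L) * U - 1) * hν + hsub
  obtain ⟨-, ⟨rfl, rfl, rfl⟩ | ⟨x₂, y₂, hxy₂, rfl, hx₂, hy₂⟩⟩ := id h₂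
  · convert h₁ using 1
    · exact add_zero _
    · linear_combination ht + (a + 2 * b * L) * U * (hν + hsub)
    · linear_combination L * ht + (L * (a + 2 * b * L) * U - 1) * (hν + hsub) - hsub
  obtain ⟨ℓ, n, x₃, h₃, hadd, hℓ₁, hℓ₂, hchord⟩ := exists_some_add_some hxy₁ hxy₂
    (by simpa only [Point.neg_some, negY_eq, Point.some.injEq] using hneg)
  rw [hadd]
  exact some_of_isChord h₃ hx₁ hy₁ hx₂ hy₂ hℓ₁ hℓ₂ hchord
    (slope_eq h₁ h₂ hx₁ hy₁ hx₂ hy₂ hℓ₁ hℓ₂ hchord hL) hU hν ht htm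

theorem exists_add [DecidableEq F] (h₁ : HasFormalCoords R₁ t₁ w₁) (h₂ : HasFormalCoords R₂ t₂ w₂)
    (ha : 2 ∣ a) : ∃ m w : O, HasFormalCoords (R₁ + R₂) ((t₁ + t₂) * (1 + 2 * m)) w := by
  obtain ⟨a', rfl⟩ := ha
  obtain ⟨L, hLm, hL⟩ := exists_isFormalSlope (a := 2 * a') (b := b) (w₂ := w₂) h₁.1 h₁.w_mem h₂.1
  obtain ⟨L', -, hL'⟩ := exists_isFormalSlope (a := 2 * a') (b := b) (w₂ := -w₂) h₁.1 h₁.w_mem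
    (neg_mem h₂.1)
  obtain ⟨U, hU⟩ := exists_one_add_mul_eq_one
    (z := (2 * a' + b * L) * L) (Ideal.mul_mem_left _ _ hLm)
  obtain ⟨u, hu⟩ := exists_one_add_mul_eq_one
    (z := -(2 * a' * t₂ + b * (w₁ + w₂)) * t₂) (Ideal.mul_mem_left _ _ h₂.1)
  -- `ν` vanishes when the two points are opposite, so it is divisible by `t₁ + t₂`
  have hν : w₁ - L * t₁ = (t₁ + t₂) * -(u * t₂ * (t₁ + 2 * a' * w₁ + b * w₁ * L')) := by
    rw [IsFormalSlope] at hL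
    linear_combination u * h₁.w_eq - u * t₁ * hL - (w₁ - L * t₁) * hu -
      u * b * t₂ * w₁ * h₁.sub_eq h₂.neg hL'
  refine ⟨-(u * t₂ * (t₁ + 2 * a' * w₁ + b * w₁ * L')) * (a' + b * L) * U, _,
    h₁.add h₂ hL (U := U) (by linear_combination hU) rfl ?_⟩
  linear_combination -(2 * a' + 2 * b * L) * U * hν

variable {x y : F} {h : (twoTorsionCurve (a : F) b).Nonsingular x y}

lemma sq_mul_eq (hR : HasFormalCoords (.some x y h) t w) (hg : x * g = 1) :
    t ^ 2 * (1 + a * g + b * g ^ 2) = g := by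
  obtain ⟨-, ⟨h', -⟩ | ⟨x, y, hxy, h', hx, hy⟩⟩ := hR
  · cases h'
  obtain ⟨rfl, rfl⟩ := Point.some.inj h'
  apply Subtype.ext
  push_cast
  rw [← hx]
  linear_combination (y * w + 1) * g * hy - g * w ^ 2 * equation_iff.1 h.1 +
    w ^ 2 * (b * x * g - x ^ 2) * hg

lemma exists_of_mul_eq_one (hg : g ∈ maximalIdeal O) (hx : x * g = 1) :
    ∃ t w : O, HasFormalCoords (.some x y h) t w := by
  obtain ⟨u, hu⟩ := exists_one_add_mul_eq_one (z := (a + b * g) * g) (Ideal.mul_mem_left _ _ hg)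
  have hu' : (1 + (a + b * g) * g : F) * u = 1 := congrArg Subtype.val hu
  have hsq : (y * g ^ 2 * u) ^ 2 = (g * u : O) := by
    push_cast
    linear_combination g ^ 4 * u ^ 2 * equation_iff.1 h.1 + g * u * hu' +
      g * u ^ 2 * (1 + x * g + x ^ 2 * g ^ 2 + a * g * (x * g + 1) + b * g ^ 2) * hx
  obtain ⟨t, ht⟩ := exists_coe_eq_of_sq_eq hsq
  have htm : t ^ 2 ∈ maximalIdeal O := by
    rw [show t ^ 2 = g * u from Subtype.ext (by rw [← hsq, ← ht]; rfl)]
    exact Ideal.mul_mem_right _ _ hg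
  refine ⟨t, t * g, Ideal.IsPrime.mem_of_pow_mem inferInstance 2 htm, .inr ⟨x, y, h, rfl, ?_, ?_⟩⟩
  · push_cast
    linear_combination (t : F) * hx
  · push_cast
    rw [ht]
    linear_combination g ^ 3 * u * equation_iff.1 h.1 + hu' +
      u * (1 + x * g + x ^ 2 * g ^ 2 + a * g * (x * g + 1) + b * g ^ 2) * hx

end HasFormalCoords

end KernelOfReduction

end twoTorsionCurve

/-- The cubic algebra `R[θ]/(θ³ - 2)`, in which `⟨a, b, c⟩` stands for `a + bθ + cθ²`. -/
@[ext]
structure CbrtTwo (R : Type*) where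
  a : R
  b : R
  c : R

namespace CbrtTwo

instance {R : Type*} [DecidableEq R] : DecidableEq (CbrtTwo R) :=
  fun _ _ => decidable_of_iff _ CbrtTwo.ext_iff.symm

section Ring

variable {R S : Type*} [CommRing R] [CommRing S]

instance : Zero (CbrtTwo R) := ⟨⟨0, 0, 0⟩⟩
instance : One (CbrtTwo R) := ⟨⟨1, 0, 0⟩⟩
instance : Add (CbrtTwo R) := ⟨fun x y => ⟨x.a + y.a, x.b + y.b, x.c + y.c⟩⟩
instance : Neg (CbrtTwo R) := ⟨fun x => ⟨-x.a, -x.b, -x.c⟩⟩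
instance : Sub (CbrtTwo R) := ⟨fun x y => ⟨x.a - y.a, x.b - y.b, x.c - y.c⟩⟩
instance : Mul (CbrtTwo R) := ⟨fun x y =>
  ⟨x.a * y.a + 2 * (x.b * y.c + x.c * y.b), x.a * y.b + x.b * y.a + 2 * (x.c * y.c),
    x.a * y.c + x.b * y.b + x.c * y.a⟩⟩
instance : NatCast (CbrtTwo R) := ⟨fun n => ⟨n, 0, 0⟩⟩
instance : IntCast (CbrtTwo R) := ⟨fun n => ⟨n, 0, 0⟩⟩

@[simp] lemma zero_a : (0 : CbrtTwo R).a = 0 := rfl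
@[simp] lemma zero_b : (0 : CbrtTwo R).b = 0 := rfl
@[simp] lemma zero_c : (0 : CbrtTwo R).c = 0 := rfl
@[simp] lemma one_a : (1 : CbrtTwo R).a = 1 := rfl
@[simp] lemma one_b : (1 : CbrtTwo R).b = 0 := rfl
@[simp] lemma one_c : (1 : CbrtTwo R).c = 0 := rfl
@[simp] lemma add_a (x y : CbrtTwo R) : (x + y).a = x.a + y.a := rfl
@[simp] lemma add_b (x y : CbrtTwo R) : (x + y).b = x.b + y.b := rfl
@[simp] lemma add_c (x y : CbrtTwo R) : (x + y).c = x.c + y.c := rfl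
@[simp] lemma neg_a (x : CbrtTwo R) : (-x).a = -x.a := rfl
@[simp] lemma neg_b (x : CbrtTwo R) : (-x).b = -x.b := rfl
@[simp] lemma neg_c (x : CbrtTwo R) : (-x).c = -x.c := rfl
@[simp] lemma sub_a (x y : CbrtTwo R) : (x - y).a = x.a - y.a := rfl
@[simp] lemma sub_b (x y : CbrtTwo R) : (x - y).b = x.b - y.b := rfl
@[simp] lemma sub_c (x y : CbrtTwo R) : (x - y).c = x.c - y.c := rfl
@[simp] lemma mul_a (x y : CbrtTwo R) :
    (x * y).a = x.a * y.a + 2 * (x.b * y.c + x.c * y.b) := rfl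
@[simp] lemma mul_b (x y : CbrtTwo R) :
    (x * y).b = x.a * y.b + x.b * y.a + 2 * (x.c * y.c) := rfl
@[simp] lemma mul_c (x y : CbrtTwo R) : (x * y).c = x.a * y.c + x.b * y.b + x.c * y.a := rfl
@[simp] lemma natCast_a (n : ℕ) : (n : CbrtTwo R).a = n := rfl
@[simp] lemma natCast_b (n : ℕ) : (n : CbrtTwo R).b = 0 := rfl
@[simp] lemma natCast_c (n : ℕ) : (n : CbrtTwo R).c = 0 := rfl
@[simp] lemma intCast_a (n : ℤ) : (n : CbrtTwo R).a = n := rfl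
@[simp] lemma intCast_b (n : ℤ) : (n : CbrtTwo R).b = 0 := rfl
@[simp] lemma intCast_c (n : ℤ) : (n : CbrtTwo R).c = 0 := rfl

instance : CommRing (CbrtTwo R) where
  add_assoc x y z := by ext <;> simp <;> ring
  zero_add x := by ext <;> simp
  add_zero x := by ext <;> simp
  add_comm x y := by ext <;> simp <;> ring
  left_distrib x y z := by ext <;> simp <;> ring
  right_distrib x y z := by ext <;> simp <;> ring
  zero_mul x := by ext <;> simp
  mul_zero x := by ext <;> simp
  mul_assoc x y z := by ext <;> simp <;> ring
  one_mul x := by ext <;> simp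
  mul_one x := by ext <;> simp
  neg_add_cancel x := by ext <;> simp
  mul_comm x y := by ext <;> simp <;> ring
  sub_eq_add_neg x y := by ext <;> simp [sub_eq_add_neg]
  nsmul := nsmulRec
  zsmul := zsmulRec
  natCast_zero := by ext <;> simp
  natCast_succ n := by ext <;> simp
  intCast_ofNat n := by ext <;> simp
  intCast_negSucc n := by ext <;> simp

@[simp] lemma ofNat_a (n : ℕ) [n.AtLeastTwo] : (ofNat(n) : CbrtTwo R).a = OfNat.ofNat n := rfl
@[simp] lemma ofNat_b (n : ℕ) [n.AtLeastTwo] : (ofNat(n) : CbrtTwo R).b = 0 := rfl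
@[simp] lemma ofNat_c (n : ℕ) [n.AtLeastTwo] : (ofNat(n) : CbrtTwo R).c = 0 := rfl

instance [Nontrivial R] : Nontrivial (CbrtTwo R) :=
  ⟨0, 1, fun h => zero_ne_one (congrArg a h)⟩

/-- The inclusion of the base ring. -/
def const : R →+* CbrtTwo R where
  toFun r := ⟨r, 0, 0⟩
  map_one' := rfl
  map_mul' x y := by ext <;> simp
  map_zero' := rfl
  map_add' x y := by ext <;> simp

@[simp] lemma const_a (r : R) : (const r).a = r := rfl
@[simp] lemma const_b (r : R) : (const r).b = 0 := rfl
@[simp] lemma const_c (r : R) : (const r).c = 0 := rfl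

/-- The cube root of two. -/
def θ : CbrtTwo R := ⟨0, 1, 0⟩

@[simp] lemma θ_a : (θ : CbrtTwo R).a = 0 := rfl
@[simp] lemma θ_b : (θ : CbrtTwo R).b = 1 := rfl
@[simp] lemma θ_c : (θ : CbrtTwo R).c = 0 := rfl

lemma θ_pow_three : (θ : CbrtTwo R) ^ 3 = 2 := by ext <;> simp [pow_succ]

/-- The norm form of `R[θ]` over `R`. -/
def norm : CbrtTwo R →* R where
  toFun x := x.a ^ 3 + 2 * x.b ^ 3 + 4 * x.c ^ 3 - 6 * x.a * x.b * x.c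
  map_one' := by simp
  map_mul' x y := by simp; ring

lemma norm_apply (x : CbrtTwo R) :
    norm x = x.a ^ 3 + 2 * x.b ^ 3 + 4 * x.c ^ 3 - 6 * x.a * x.b * x.c := rfl

lemma norm_zero : norm (0 : CbrtTwo R) = 0 := by simp [norm_apply]

lemma norm_neg (x : CbrtTwo R) : norm (-x) = -norm x := by simp [norm_apply]; ring

/-- The product of the two other conjugates of `x`. -/
def adj (x : CbrtTwo R) : CbrtTwo R :=
  ⟨x.a ^ 2 - 2 * x.b * x.c, 2 * x.c ^ 2 - x.a * x.b, x.b ^ 2 - x.a * x.c⟩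

lemma mul_adj (x : CbrtTwo R) : x * adj x = const (norm x) := by
  ext <;> simp only [const_a, const_b, const_c, mul_a, mul_b, mul_c, adj, norm_apply] <;> ring

lemma dvd_const_norm (x : CbrtTwo R) : x ∣ const (norm x) := ⟨adj x, (mul_adj x).symm⟩

/-- Base change along a ring homomorphism. -/
def map (f : R →+* S) : CbrtTwo R →+* CbrtTwo S where
  toFun x := ⟨f x.a, f x.b, f x.c⟩
  map_one' := by ext <;> simp
  map_mul' x y := by ext <;> simp [map_ofNat]
  map_zero' := by ext <;> simp
  map_add' x y := by ext <;> simp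

@[simp] lemma map_a (f : R →+* S) (x : CbrtTwo R) : (map f x).a = f x.a := rfl
@[simp] lemma map_b (f : R →+* S) (x : CbrtTwo R) : (map f x).b = f x.b := rfl
@[simp] lemma map_c (f : R →+* S) (x : CbrtTwo R) : (map f x).c = f x.c := rfl
@[simp] lemma map_θ (f : R →+* S) : map f θ = θ := by ext <;> simp

lemma norm_map (f : R →+* S) (x : CbrtTwo R) : norm (map f x) = f (norm x) := by
  simp [norm_apply, map_ofNat]

end Ring

/-! ### The number field `ℚ(θ)` -/

lemma two_dvd_of_norm_eq_zero {x : CbrtTwo ℤ} (h : norm x = 0) : 2 ∣ x := by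
  obtain ⟨a, b, c⟩ := x
  simp only [norm_apply] at h
  have even_of_cube {n m : ℤ} (h : n ^ 3 = m + m) : Even n := (Int.even_pow.1 ⟨m, h⟩).1
  obtain ⟨a, rfl⟩ := even_of_cube (n := a) (m := 3 * a * b * c - b ^ 3 - 2 * c ^ 3) (by linarith)
  obtain ⟨b, rfl⟩ := even_of_cube (n := b) (m := 3 * a * b * c - 2 * a ^ 3 - c ^ 3) (by linarith)
  obtain ⟨c, rfl⟩ := even_of_cube (n := c) (m := 3 * a * b * c - a ^ 3 - 2 * b ^ 3) (by linarith)
  exact ⟨⟨a, b, c⟩, by ext <;> simp [two_mul]⟩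

lemma norm_int_eq_zero_iff {x : CbrtTwo ℤ} : norm x = 0 ↔ x = 0 := by
  refine ⟨fun h => ?_, fun h => by rw [h, norm_zero]⟩
  induction hn : x.a.natAbs + x.b.natAbs + x.c.natAbs using Nat.strong_induction_on
    generalizing x with
  | _ n ih =>
    obtain ⟨y, rfl⟩ := two_dvd_of_norm_eq_zero h
    have hy : norm y = 0 := by
      rw [map_mul] at h
      exact (mul_eq_zero.1 h).resolve_left (by simp [norm_apply])
    simp only [mul_a, mul_b, mul_c, ofNat_a, ofNat_b, ofNat_c] at hn
    by_cases hy0 : y = 0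
    · rw [hy0, mul_zero]
    · exact absurd (ih _ (by simp only [CbrtTwo.ext_iff, zero_a, zero_b, zero_c] at hy0; omega)
        hy rfl) hy0

instance : IsDomain (CbrtTwo ℤ) :=
  haveI : NoZeroDivisors (CbrtTwo ℤ) := ⟨fun {x y} h => by
    rw [← norm_int_eq_zero_iff, ← norm_int_eq_zero_iff (x := y), ← mul_eq_zero, ← map_mul, h,
      norm_zero]⟩
  NoZeroDivisors.to_isDomain _

instance : Algebra (CbrtTwo ℤ) (CbrtTwo ℚ) := (map (Int.castRingHom ℚ)).toAlgebra

local notation "ι" => algebraMap (CbrtTwo ℤ) (CbrtTwo ℚ)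

@[simp] lemma ι_a (x : CbrtTwo ℤ) : (ι x).a = x.a := rfl
@[simp] lemma ι_b (x : CbrtTwo ℤ) : (ι x).b = x.b := rfl
@[simp] lemma ι_c (x : CbrtTwo ℤ) : (ι x).c = x.c := rfl

lemma ι_θ : ι θ = θ := map_θ _

lemma norm_ι (x : CbrtTwo ℤ) : norm (ι x) = norm x := norm_map _ x

lemma ι_injective : Function.Injective ι := fun x y h => by
  simpa [CbrtTwo.ext_iff] using h

lemma exists_mul_natCast_eq_ι (x : CbrtTwo ℚ) :
    ∃ (m : ℕ) (z : CbrtTwo ℤ), m ≠ 0 ∧ x * m = ι z := by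
  refine ⟨x.a.den * x.b.den * x.c.den, ⟨x.a.num * x.b.den * x.c.den,
    x.b.num * x.a.den * x.c.den, x.c.num * x.a.den * x.b.den⟩, by simp, ?_⟩
  have ha := Rat.mul_den_eq_num x.a
  have hb := Rat.mul_den_eq_num x.b
  have hc := Rat.mul_den_eq_num x.c
  ext <;> simp
  · linear_combination (x.b.den * x.c.den : ℚ) * ha
  · linear_combination (x.a.den * x.c.den : ℚ) * hb
  · linear_combination (x.a.den * x.b.den : ℚ) * hc

lemma norm_rat_ne_zero {x : CbrtTwo ℚ} (hx : x ≠ 0) : norm x ≠ 0 := by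
  obtain ⟨m, z, hm, hz⟩ := exists_mul_natCast_eq_ι x
  intro h
  have hz0 : norm z = 0 := by
    have := norm_ι z
    rw [← hz, map_mul, h, zero_mul] at this
    exact_mod_cast this.symm
  rw [norm_int_eq_zero_iff.1 hz0, map_zero] at hz
  apply hx
  simpa [CbrtTwo.ext_iff, hm] using hz

noncomputable instance : Field (CbrtTwo ℚ) where
  inv x := const (norm x)⁻¹ * adj x
  mul_inv_cancel x hx := by
    rw [mul_left_comm, mul_adj, ← map_mul, inv_mul_cancel₀ (norm_rat_ne_zero hx), map_one]
  inv_zero := by ext <;> simp [adj]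
  nnqsmul := _
  nnqsmul_def := fun _ _ => rfl
  qsmul := _
  qsmul_def := fun _ _ => rfl

instance : CharZero (CbrtTwo ℚ) := ⟨fun m n h => by simpa using congrArg a h⟩

lemma const_rat (q : ℚ) : const q = (q : CbrtTwo ℚ) := eq_ratCast const q

@[simp] lemma ratCast_a (q : ℚ) : (q : CbrtTwo ℚ).a = q := by rw [← const_rat]; rfl
@[simp] lemma ratCast_b (q : ℚ) : (q : CbrtTwo ℚ).b = 0 := by rw [← const_rat]; rfl
@[simp] lemma ratCast_c (q : ℚ) : (q : CbrtTwo ℚ).c = 0 := by rw [← const_rat]; rfl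

instance : IsFractionRing (CbrtTwo ℤ) (CbrtTwo ℚ) where
  map_units y := (map_ne_zero_iff ι ι_injective).2 (nonZeroDivisors.ne_zero y.2) |>.isUnit
  surj x := by
    obtain ⟨m, z, hm, hz⟩ := exists_mul_natCast_eq_ι x
    have hm' : (m : CbrtTwo ℤ) ≠ 0 := fun h => hm (by simpa using congrArg a h)
    exact ⟨(z, ⟨m, mem_nonZeroDivisors_of_ne_zero hm'⟩), by simpa using hz⟩
  exists_of_eq h := ⟨1, by rw [ι_injective h]⟩

/-! ### The ring of integers is norm-Euclidean -/

section Rounding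

variable {a b c : ℚ}

lemma lower_bounds_of_one_le_norm_neg_snd (ha : 0 ≤ a) (ha' : a ≤ 1 / 2) (hb : 0 ≤ b)
    (hc : 0 ≤ c) (hc' : c ≤ 1 / 2)
    (h : 1 ≤ norm (⟨a, -b, c⟩ : CbrtTwo ℚ)) :
    2 / 5 ≤ a ∧ 1 / 4 ≤ b ∧ 2 / 5 ≤ c := by
  simp only [norm_apply] at h
  have hab : a * b * c ≤ a * b * (1 / 2) := by gcongr
  have hbc : a * b * c ≤ 1 / 2 * b * c := by gcongr
  have hb₁ : a * b * c ≤ 1 / 2 * b * (1 / 2) := by gcongr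
  have ha₃ : a ^ 3 ≤ (1 / 2) ^ 3 := by gcongr
  have hc₃ : c ^ 3 ≤ (1 / 2) ^ 3 := by gcongr
  refine ⟨le_of_not_gt fun h' => ?_, le_of_not_gt fun h' => ?_, le_of_not_gt fun h' => ?_⟩
  · have : a ^ 3 ≤ (2 / 5) ^ 3 := by gcongr
    have : a * b ≤ 2 / 5 * b := by gcongr
    nlinarith [mul_nonneg hb (sq_nonneg (b - 9 / 20)), sq_nonneg (b - 9 / 20)]
  · nlinarith [pow_nonneg hb 3]
  · have : c ^ 3 ≤ (2 / 5) ^ 3 := by gcongr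
    have : b * c ≤ b * (2 / 5) := by gcongr
    nlinarith [mul_nonneg hb (sq_nonneg (b - 9 / 20)), sq_nonneg (b - 9 / 20)]

lemma lower_bounds_of_one_le_norm_neg_fst (ha : 0 ≤ a) (ha' : a ≤ 1 / 2) (hb : 0 ≤ b)
    (hb' : b ≤ 1 / 2) (hc : 0 ≤ c) (hc' : c ≤ 1 / 2)
    (h : 1 ≤ norm (⟨-a, b, c⟩ : CbrtTwo ℚ)) :
    1 / 6 ≤ a ∧ 1 / 3 ≤ b ∧ 2 / 5 ≤ c := by
  simp only [norm_apply] at h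
  have ha₁ : a * b * c ≤ a * (1 / 2) * (1 / 2) := by gcongr
  have hab : a * b * c ≤ a * b * (1 / 2) := by gcongr
  have hac : a * b * c ≤ a * (1 / 2) * c := by gcongr
  have hb₃ : b ^ 3 ≤ (1 / 2) ^ 3 := by gcongr
  have hc₃ : c ^ 3 ≤ (1 / 2) ^ 3 := by gcongr
  refine ⟨le_of_not_gt fun h' => ?_, le_of_not_gt fun h' => ?_, le_of_not_gt fun h' => ?_⟩
  · nlinarith [pow_nonneg ha 3]
  · have : b ^ 3 ≤ (1 / 3) ^ 3 := by gcongr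
    have : a * b ≤ a * (1 / 3) := by gcongr
    nlinarith [mul_nonneg ha (sq_nonneg (a - 1 / 2)), sq_nonneg (a - 1 / 2)]
  · have : c ^ 3 ≤ (2 / 5) ^ 3 := by gcongr
    have : a * c ≤ a * (2 / 5) := by gcongr
    nlinarith [mul_nonneg ha (sq_nonneg (a - 1 / 2)), sq_nonneg (a - 1 / 2)]

lemma abs_norm_lt_one_of_nonneg (ha : 0 ≤ a) (ha' : a ≤ 1 / 2) (hb : 0 ≤ b)
    (hb' : b ≤ 1 / 2) (hc : 0 ≤ c) (hc' : c ≤ 1 / 2) :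
    |norm (⟨a, b, c⟩ : CbrtTwo ℚ)| < 1 := by
  have h : a * b * c ≤ 1 / 2 * (1 / 2) * (1 / 2) := by gcongr
  have ha₃ : a ^ 3 ≤ (1 / 2) ^ 3 := by gcongr
  have hb₃ : b ^ 3 ≤ (1 / 2) ^ 3 := by gcongr
  have hc₃ : c ^ 3 ≤ (1 / 2) ^ 3 := by gcongr
  have : 0 ≤ a * b * c := by positivity
  rw [abs_lt]
  constructor <;> simp only [norm_apply] <;>
    linarith [pow_nonneg ha 3, pow_nonneg hb 3, pow_nonneg hc 3]

lemma abs_norm_neg_neg_lt_one (ha : 0 ≤ a) (ha' : a ≤ 1 / 2) (hb : 0 ≤ b)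
    (hb' : b ≤ 1 / 2) (hc : 0 ≤ c) (hc' : c ≤ 1 / 2) :
    |norm (⟨-a, -b, c⟩ : CbrtTwo ℚ)| < 1 := by
  have h : a * b * c ≤ 1 / 2 * (1 / 2) * c := by gcongr
  have ha₃ : a ^ 3 ≤ (1 / 2) ^ 3 := by gcongr
  have hb₃ : b ^ 3 ≤ (1 / 2) ^ 3 := by gcongr
  have hc₃ : c ^ 3 ≤ (1 / 2) ^ 3 := by gcongr
  have : 0 ≤ a * b * c := by positivity
  rw [abs_lt]
  constructor <;> simp only [norm_apply] <;>
    nlinarith [pow_nonneg ha 3, pow_nonneg hb 3, pow_nonneg hc 3,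
      mul_nonneg hc (sq_nonneg (c - 1 / 3))]

lemma abs_norm_neg_snd_lt_one_or (ha : 0 ≤ a) (ha' : a ≤ 1 / 2) (hb : 0 ≤ b)
    (hb' : b ≤ 1 / 2) (hc : 0 ≤ c) (hc' : c ≤ 1 / 2) :
    |norm (⟨a, -b, c⟩ : CbrtTwo ℚ)| < 1 ∨
      |norm (⟨a, 1 - b, c⟩ : CbrtTwo ℚ)| < 1 := by
  have hb₃ : b ^ 3 ≤ (1 / 2) ^ 3 := by gcongr
  have : 0 ≤ a * b * c := by positivity
  rcases lt_or_ge (norm (⟨a, -b, c⟩ : CbrtTwo ℚ)) 1 with h | h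
  · left
    refine abs_lt.2 ⟨?_, h⟩
    simp only [norm_apply]
    linarith [pow_nonneg ha 3, pow_nonneg hc 3]
  · right
    obtain ⟨h₁, h₂, h₃⟩ := lower_bounds_of_one_le_norm_neg_snd ha ha' hb hc hc' h
    have hb₁ : 0 ≤ 1 - b := by linarith
    have hb₂ : 1 - b ≤ 3 / 4 := by linarith
    have h₄ : 2 / 5 * (1 - b) * (2 / 5) ≤ a * (1 - b) * c := by gcongr
    have h₅ : a * (1 - b) * c ≤ 1 / 2 * (3 / 4) * (1 / 2) := by gcongr
    have ha₃ : a ^ 3 ≤ (1 / 2) ^ 3 := by gcongr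
    have hc₃ : c ^ 3 ≤ (1 / 2) ^ 3 := by gcongr
    have ha₄ : (2 / 5) ^ 3 ≤ a ^ 3 := by gcongr
    have hc₄ : (2 / 5) ^ 3 ≤ c ^ 3 := by gcongr
    have hb₄ : (1 - b) ^ 3 ≤ (3 / 4) ^ 3 := by gcongr
    have hb₅ : (1 / 2) ^ 3 ≤ (1 - b) ^ 3 := by gcongr; linarith
    rw [abs_lt]
    constructor <;> simp only [norm_apply] <;> linarith

lemma abs_norm_neg_fst_lt_one_or (ha : 0 ≤ a) (ha' : a ≤ 1 / 2) (hb : 0 ≤ b)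
    (hb' : b ≤ 1 / 2) (hc : 0 ≤ c) (hc' : c ≤ 1 / 2) :
    |norm (⟨-a, b, c⟩ : CbrtTwo ℚ)| < 1 ∨
      |norm (⟨1 - a, b, c⟩ : CbrtTwo ℚ)| < 1 := by
  have ha₃ : a ^ 3 ≤ (1 / 2) ^ 3 := by gcongr
  have : 0 ≤ a * b * c := by positivity
  rcases lt_or_ge (norm (⟨-a, b, c⟩ : CbrtTwo ℚ)) 1 with h | h
  · left
    refine abs_lt.2 ⟨?_, h⟩
    simp only [norm_apply]
    linarith [pow_nonneg hb 3, pow_nonneg hc 3]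
  · right
    obtain ⟨h₁, h₂, h₃⟩ := lower_bounds_of_one_le_norm_neg_fst ha ha' hb hb' hc hc' h
    have ha₁ : 0 ≤ 1 - a := by linarith
    have ha₂ : 1 - a ≤ 5 / 6 := by linarith
    have h₄ : (1 - a) * (1 / 3) * (2 / 5) ≤ (1 - a) * b * c := by gcongr
    have h₅ : (1 - a) * b * c ≤ 5 / 6 * (1 / 2) * (1 / 2) := by gcongr
    have hb₃ : b ^ 3 ≤ (1 / 2) ^ 3 := by gcongr
    have hc₃ : c ^ 3 ≤ (1 / 2) ^ 3 := by gcongr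
    have hb₄ : (1 / 3) ^ 3 ≤ b ^ 3 := by gcongr
    have hc₄ : (2 / 5) ^ 3 ≤ c ^ 3 := by gcongr
    have ha₄ : (1 - a) ^ 3 ≤ (5 / 6) ^ 3 := by gcongr
    have ha₅ : (1 / 2) ^ 3 ≤ (1 - a) ^ 3 := by gcongr; linarith
    rw [abs_lt]
    constructor <;> simp only [norm_apply] <;> linarith

lemma exists_abs_norm_sub_lt_one (ha : |a| ≤ 1 / 2) (hb : |b| ≤ 1 / 2) (hc : |c| ≤ 1 / 2) :
    ∃ i j : ℤ, |norm (⟨a - i, b - j, c⟩ : CbrtTwo ℚ)| < 1 := by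
  wlog hc₀ : 0 ≤ c generalizing a b c
  · obtain ⟨i, j, h⟩ := this (a := -a) (b := -b) (c := -c) (by rwa [abs_neg]) (by rwa [abs_neg])
      (by rwa [abs_neg]) (by linarith)
    refine ⟨-i, -j, ?_⟩
    have e : (⟨a - ↑(-i), b - ↑(-j), c⟩ : CbrtTwo ℚ) = -⟨-a - i, -b - j, -c⟩ := by
      ext <;> simp <;> ring
    rwa [e, norm_neg, abs_neg]
  obtain ⟨ha₁, ha₂⟩ := abs_le.1 ha
  obtain ⟨hb₁, hb₂⟩ := abs_le.1 hb
  have hc₂ := le_of_abs_le hc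
  rcases le_total 0 a with ha₀ | ha₀ <;> rcases le_total 0 b with hb₀ | hb₀
  · exact ⟨0, 0, by simpa using abs_norm_lt_one_of_nonneg ha₀ ha₂ hb₀ hb₂ hc₀ hc₂⟩
  · rcases abs_norm_neg_snd_lt_one_or ha₀ ha₂ (neg_nonneg.2 hb₀) (neg_le.1 hb₁) hc₀ hc₂ with h | h
    · exact ⟨0, 0, by simpa using h⟩
    · exact ⟨0, -1, by simpa [add_comm] using h⟩
  · rcases abs_norm_neg_fst_lt_one_or (neg_nonneg.2 ha₀) (neg_le.1 ha₁) hb₀ hb₂ hc₀ hc₂ with h | h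
    · exact ⟨0, 0, by simpa using h⟩
    · exact ⟨-1, 0, by simpa [add_comm] using h⟩
  · have h := abs_norm_neg_neg_lt_one (neg_nonneg.2 ha₀) (neg_le.1 ha₁) (neg_nonneg.2 hb₀)
      (neg_le.1 hb₁) hc₀ hc₂
    exact ⟨0, 0, by simpa using h⟩

end Rounding

lemma exists_abs_norm_sub_ι_lt_one (x : CbrtTwo ℚ) : ∃ q, |norm (x - ι q)| < 1 := by
  obtain ⟨i, j, h⟩ := exists_abs_norm_sub_lt_one (abs_sub_round x.a) (abs_sub_round x.b)
    (abs_sub_round x.c)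
  refine ⟨⟨round x.a + i, round x.b + j, round x.c⟩, ?_⟩
  convert h using 3
  ext <;> simp [sub_sub]

lemma exists_natAbs_norm_sub_mul_lt (x : CbrtTwo ℤ) {y : CbrtTwo ℤ} (hy : y ≠ 0) :
    ∃ q, (norm (x - y * q)).natAbs < (norm y).natAbs := by
  have hy' : ι y ≠ 0 := (map_ne_zero_iff ι ι_injective).2 hy
  obtain ⟨q, hq⟩ := exists_abs_norm_sub_ι_lt_one (ι x / ι y)
  refine ⟨q, ?_⟩
  have h : ι (x - y * q) = ι y * (ι x / ι y - ι q) := by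
    rw [map_sub, map_mul]
    field_simp
  have hlt : |((norm (x - y * q) : ℤ) : ℚ)| < |((norm y : ℤ) : ℚ)| := by
    rw [← norm_ι, h, map_mul, abs_mul, norm_ι]
    exact mul_lt_of_lt_one_right (by simpa [norm_int_eq_zero_iff] using hy) hq
  have : |norm (x - y * q)| < |norm y| := by exact_mod_cast hlt
  rw [Int.abs_eq_natAbs, Int.abs_eq_natAbs] at this
  exact_mod_cast this

open Classical in
noncomputable instance : EuclideanDomain (CbrtTwo ℤ) where
  exists_pair_ne := ⟨0, 1, zero_ne_one⟩
  quotient x y := if hy : y = 0 then 0 else (exists_natAbs_norm_sub_mul_lt x hy).choose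
  quotient_zero x := by simp
  remainder x y :=
    x - y * (if hy : y = 0 then 0 else (exists_natAbs_norm_sub_mul_lt x hy).choose)
  quotient_mul_add_remainder_eq x y := by ring
  r x y := (norm x).natAbs < (norm y).natAbs
  r_wellFounded := (measure fun x : CbrtTwo ℤ => (norm x).natAbs).wf
  remainder_lt x y hy := by
    simpa only [hy, dite_false] using (exists_natAbs_norm_sub_mul_lt x hy).choose_spec
  mul_left_not_lt x y hy := by
    rw [not_lt, map_mul, Int.natAbs_mul]
    exact Nat.le_mul_of_pos_right _ (Int.natAbs_pos.2 (norm_int_eq_zero_iff.not.2 hy))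

/-! ### Units -/

lemma isUnit_iff_isUnit_norm {x : CbrtTwo ℤ} : IsUnit x ↔ IsUnit (norm x) :=
  ⟨fun h => h.map norm, fun h => isUnit_of_dvd_unit (dvd_const_norm x) (h.map const)⟩

lemma cbrt_two_pow_three : ((2 : ℝ) ^ (1 / 3 : ℝ)) ^ 3 = 2 := by
  rw [← Real.rpow_natCast, ← Real.rpow_mul] <;> norm_num

/-- The real embedding of `ℚ(θ)`. -/
noncomputable def toReal : CbrtTwo ℚ →+* ℝ where
  toFun x := x.a + x.b * 2 ^ (1 / 3 : ℝ) + x.c * (2 ^ (1 / 3 : ℝ)) ^ 2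
  map_one' := by simp
  map_mul' x y := by
    simp only [mul_a, mul_b, mul_c]
    push_cast
    linear_combination (-(x.b * y.c + x.c * y.b) - x.c * y.c * 2 ^ (1 / 3 : ℝ) : ℝ) *
      cbrt_two_pow_three
  map_zero' := by simp
  map_add' x y := by simp; ring

lemma toReal_apply (x : CbrtTwo ℚ) :
    toReal x = x.a + x.b * toReal θ + x.c * toReal θ ^ 2 := by
  simp [toReal]

lemma toReal_θ_pow_three : toReal θ ^ 3 = 2 := by
  rw [← map_pow, θ_pow_three, map_ofNat]

lemma toReal_θ_gt : 1.25 < toReal θ :=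
  (show Odd 3 by decide).strictMono_pow.lt_iff_lt.1 (by rw [toReal_θ_pow_three]; norm_num)

lemma toReal_θ_lt : toReal θ < 1.26 :=
  lt_of_pow_lt_pow_left₀ 3 (by norm_num) (by rw [toReal_θ_pow_three]; norm_num)

/-- Twice the squared absolute value of the complex conjugate of `x`. -/
noncomputable def conjNormSq (x : CbrtTwo ℚ) : ℝ :=
  (x.a - x.b * toReal θ) ^ 2 + (x.b * toReal θ - x.c * toReal θ ^ 2) ^ 2 +
    (x.a - x.c * toReal θ ^ 2) ^ 2

lemma conjNormSq_nonneg (x : CbrtTwo ℚ) : 0 ≤ conjNormSq x := by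
  unfold conjNormSq
  positivity

lemma two_mul_norm (x : CbrtTwo ℚ) : 2 * ((norm x : ℚ) : ℝ) = toReal x * conjNormSq x := by
  rw [toReal_apply, conjNormSq, norm_apply]
  push_cast
  linear_combination (-2 * x.b ^ 3 + 6 * x.a * x.b * x.c -
    2 * x.c ^ 3 * (toReal θ ^ 3 + 2) : ℝ) * toReal_θ_pow_three

lemma norm_pos_iff {x : CbrtTwo ℚ} : 0 < norm x ↔ 0 < toReal x := by
  have h := two_mul_norm x
  have hpos := conjNormSq_nonneg x
  constructor
  · intro hx
    have : (0 : ℝ) < (norm x : ℚ) := by exact_mod_cast hx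
    exact pos_of_mul_pos_left (h ▸ by positivity) hpos
  · intro hx
    have hx₀ : x ≠ 0 := by rintro rfl; simp at hx
    have : (0 : ℝ) ≤ (norm x : ℚ) := by nlinarith [mul_nonneg hx.le hpos]
    exact lt_of_le_of_ne (by exact_mod_cast this) (norm_rat_ne_zero hx₀).symm

/-- The fundamental unit `θ - 1`. -/
def ε : (CbrtTwo ℤ)ˣ where
  val := ⟨-1, 1, 0⟩
  inv := ⟨1, 1, 1⟩
  val_inv := rfl
  inv_val := rfl

lemma norm_ε : norm (ε : CbrtTwo ℤ) = 1 := rfl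

lemma norm_ε_zpow (n : ℤ) : norm ((ε ^ n : (CbrtTwo ℤ)ˣ) : CbrtTwo ℤ) = 1 := by
  have h : Units.map norm (ε ^ n) = 1 := by
    rw [map_zpow, show Units.map norm ε = 1 from Units.ext norm_ε, one_zpow]
  exact congrArg Units.val h

lemma toReal_ε_inv : toReal (ι (ε⁻¹ : (CbrtTwo ℤ)ˣ)) = 1 + toReal θ + toReal θ ^ 2 := by
  rw [toReal_apply]
  simp [ε]

lemma three_mul_bounds {x y z : ℝ} (h : (x - y) ^ 2 + (y - z) ^ 2 + (x - z) ^ 2 ≤ 2) :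
    x + y + z - 2 ≤ 3 * x ∧ 3 * x ≤ x + y + z + 2 := by
  constructor <;> nlinarith [sq_nonneg (y - z), sq_nonneg (2 * x - y - z)]

lemma eq_one_of_toReal_mem_Ico {v : CbrtTwo ℤ} (hv : norm v = 1)
    (h : toReal (ι v) ∈ Set.Ico 1 (toReal (ι (ε⁻¹ : (CbrtTwo ℤ)ˣ)))) : v = 1 := by
  obtain ⟨h₁, h₂⟩ := h
  have hc : conjNormSq (ι v) ≤ 2 := by
    have := two_mul_norm (ι v)
    rw [norm_ι, hv] at this
    push_cast at this
    nlinarith [conjNormSq_nonneg (ι v)]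
  obtain ⟨a, b, c⟩ := v
  rw [toReal_ε_inv] at h₂
  rw [toReal_apply] at h₁ h₂
  rw [conjNormSq] at hc
  simp only [ι_a, ι_b, ι_c, Rat.cast_intCast] at h₁ h₂ hc
  have ht := toReal_θ_gt
  have ht' := toReal_θ_lt
  have ha := three_mul_bounds hc
  have hb := three_mul_bounds (x := b * toReal θ) (y := a) (z := c * toReal θ ^ 2) (by linarith)
  have hd := three_mul_bounds (x := c * toReal θ ^ 2) (y := a) (z := b * toReal θ) (by linarith)
  have ha₀ : -1 < a := by
    have : (-1 : ℝ) < a := by linarith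
    exact_mod_cast this
  have ha₁ : a < 2 := by
    have : (a : ℝ) < 2 := by nlinarith
    exact_mod_cast this
  have hb₀ : -1 < b := by
    have : (-1 : ℝ) < b := by nlinarith
    exact_mod_cast this
  have hb₁ : b < 2 := by
    have : (b : ℝ) < 2 := by nlinarith
    exact_mod_cast this
  have hc₀ : -1 < c := by
    have : (-1 : ℝ) < c := by nlinarith
    exact_mod_cast this
  have hc₁ : c < 2 := by
    have : (c : ℝ) < 2 := by nlinarith
    exact_mod_cast this
  interval_cases a <;> interval_cases b <;> interval_cases c <;>
    simp_all [norm_apply, CbrtTwo.ext_iff]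

lemma toReal_units_zpow (u : (CbrtTwo ℤ)ˣ) (n : ℤ) :
    toReal (ι (u ^ n : (CbrtTwo ℤ)ˣ)) = toReal (ι u) ^ n :=
  let f : (CbrtTwo ℤ)ˣ →* ℝˣ := Units.map ((toReal.comp ι : CbrtTwo ℤ →+* ℝ) : CbrtTwo ℤ →* ℝ)
  (congrArg Units.val (map_zpow f u n)).trans (Units.val_zpow_eq_zpow_val _ _)

lemma exists_eq_ε_zpow {u : (CbrtTwo ℤ)ˣ} (hu : norm (u : CbrtTwo ℤ) = 1) :
    ∃ n : ℤ, u = ε ^ n := by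
  have hε : 1 < toReal (ι (ε⁻¹ : (CbrtTwo ℤ)ˣ)) := by
    rw [toReal_ε_inv]
    nlinarith [toReal_θ_gt]
  have hε₀ := one_pos.trans hε
  have hpos : 0 < toReal (ι u) := norm_pos_iff.1 (by rw [norm_ι, hu]; norm_num)
  obtain ⟨n, hn, hn'⟩ := exists_mem_Ico_zpow hpos hε
  have hv : toReal (ι (u * ε ^ n : (CbrtTwo ℤ)ˣ)) =
      toReal (ι u) / toReal (ι (ε⁻¹ : (CbrtTwo ℤ)ˣ)) ^ n := by
    rw [Units.val_mul, map_mul, map_mul, div_eq_mul_inv, ← zpow_neg, ← toReal_units_zpow, zpow_neg,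
      inv_zpow, inv_inv]
  have h : ((u * ε ^ n : (CbrtTwo ℤ)ˣ) : CbrtTwo ℤ) = 1 := by
    refine eq_one_of_toReal_mem_Ico ?_ ?_
    · rw [Units.val_mul, map_mul, hu, norm_ε_zpow, one_mul]
    · rw [hv, Set.mem_Ico, le_div_iff₀ (by positivity), div_lt_iff₀ (by positivity), one_mul,
        mul_comm, ← zpow_add_one₀ hε₀.ne']
      exact ⟨hn, hn'⟩
  exact ⟨-n, by rw [zpow_neg, ← mul_eq_one_iff_eq_inv]; exact Units.ext h⟩

theorem exists_eq_sq_or_eq_ε_mul_sq {u : CbrtTwo ℤ} (hu : norm u = 1) :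
    ∃ w, u = w ^ 2 ∨ u = ε * w ^ 2 := by
  obtain ⟨u, rfl⟩ := isUnit_iff_isUnit_norm.2 (hu ▸ isUnit_one)
  obtain ⟨n, hn⟩ := exists_eq_ε_zpow hu
  rw [hn]
  obtain ⟨m, rfl | rfl⟩ := Int.even_or_odd' n
  · exact ⟨(ε ^ m : (CbrtTwo ℤ)ˣ), Or.inl (by rw [mul_comm, zpow_mul]; rfl)⟩
  · refine ⟨(ε ^ m : (CbrtTwo ℤ)ˣ), Or.inr ?_⟩
    rw [add_comm, zpow_add, zpow_one, mul_comm 2, zpow_mul]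
    rfl

/-! ### Descent on `y² = x³ + 4` -/

lemma exists_eq_sq_or_eq_ε_mul_sq_of_norm_eq_sq {x : CbrtTwo ℤ} {γ : ℤ} (hx : x ≠ 0)
    (hγ : norm x = γ ^ 2) (hS : ∀ S, Squarefree S → S ∣ x → S ∣ adj x → norm S ∣ 6) :
    ∃ w, x = w ^ 2 ∨ x = ε * w ^ 2 := by
  obtain ⟨S, v, v', hsq, rfl, hv'⟩ := exists_squarefree_of_mul_eq_sq hx
    (by rw [mul_adj, hγ, map_pow] : x * adj x = const γ ^ 2)
  have hv : norm v ≠ 0 := by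
    rw [Ne, norm_int_eq_zero_iff]
    rintro rfl
    simp at hx
  rw [map_mul, map_pow] at hγ
  obtain ⟨k, rfl⟩ : norm v ∣ γ := (Int.pow_dvd_pow_iff two_ne_zero).1 ⟨norm S, by rw [← hγ]; ring⟩
  have hk : norm S = k ^ 2 := mul_right_cancel₀ (pow_ne_zero 2 hv) (by rw [hγ]; ring)
  have hk₁ : k ^ 2 = 1 := by
    have h6 : k ^ 2 ∣ 6 := hk ▸ hS S hsq (Dvd.intro _ rfl) (hv' ▸ Dvd.intro _ rfl)
    have := Int.le_of_dvd (by norm_num) h6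
    have hk₂ : -3 < k := by nlinarith
    have hk₃ : k < 3 := by nlinarith
    interval_cases k <;> revert h6 <;> decide
  obtain ⟨w, rfl | rfl⟩ := exists_eq_sq_or_eq_ε_mul_sq (hk.trans hk₁)
  · exact ⟨w * v, Or.inl (by ring)⟩
  · exact ⟨w * v, Or.inr (by ring)⟩

lemma sq_coeffs (w : CbrtTwo ℤ) : w ^ 2 =
    ⟨w.a ^ 2 + 4 * w.b * w.c, 2 * w.a * w.b + 2 * w.c ^ 2, w.b ^ 2 + 2 * w.a * w.c⟩ := by
  rw [sq]
  ext <;> simp <;> ring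

lemma ε_mul_coeffs (x : CbrtTwo ℤ) : ε * x = ⟨2 * x.c - x.a, x.a - x.b, x.b - x.c⟩ := by
  ext <;> simp [ε] <;> ring

section Descent

variable {α β γ : ℤ}

lemma norm_dvd_six_of_dvd (hαβ : IsCoprime α β) {S : CbrtTwo ℤ} (hS : Squarefree S)
    (h : S ∣ ⟨-α, 0, β ^ 2⟩) (h' : S ∣ adj ⟨-α, 0, β ^ 2⟩) : norm S ∣ 6 := by
  have hSβ : IsCoprime S (const β) := by
    refine IsCoprime.of_isCoprime_of_dvd_left ?_ h
    obtain ⟨u, v, huv⟩ := hαβ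
    refine ⟨-const u, θ ^ 2 * const (u * β) + const v, ?_⟩
    ext <;> simp [pow_succ, θ]
    · linear_combination huv
    · ring
  have hS6 : S ∣ 6 * θ := by
    refine (hSβ.pow_right (n := 4)).dvd_of_dvd_mul_right ?_
    have e : 6 * θ * const β ^ 4 = adj ⟨-α, 0, β ^ 2⟩ -
        ⟨-α, 0, β ^ 2⟩ * -(const α + 2 * θ ^ 2 * const (β ^ 2)) := by
      ext <;> simp [pow_succ, θ, adj] <;> ring
    rw [e]
    exact dvd_sub h' (h.mul_right _)
  have h6 : (6 * θ : CbrtTwo ℤ) ∣ ((1 + θ) * θ) ^ 4 :=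
    ⟨(1 + θ + θ ^ 2) * (1 + θ), by
      linear_combination θ * (1 + θ) * (θ ^ 3 + 3 * (1 + θ + θ ^ 2)) *
        (θ_pow_three : (θ : CbrtTwo ℤ) ^ 3 = 2)⟩
  have h : norm S ∣ norm ((1 + θ) * θ : CbrtTwo ℤ) :=
    map_dvd norm ((hS.dvd_pow_iff_dvd four_ne_zero).1 (hS6.trans h6))
  rwa [show norm ((1 + θ) * θ : CbrtTwo ℤ) = 6 by simp [norm_apply]] at h

lemma even_of_eq_ε_mul_sq {w : CbrtTwo ℤ} (h : ⟨-α, 0, β ^ 2⟩ = ε * w ^ 2) :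
    Even α ∧ Even β := by
  obtain ⟨x, y, z⟩ := w
  simp only [sq_coeffs, ε_mul_coeffs, CbrtTwo.ext_iff] at h
  obtain ⟨hα, h₀, hβ⟩ := h
  have even_of_sq {n m : ℤ} (h : n ^ 2 = m + m) : Even n := (Int.even_pow.1 ⟨m, h⟩).1
  obtain ⟨x, rfl⟩ := even_of_sq (n := x) (m := x * y + z ^ 2 - 2 * y * z) (by linarith)
  obtain ⟨z, rfl⟩ := even_of_sq (n := z) (m := x ^ 2 + y * z - x * y) (by linarith)
  have hβy : β ^ 2 + y ^ 2 = 4 * (x * y + 2 * z ^ 2 - 2 * x * z) := by linarith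
  refine ⟨⟨2 * (x ^ 2 + 2 * y * z) - (y ^ 2 + 8 * x * z), by linarith⟩, ?_⟩
  by_contra hβ₁
  have hβ₂ := Int.sq_mod_four_eq_one_of_odd (Int.not_even_iff_odd.1 hβ₁)
  rcases Int.even_or_odd y with ⟨n, rfl⟩ | hy
  · rw [show (n + n) ^ 2 = 4 * n ^ 2 by ring] at hβy
    omega
  · have := Int.sq_mod_four_eq_one_of_odd hy
    omega

lemma exists_coprime_param (hαβ : IsCoprime α β) (hβ₀ : β ≠ 0) (h : 4 * β ^ 6 - α ^ 3 = γ ^ 2) :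
    ∃ g k : ℤ, IsCoprime g k ∧ α = -(g * (g ^ 3 - 4 * k ^ 3)) ∧
      β ^ 2 = k * (k ^ 3 + 2 * g ^ 3) := by
  have hx : (⟨-α, 0, β ^ 2⟩ : CbrtTwo ℤ) ≠ 0 := fun h => hβ₀ (by simpa using congrArg c h)
  obtain ⟨w, hw | hw⟩ := exists_eq_sq_or_eq_ε_mul_sq_of_norm_eq_sq hx (γ := γ)
    (by rw [← h, norm_apply]; ring) fun S => norm_dvd_six_of_dvd hαβ
  swap
  · obtain ⟨hα, hβ⟩ := even_of_eq_ε_mul_sq hw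
    have := hαβ.isUnit_of_dvd' hα.two_dvd hβ.two_dvd
    exact absurd this (by decide)
  obtain ⟨x, y, z⟩ := w
  simp only [sq_coeffs, CbrtTwo.ext_iff] at hw
  obtain ⟨hα, hz, hβ⟩ := hw
  have hxy : IsCoprime x (-y) := by
    refine isCoprime_of_prime_dvd (fun h => ?_) fun p hp hpx hpy => ?_
    · have : z = 0 := by simpa [h.1] using hz
      exact hβ₀ (by simpa [h.1, neg_eq_zero.1 h.2, this] using hβ)
    · have hpz : p ∣ z := hp.dvd_of_dvd_pow (n := 2)
        ((hpx.mul_right (-y)).trans (dvd_of_eq (by linarith)))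
      have hpα : p ∣ α := by
        rw [← dvd_neg, hα, sq]
        exact dvd_add (hpx.mul_right _) (hpz.mul_left _)
      have hpβ : p ∣ β ^ 2 := by
        rw [hβ, sq, mul_right_comm 2]
        exact dvd_add ((dvd_neg.1 hpy).mul_right _) (hpz.mul_left _ |>.mul_right x)
      exact hp.not_isUnit (hαβ.isUnit_of_dvd' hpα (hp.dvd_of_dvd_pow hpβ))
  obtain ⟨s, g, k, hs, rfl, hk⟩ := exists_eq_mul_sq_of_isCoprime hxy (c := z) (by linarith)
  obtain rfl : y = -(s * k ^ 2) := by linarith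
  obtain ⟨k', hk', rfl⟩ : ∃ k', k' ^ 2 = k ^ 2 ∧ z = s * g * k' := by
    have : z ^ 2 = (s * g * k) ^ 2 := by linarith
    rcases sq_eq_sq_iff_eq_or_eq_neg.1 this with h | h
    · exact ⟨k, rfl, h⟩
    · exact ⟨-k, neg_sq k, by rw [h, mul_neg]⟩
  rw [← hk'] at hα hβ
  refine ⟨g, k', ?_, ?_, ?_⟩
  · rw [neg_neg, ← hk'] at hxy
    exact (IsCoprime.pow_iff two_pos two_pos).1 hxy.of_mul_left_right.of_mul_right_right
  · linear_combination -hα + (4 * g * k' ^ 3 - g ^ 4) * hs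
  · linear_combination hβ + (k' ^ 4 + 2 * g ^ 3 * k') * hs

lemma exists_descent_of_odd {g k : ℤ} (hgk : IsCoprime g k) (hk : Odd k)
    (h : β ^ 2 = k * (k ^ 3 + 2 * g ^ 3)) :
    ∃ s m γ' : ℤ, s ^ 2 = 1 ∧ k = s * m ^ 2 ∧ IsCoprime (-2 * s * g) m ∧
      4 * m ^ 6 - (-2 * s * g) ^ 3 = γ' ^ 2 := by
  have hk2 : IsCoprime k (2 * g ^ 3) := (Int.isCoprime_two_right.2 hk).mul_right hgk.symm.pow_right
  have hcop : IsCoprime k (k ^ 3 + 2 * g ^ 3) := by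
    rw [add_comm, show k ^ 3 = k * k ^ 2 by ring]
    exact IsCoprime.add_mul_left_right hk2 _
  obtain ⟨s, m, n, hs, rfl, hn⟩ := exists_eq_mul_sq_of_isCoprime hcop h.symm
  refine ⟨s, m, 2 * n, hs, rfl, ?_, ?_⟩
  · have hsm : IsCoprime (-2) m := by
      rw [isCoprime_comm, IsCoprime.neg_right_iff, Int.isCoprime_two_right]
      exact (Int.odd_pow' two_ne_zero).1 (Int.odd_mul.1 hk).2
    have hs₁ : IsCoprime s m := ⟨s, 0, by linear_combination hs⟩
    exact (hsm.mul_left hs₁).mul_left ((IsCoprime.pow_right_iff two_pos).1 hgk.of_mul_right_right)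
  · linear_combination 4 * s * hn + 4 * (n ^ 2 - m ^ 6 * (s ^ 2 + 1)) * hs + 8 * g ^ 3 * s * hs

theorem eq_zero_of_even (hα : Even α) (hαβ : IsCoprime α β) (hβ : β ≠ 0)
    (h : 4 * β ^ 6 - α ^ 3 = γ ^ 2) : α = 0 := by
  induction hn : α.natAbs using Nat.strong_induction_on generalizing α β γ with
  | _ n ih =>
    obtain ⟨g, k, hgk, rfl, hβ'⟩ := exists_coprime_param hαβ hβ h
    by_contra hα₀
    have hg₀ : g ≠ 0 := fun hg => hα₀ (by simp [hg])
    obtain ⟨r, hr⟩ : (4 : ℤ) ∣ g ^ 3 - 4 * k ^ 3 := by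
      have hg : Even g := by
        have h4 : Even (4 * k ^ 3) := Even.mul_right (by decide) _
        rw [even_neg, Int.even_mul, Int.even_sub, Int.even_pow' three_ne_zero] at hα
        tauto
      obtain ⟨g', rfl⟩ := hg
      exact ⟨2 * g' ^ 3 - k ^ 3, by ring⟩
    have hk : Odd k := by
      rw [← Int.isCoprime_two_left]
      refine IsCoprime.of_isCoprime_of_dvd_left hgk (Int.prime_two.dvd_of_dvd_pow (n := 3) ?_)
      omega
    obtain ⟨s, m, γ', hs, rfl, hcop, hm⟩ := exists_descent_of_odd hgk hk hβ'
    have hm₀ : m ≠ 0 := by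
      rintro rfl
      simp at hk
    have hlt : (-2 * s * g).natAbs < n := by
      have hr₀ : r ≠ 0 := fun h => hα₀ (by rw [hr, h]; ring)
      rw [← hn, hr, Int.natAbs_lt_iff_sq_lt]
      have hg₂ : 0 < g ^ 2 := by positivity
      have hr₂ : 0 < r ^ 2 := by positivity
      calc (-2 * s * g) ^ 2 = 4 * g ^ 2 := by linear_combination 4 * g ^ 2 * hs
        _ < 16 * (g ^ 2 * r ^ 2) := by nlinarith
        _ = (-(g * (4 * r))) ^ 2 := by ring
    have hsg := ih _ hlt (by simp) hcop hm₀ hm rfl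
    have hs₀ : s ≠ 0 := fun h => by simp [h] at hs
    simp [hg₀, hs₀] at hsg

lemma exists_descent_of_two_mul {g k : ℤ} (hgk : IsCoprime g (2 * k)) (hβ : β ≠ 0)
    (h : β ^ 2 = 2 * k * ((2 * k) ^ 3 + 2 * g ^ 3)) :
    ∃ s m l : ℤ, s ^ 2 = 1 ∧ m ≠ 0 ∧ m.natAbs < β.natAbs ∧ IsCoprime (-s * g) m ∧
      4 * m ^ 6 - (-s * g) ^ 3 = l ^ 2 := by
  obtain ⟨b, rfl⟩ : (2 : ℤ) ∣ β :=
    Int.prime_two.dvd_of_dvd_pow (n := 2) ⟨k * ((2 * k) ^ 3 + 2 * g ^ 3), by rw [h]; ring⟩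
  have hcop : IsCoprime k (g ^ 3 + k * (4 * k ^ 2)) :=
    IsCoprime.add_mul_left_right hgk.of_mul_right_right.symm.pow_right _
  have hkb : k * (g ^ 3 + k * (4 * k ^ 2)) = b ^ 2 := by linarith
  obtain ⟨s, m, l, hs, rfl, hl⟩ := exists_eq_mul_sq_of_isCoprime hcop hkb
  have hb : b ^ 2 = m ^ 2 * l ^ 2 := by
    rw [← hkb, hl]
    linear_combination m ^ 2 * l ^ 2 * hs
  obtain ⟨hm₀, hl₀⟩ : m ≠ 0 ∧ l ≠ 0 := by
    constructor <;> rintro rfl <;> simp at hb <;> simp [hb] at hβ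
  refine ⟨s, m, l, hs, hm₀, ?_, ?_, ?_⟩
  · rw [Int.natAbs_lt_iff_sq_lt]
    have hm₂ : 0 < m ^ 2 := by positivity
    have hl₂ : 0 < l ^ 2 := by positivity
    calc m ^ 2 < 4 * (m ^ 2 * l ^ 2) := by nlinarith
      _ = (2 * b) ^ 2 := by linear_combination -4 * hb
  · have hsm : IsCoprime s m := ⟨s, 0, by linear_combination hs⟩
    exact hsm.neg_left.mul_left <|
      (IsCoprime.pow_right_iff two_pos).1 hgk.of_mul_right_right.of_mul_right_right
  · linear_combination s * hl + (l ^ 2 + s * g ^ 3 - 4 * m ^ 6 * (s ^ 2 + 1)) * hs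

theorem eq_zero_of_four_mul_pow_six_sub_pow_three_eq_sq (hαβ : IsCoprime α β) (hβ : β ≠ 0)
    (h : 4 * β ^ 6 - α ^ 3 = γ ^ 2) : α = 0 := by
  rcases Int.even_or_odd α with hα | hα
  · exact eq_zero_of_even hα hαβ hβ h
  exfalso
  induction hn : β.natAbs using Nat.strong_induction_on generalizing α β γ with
  | _ n ih =>
    obtain ⟨g, k, hgk, rfl, hβ'⟩ := exists_coprime_param hαβ hβ h
    have hg : Odd g := (Int.odd_mul.1 (odd_neg.1 hα)).1
    rcases Int.even_or_odd' k with ⟨k, rfl | hk⟩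
    · obtain ⟨s, m, l, hs, hm₀, hlt, hcop, hm⟩ := exists_descent_of_two_mul hgk hβ hβ'
      exact ih _ (hn ▸ hlt) hcop hm₀ hm (((Int.odd_pow' two_ne_zero).1 (hs ▸ odd_one)).neg.mul hg)
        rfl
    · obtain ⟨s, m, γ', hs, rfl, hcop, hm⟩ := exists_descent_of_odd hgk ⟨k, hk⟩ hβ'
      have hm₀ : m ≠ 0 := by
        rintro rfl
        omega
      have hsg := eq_zero_of_even (by simp) hcop hm₀ hm
      have hs₀ : s ≠ 0 := fun h => by simp [h] at hs
      have hg₀ : g ≠ 0 := fun h => by simp [h] at hg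
      simp [hg₀, hs₀] at hsg

end Descent

/-! ### The curve `z² = (τ² + 1)(1 - 2τ³)` over `ℚ` -/

lemma exists_int_eq_sq {τ z : ℚ} (h : z ^ 2 = (τ ^ 2 + 1) * (1 - 2 * τ ^ 3)) {a b : ℤ}
    (hb : b ≠ 0) (hτ : τ = a / b) :
    ∃ n : ℤ, (a ^ 2 + b ^ 2) * (b * (b ^ 3 - 2 * a ^ 3)) = n ^ 2 := by
  rw [← isSquare_iff_exists_sq, ← Rat.isSquare_intCast_iff]
  have hb' : (b : ℚ) ≠ 0 := by exact_mod_cast hb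
  refine (isSquare_iff_exists_sq _).2 ⟨z * b ^ 3, ?_⟩
  push_cast
  rw [mul_pow, h, hτ]
  field_simp

section Integral

variable {a b β γ e : ℤ}

lemma exists_eq_one_or_five_mul_sq {n : ℤ} (hab : IsCoprime a b) (hb : b ≠ 0)
    (h : (a ^ 2 + b ^ 2) * (b * (b ^ 3 - 2 * a ^ 3)) = n ^ 2) :
    ∃ d f k : ℤ, (d = 1 ∨ d = 5) ∧ IsCoprime b d ∧ a ^ 2 + b ^ 2 = d * f ^ 2 ∧
      b * (b ^ 3 - 2 * a ^ 3) = d * k ^ 2 := by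
  have hpos : 0 < a ^ 2 + b ^ 2 := by positivity
  obtain ⟨d, f, k, -, hf, hk⟩ := exists_squarefree_of_mul_eq_sq hpos.ne' h
  have hd : d ∣ a ^ 2 + b ^ 2 := Dvd.intro _ hf.symm
  have hdb : IsCoprime d b := by
    refine IsCoprime.of_isCoprime_of_dvd_left ?_ hd
    rw [sq b, IsCoprime.add_mul_left_left_iff]
    exact hab.pow_left
  have hd₁ : d ∣ b ^ 3 - 2 * a ^ 3 := hdb.dvd_of_dvd_mul_left (Dvd.intro _ hk.symm)
  have hd₂ : d ∣ b + 2 * a := by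
    refine (hdb.pow_right (n := 2)).dvd_of_dvd_mul_left ?_
    rw [show b ^ 2 * (b + 2 * a) = b ^ 3 - 2 * a ^ 3 + (a ^ 2 + b ^ 2) * (2 * a) by ring]
    exact dvd_add hd₁ (hd.mul_right _)
  have hd₅ : d ∣ 5 := by
    refine (hdb.pow_right (n := 2)).dvd_of_dvd_mul_left ?_
    rw [show b ^ 2 * 5 = (a ^ 2 + b ^ 2) * 4 - (b + 2 * a) * (2 * a - b) by ring]
    exact dvd_sub (hd.mul_right _) (hd₂.mul_right _)
  have hd₀ : 0 < d := pos_of_mul_pos_left (hf ▸ hpos) (sq_nonneg f)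
  refine ⟨d, f, k, ?_, hdb.symm, hf, hk⟩
  have := Int.le_of_dvd (by norm_num) hd₅
  interval_cases d <;> simp_all

lemma exists_eq_sq_of_mul_eq_mul_sq {W d k : ℤ} (hb : 0 < b) (hbW : IsCoprime b W)
    (hbd : IsCoprime b d) (hd : d ≠ 0) (h : b * W = d * k ^ 2) :
    ∃ β γ : ℤ, b = β ^ 2 ∧ W = d * γ ^ 2 := by
  obtain ⟨W, rfl⟩ := hbd.symm.dvd_of_dvd_mul_left (Dvd.intro _ h.symm)
  obtain ⟨s, p, q, hs, rfl, rfl⟩ := exists_eq_mul_sq_of_isCoprime hbW.of_mul_right_right (c := k)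
    (mul_left_cancel₀ hd (by linarith))
  obtain rfl : s = 1 := by
    have : 0 < s := pos_of_mul_pos_left hb (sq_nonneg p)
    nlinarith
  exact ⟨p, q, one_mul _, by rw [one_mul]⟩

lemma eq_zero_of_odd {d f : ℤ} (hβ : Odd β) (hab : IsCoprime a β) (hd : d = 1 ∨ d = 5)
    (hf : a ^ 2 + β ^ 4 = d * f ^ 2) (hγ : β ^ 6 - 2 * a ^ 3 = d * γ ^ 2) : a = 0 := by
  rcases hd with rfl | rfl
  · have h2 : IsCoprime 2 β := Int.isCoprime_two_left.2 hβ
    have := eq_zero_of_four_mul_pow_six_sub_pow_three_eq_sq (h2.mul_left hab) (γ := 2 * γ)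
      (by rintro rfl; simp at hβ) (by linear_combination 4 * hγ)
    simpa using this
  · exfalso
    have key : ∀ a b g e : ZMod 8, b ^ 6 - 2 * a ^ 3 = 5 * g ^ 2 → a ^ 2 + b ^ 4 = 5 * e ^ 2 →
      4 * b = 0 := by decide +kernel
    have := key a β γ f (by exact_mod_cast congrArg (Int.cast : ℤ → ZMod 8) hγ)
      (by exact_mod_cast congrArg (Int.cast : ℤ → ZMod 8) hf)
    have h8 : ((4 * β : ℤ) : ZMod 8) = 0 := by exact_mod_cast this
    rw [ZMod.intCast_zmod_eq_zero_iff_dvd] at h8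
    obtain ⟨k, rfl⟩ := hβ
    omega

lemma odd_and_emod_eight (ha : Odd a) (h₁ : 4 * β ^ 6 - a ^ 3 = 5 * γ ^ 2)
    (h₂ : a ^ 2 + 4 * β ^ 4 = 5 * e ^ 2) : Odd β ∧ a % 8 = 7 := by
  have key : ∀ a b g e : ZMod 8, 4 * b ^ 6 - a ^ 3 = 5 * g ^ 2 → a ^ 2 + 4 * b ^ 4 = 5 * e ^ 2 →
    4 * a ≠ 0 → 4 * b ≠ 0 ∧ a = 7 := by decide +kernel
  have four_mul_eq_zero (n : ℤ) : (4 * n : ZMod 8) = 0 ↔ ¬ Odd n := by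
    rw [Int.not_odd_iff_even, even_iff_two_dvd,
      ← mul_dvd_mul_iff_left (by norm_num : (4 : ℤ) ≠ 0)]
    exact_mod_cast ZMod.intCast_zmod_eq_zero_iff_dvd (4 * n) 8
  obtain ⟨hβ, ha₇⟩ := key a β γ e (by exact_mod_cast congrArg (Int.cast : ℤ → ZMod 8) h₁)
    (by exact_mod_cast congrArg (Int.cast : ℤ → ZMod 8) h₂) (by simpa [four_mul_eq_zero] using ha)
  refine ⟨by simpa [four_mul_eq_zero] using hβ, ?_⟩
  exact (ZMod.intCast_eq_intCast_iff a 7 8).1 (by exact_mod_cast ha₇)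

lemma five_dvd_add_sq (h₁ : 4 * β ^ 6 - a ^ 3 = 5 * γ ^ 2)
    (h₂ : a ^ 2 + 4 * β ^ 4 = 5 * e ^ 2) : 5 ∣ a + β ^ 2 := by
  have key : ∀ a b : ZMod 5, 4 * b ^ 6 - a ^ 3 = 0 → a ^ 2 + 4 * b ^ 4 = 0 → a + b ^ 2 = 0 := by
    decide +kernel
  have cast_eq_zero {n m : ℤ} (h : n = 5 * m) : (n : ZMod 5) = 0 :=
    (ZMod.intCast_zmod_eq_zero_iff_dvd n 5).2 (Dvd.intro _ h.symm)
  exact (ZMod.intCast_zmod_eq_zero_iff_dvd _ 5).1 <| by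
    exact_mod_cast key a β (by exact_mod_cast cast_eq_zero h₁) (by exact_mod_cast cast_eq_zero h₂)

/-- A generator of the prime of norm `5` of `ℤ[θ]`. -/
def π {R : Type*} [CommRing R] : CbrtTwo R := ⟨1, 0, 1⟩

lemma norm_π : norm (π : CbrtTwo ℤ) = 5 := by simp [norm_apply, π]

lemma even_of_eq_π_mul_ε_mul_sq {w : CbrtTwo ℤ}
    (h : (⟨-a, 0, β ^ 2⟩ : CbrtTwo ℤ) = π * ((ε : CbrtTwo ℤ) * w ^ 2)) : Even a := by
  obtain ⟨x, y, z⟩ := w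
  simp only [sq_coeffs, ε_mul_coeffs, CbrtTwo.ext_iff, π, mul_a, mul_b] at h
  obtain ⟨ha, h₀, -⟩ := h
  obtain ⟨x, rfl⟩ : (2 : ℤ) ∣ x := Int.prime_two.dvd_of_dvd_pow (n := 2)
    ⟨y ^ 2 + 2 * x * z - 2 * y * z - x * y - z ^ 2, by linarith⟩
  exact even_iff_two_dvd.2 ⟨-2 * x ^ 2 - 2 * y * z - (y ^ 2 + 4 * x * z) +
    (4 * x * y + 2 * z ^ 2), by linarith⟩

lemma exists_eq_π_mul_sq (ha : Odd a) (hab : IsCoprime a β) (h₁ : 4 * β ^ 6 - a ^ 3 = 5 * γ ^ 2)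
    (h₂ : a ^ 2 + 4 * β ^ 4 = 5 * e ^ 2) : ∃ w, (⟨-a, 0, β ^ 2⟩ : CbrtTwo ℤ) = π * w ^ 2 := by
  obtain ⟨q, hq⟩ := five_dvd_add_sq h₁ h₂
  set y : CbrtTwo ℤ := ⟨β ^ 2 - q, -2 * q, q⟩
  have hx : (⟨-a, 0, β ^ 2⟩ : CbrtTwo ℤ) = π * y := by
    refine CbrtTwo.ext ?_ ?_ ?_
    · simp [π, y]
      linarith
    · simp [π, y]
    · simp [π, y]
  have hadj : adj (⟨-a, 0, β ^ 2⟩ : CbrtTwo ℤ) = adj π * adj y := by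
    rw [hx]
    ext <;> simp [adj, π] <;> ring
  have hN : norm y = γ ^ 2 := by
    have : norm π * norm y = 5 * γ ^ 2 := by
      rw [← map_mul, ← hx, ← h₁, norm_apply]
      ring
    rw [norm_π] at this
    linarith
  have hy₀ : y ≠ 0 := by
    intro h
    rw [h, mul_zero, CbrtTwo.ext_iff] at hx
    simp [neg_eq_zero.1 hx.1] at ha
  obtain ⟨w, hw | hw⟩ := exists_eq_sq_or_eq_ε_mul_sq_of_norm_eq_sq hy₀ hN fun S hS hSy hSy' =>
    norm_dvd_six_of_dvd hab hS (hx ▸ hSy.mul_left _) (hadj ▸ hSy'.mul_left _)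
  · exact ⟨w, by rw [hx, hw]⟩
  · rw [hw] at hx
    exact absurd ha (Int.not_odd_iff_even.2 (even_of_eq_π_mul_ε_mul_sq hx))

lemma exists_eq_two_mul_sq {d k : ℤ} (hab : IsCoprime a (2 * b)) (hb : 0 < b)
    (hbd : IsCoprime (2 * b) d) (hd : d ≠ 0)
    (h : 2 * b * ((2 * b) ^ 3 - 2 * a ^ 3) = d * k ^ 2) :
    ∃ β γ : ℤ, b = β ^ 2 ∧ 4 * β ^ 6 - a ^ 3 = d * γ ^ 2 := by
  obtain ⟨k, rfl⟩ : 2 ∣ k := by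
    refine Int.prime_two.dvd_of_dvd_pow (n := 2) (hbd.of_mul_left_left.dvd_of_dvd_mul_left ?_)
    exact h ▸ (Dvd.intro _ rfl).mul_right _
  have hbW : IsCoprime b (-a ^ 3 + b * (4 * b ^ 2)) :=
    IsCoprime.add_mul_left_right hab.of_mul_right_right.symm.pow_right.neg_right _
  obtain ⟨β, γ, rfl, hγ⟩ := exists_eq_sq_of_mul_eq_mul_sq hb hbW hbd.of_mul_left_right hd
    (k := k) (by linarith)
  exact ⟨β, γ, rfl, by rw [← hγ]; ring⟩

theorem eq_zero_or_exists_eq_π_mul_sq {τ z : ℚ} (h : z ^ 2 = (τ ^ 2 + 1) * (1 - 2 * τ ^ 3)) :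
    τ = 0 ∨ ∃ (a β e : ℤ) (w : CbrtTwo ℤ), τ = a / (2 * β ^ 2) ∧ Odd β ∧ a % 8 = 7 ∧
      a ^ 2 + 4 * β ^ 4 = 5 * e ^ 2 ∧ (⟨-a, 0, β ^ 2⟩ : CbrtTwo ℤ) = π * w ^ 2 := by
  obtain ⟨a, b, hb, hab, hτ⟩ : ∃ a b : ℤ, 0 < b ∧ IsCoprime a b ∧ τ = a / b :=
    ⟨τ.num, τ.den, by exact_mod_cast τ.den_pos, Int.isCoprime_iff_gcd_eq_one.2 τ.reduced,
      (Rat.num_div_den τ).symm⟩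
  obtain ⟨n, hn⟩ := exists_int_eq_sq h hb.ne' hτ
  obtain ⟨d, f, k, hd, hbd, hf, hk⟩ := exists_eq_one_or_five_mul_sq hab hb.ne' hn
  have hd₀ : d ≠ 0 := by
    rintro rfl
    simp at hd
  rcases Int.even_or_odd b with hb₂ | hb₂
  · right
    obtain ⟨b, rfl⟩ := even_iff_two_dvd.1 hb₂
    have ha : Odd a := Int.isCoprime_two_right.1 hab.of_mul_right_left
    obtain ⟨β, γ, rfl, hγ⟩ := exists_eq_two_mul_sq hab (by linarith) hbd hd₀ hk
    have haβ : IsCoprime a β := (IsCoprime.pow_right_iff two_pos).1 hab.of_mul_right_right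
    rcases hd with rfl | rfl
    · have := eq_zero_of_four_mul_pow_six_sub_pow_three_eq_sq (γ := γ) haβ
        (by rintro rfl; simp at hb) (by linarith)
      simp [this] at ha
    · have hf' : a ^ 2 + 4 * β ^ 4 = 5 * f ^ 2 := by linarith
      obtain ⟨hβ, ha₇⟩ := odd_and_emod_eight ha hγ hf'
      obtain ⟨w, hw⟩ := exists_eq_π_mul_sq ha haβ hγ hf'
      exact ⟨a, β, f, w, by exact_mod_cast hτ, hβ, ha₇, hf', hw⟩
  · left
    have hbW : IsCoprime b (-(2 * a ^ 3) + b * b ^ 2) := IsCoprime.add_mul_left_right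
      ((Int.isCoprime_two_right.2 hb₂).mul_right hab.symm.pow_right).neg_right _
    obtain ⟨β, γ, rfl, hγ⟩ := exists_eq_sq_of_mul_eq_mul_sq hb hbW hbd hd₀ (k := k) (by linarith)
    have ha := eq_zero_of_odd (f := f) ((Int.odd_pow' two_ne_zero).1 hb₂)
      ((IsCoprime.pow_right_iff two_pos).1 hab) hd (by linarith) (γ := γ) (by linarith)
    simp [hτ, ha]

end Integral

/-! ### The prime `ρ` and its residue field -/

/-- A generator of the prime of norm `25` of `ℤ[θ]`, the cofactor of `π` in `5`. -/
def ρ {R : Type*} [CommRing R] : CbrtTwo R := ⟨1, 2, -1⟩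

lemma π_eq {R : Type*} [CommRing R] : (π : CbrtTwo R) = 1 + θ ^ 2 := by
  ext <;> simp [π, sq]

lemma ρ_eq {R : Type*} [CommRing R] : (ρ : CbrtTwo R) = 1 + 2 * θ - θ ^ 2 := by
  ext <;> simp [ρ, sq]

lemma π_mul_ρ {R : Type*} [CommRing R] : (π * ρ : CbrtTwo R) = 5 := by
  ext
  · simp [π, ρ]
    norm_num
  · simp [π, ρ]
  · simp [π, ρ]

@[simp] lemma ι_π : ι π = π := by simp [π_eq, ι_θ]
@[simp] lemma ι_ρ : ι ρ = ρ := by simp [ρ_eq, ι_θ, map_ofNat]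

/-- Reduction modulo `ρ`, where `θ² = 1 + 2θ`. -/
def residue : CbrtTwo ℤ →+* QuadraticAlgebra (ZMod 5) 1 2 where
  toFun x := ⟨(x.a + x.c : ℤ), (x.b + 2 * x.c : ℤ)⟩
  map_zero' := by ext <;> simp
  map_one' := rfl
  map_add' x y := by ext <;> simp <;> ring
  map_mul' x y := by
    have h : (5 : ZMod 5) = 0 := rfl
    ext
    · simp
      linear_combination -(x.c * y.c : ZMod 5) * h
    · simp
      linear_combination -(x.b * y.c + x.c * y.b + 2 * x.c * y.c : ZMod 5) * h

lemma residue_apply (x : CbrtTwo ℤ) :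
    residue x = ⟨(x.a + x.c : ℤ), (x.b + 2 * x.c : ℤ)⟩ := rfl

lemma residue_eq_zero_iff {x : CbrtTwo ℤ} : residue x = 0 ↔ ρ ∣ x := by
  constructor
  · intro h
    rw [residue_apply, QuadraticAlgebra.ext_iff] at h
    simp only [QuadraticAlgebra.re_zero, QuadraticAlgebra.im_zero,
      ZMod.intCast_zmod_eq_zero_iff_dvd] at h
    obtain ⟨⟨k, hk⟩, l, hl⟩ := h
    push_cast at hk hl
    refine ⟨⟨k + 2 * l - x.c, l, k⟩, ?_⟩
    ext <;> simp [ρ] <;> linarith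
  · rintro ⟨y, rfl⟩
    rw [map_mul, show residue ρ = 0 from rfl, zero_mul]

/-- The norm from the residue field of `ρ` to `ℤ/5`. -/
def residueNorm : CbrtTwo ℤ →* ZMod 5 := QuadraticAlgebra.norm.comp residue.toMonoidHom

lemma residueNorm_apply (x : CbrtTwo ℤ) :
    residueNorm x = QuadraticAlgebra.norm (residue x) := rfl

lemma residueNorm_eq_zero_iff {x : CbrtTwo ℤ} : residueNorm x = 0 ↔ ρ ∣ x := by
  have key : ∀ r s : ZMod 5, r * r + 2 * r * s - 1 * s * s = 0 → r = 0 ∧ s = 0 := by decide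
  rw [← residue_eq_zero_iff]
  refine ⟨fun h => QuadraticAlgebra.ext_iff.2 (key _ _ h), fun h => ?_⟩
  rw [residueNorm_apply, h, QuadraticAlgebra.norm_zero]

lemma residueNorm_congr {x y : CbrtTwo ℤ} (h : ρ ∣ x - y) : residueNorm x = residueNorm y := by
  rw [← residue_eq_zero_iff, map_sub, sub_eq_zero] at h
  rw [residueNorm_apply, h, residueNorm_apply]

lemma residueNorm_neg (x : CbrtTwo ℤ) : residueNorm (-x) = residueNorm x := by
  simp [residueNorm_apply, QuadraticAlgebra.norm_neg]

lemma prime_ρ : Prime (ρ : CbrtTwo ℤ) := by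
  have : Fact (Nat.Prime 5) := ⟨by norm_num⟩
  refine ⟨fun h => ?_, fun h => ?_, fun x y h => ?_⟩
  · simpa [ρ] using congrArg a h
  · have : residueNorm 1 = 0 := residueNorm_eq_zero_iff.2 h.dvd
    simp at this
  · simpa only [← residueNorm_eq_zero_iff, map_mul, mul_eq_zero] using h

lemma ρ_dvd_of_dvd_sq_sub_mul_sq {s κ t : CbrtTwo ℤ}
    (hκ : residueNorm κ = 2 ∨ residueNorm κ = 3) (h : ρ ∣ s ^ 2 - κ * t ^ 2) : ρ ∣ s ∧ ρ ∣ t := by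
  have key : ∀ s k t : ZMod 5, s ^ 2 = k * t ^ 2 → (k = 2 ∨ k = 3) → s = 0 ∧ t = 0 := by decide
  rw [← residueNorm_eq_zero_iff, ← residueNorm_eq_zero_iff]
  exact key _ _ _ (by simpa using residueNorm_congr h) hκ

lemma not_ρ_dvd_θ_sq : ¬ρ ∣ (θ ^ 2 : CbrtTwo ℤ) := by
  rw [← residueNorm_eq_zero_iff]
  decide

/-! ### Descent on `y² = x(x² + θ²ρx - ρ²)` -/

lemma exists_eq_sq_or_residueNorm_of_norm_eq_one {u : CbrtTwo ℤ} (hu : norm u = 1) :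
    (∃ w, u = w ^ 2) ∨ residueNorm u = 2 ∨ residueNorm u = 3 := by
  obtain ⟨w, rfl | rfl⟩ := exists_eq_sq_or_eq_ε_mul_sq hu
  · exact Or.inl ⟨w, rfl⟩
  · have key : ∀ r : ZMod 5, r ≠ 0 → 3 * r ^ 2 = 2 ∨ 3 * r ^ 2 = 3 := by decide
    rw [map_mul, map_pow, show residueNorm ε = 3 by decide]
    refine Or.inr (key _ fun hw => prime_ρ.not_isUnit ?_)
    refine isUnit_of_dvd_unit ((residueNorm_eq_zero_iff.1 hw).trans ?_)
      (isUnit_iff_isUnit_norm.2 (hu ▸ isUnit_one))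
    exact (dvd_pow_self w two_ne_zero).mul_left _

lemma exists_eq_sq_or_eq_neg_sq_or_residueNorm_of_isUnit {u : CbrtTwo ℤ} (hu : IsUnit u) :
    (∃ w, u = w ^ 2 ∨ u = -w ^ 2) ∨ residueNorm u = 2 ∨ residueNorm u = 3 := by
  rcases Int.isUnit_iff.1 (isUnit_iff_isUnit_norm.1 hu) with h | h
  · exact (exists_eq_sq_or_residueNorm_of_norm_eq_one h).imp_left fun ⟨w, hw⟩ => ⟨w, Or.inl hw⟩
  · rw [← residueNorm_neg]
    refine (exists_eq_sq_or_residueNorm_of_norm_eq_one (by rw [norm_neg, h, neg_neg])).imp_left ?_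
    exact fun ⟨w, hw⟩ => ⟨w, Or.inr (neg_eq_iff_eq_neg.1 hw)⟩

section

variable {u w n η η' : CbrtTwo ℤ}

lemma sq_ne_quartic_of_residueNorm (hη : residueNorm η = 2 ∨ residueNorm η = 3)
    (hηη' : η * η' = -1) (huw : IsCoprime u w) :
    n ^ 2 ≠ η * u ^ 4 + θ ^ 2 * ρ * u ^ 2 * w ^ 2 + η' * ρ ^ 2 * w ^ 4 := by
  intro h
  have hη' : residueNorm η' = 2 ∨ residueNorm η' = 3 := by
    have key : ∀ r s : ZMod 5, r * s = 1 → (r = 2 ∨ r = 3) → (s = 2 ∨ s = 3) := by decide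
    refine key _ _ ?_ hη
    rw [← map_mul, hηη', residueNorm_neg, map_one]
  obtain ⟨⟨n, rfl⟩, hu⟩ := ρ_dvd_of_dvd_sq_sub_mul_sq (s := n) (t := u ^ 2) hη
    ⟨θ ^ 2 * u ^ 2 * w ^ 2 + η' * ρ * w ^ 4, by rw [h]; ring⟩
  have hu := prime_ρ.dvd_of_dvd_pow hu
  obtain ⟨u, rfl⟩ := id hu
  have h' : n ^ 2 = η * ρ ^ 2 * u ^ 4 + θ ^ 2 * ρ * u ^ 2 * w ^ 2 + η' * w ^ 4 :=
    mul_left_cancel₀ (pow_ne_zero 2 prime_ρ.ne_zero) (by linear_combination h)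
  obtain ⟨-, hw⟩ := ρ_dvd_of_dvd_sq_sub_mul_sq (s := n) (t := w ^ 2) hη'
    ⟨η * ρ * u ^ 4 + θ ^ 2 * u ^ 2 * w ^ 2, by rw [h']; ring⟩
  exact prime_ρ.not_isUnit (huw.isUnit_of_dvd' hu (prime_ρ.dvd_of_dvd_pow hw))

lemma sq_ne_ρ_mul_quartic (hηη' : η * η' = -1) (huw : IsCoprime u w) :
    n ^ 2 ≠ η * ρ * u ^ 4 + θ ^ 2 * ρ * u ^ 2 * w ^ 2 + η' * ρ * w ^ 4 := by
  intro h
  obtain ⟨n, rfl⟩ : ρ ∣ n := prime_ρ.dvd_of_dvd_pow (n := 2)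
    ⟨η * u ^ 4 + θ ^ 2 * u ^ 2 * w ^ 2 + η' * w ^ 4, by rw [h]; ring⟩
  have h' : ρ * n ^ 2 = η * u ^ 4 + θ ^ 2 * u ^ 2 * w ^ 2 + η' * w ^ 4 :=
    mul_left_cancel₀ prime_ρ.ne_zero (by linear_combination h)
  have hθ3 : (θ : CbrtTwo ℤ) ^ 3 = 2 := θ_pow_three
  -- Completing the square; the discriminant `θ⁴ + 4` of the form on the right is `πθ⁴`.
  obtain ⟨hu, hw⟩ := ρ_dvd_of_dvd_sq_sub_mul_sq (κ := π) (s := 2 * η * u ^ 2 + θ ^ 2 * w ^ 2)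
    (t := θ ^ 2 * w ^ 2) (Or.inr (by decide)) ⟨4 * η * n ^ 2, by
      rw [π_eq]
      linear_combination -4 * η * h' - 4 * w ^ 4 * hηη' - w ^ 4 * (θ ^ 3 + 2) * hθ3⟩
  have h2u : ρ ∣ θ ^ 3 * (η * u ^ 2) := by
    rw [θ_pow_three, ← mul_assoc]
    exact (dvd_add_left hw).1 hu
  have hη : ¬ρ ∣ η := fun h => prime_ρ.not_isUnit
    (isUnit_of_dvd_unit h (IsUnit.of_mul_eq_one (-η') (by rw [mul_neg, hηη', neg_neg])))
  have hθ : ¬ρ ∣ (θ : CbrtTwo ℤ) ^ 3 := fun h =>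
    not_ρ_dvd_θ_sq (dvd_pow (prime_ρ.dvd_of_dvd_pow h) two_ne_zero)
  have hu' := ((prime_ρ.dvd_or_dvd h2u).resolve_left hθ)
  exact prime_ρ.not_isUnit (huw.isUnit_of_dvd'
    (prime_ρ.dvd_of_dvd_pow ((prime_ρ.dvd_or_dvd hu').resolve_left hη))
    (prime_ρ.dvd_of_dvd_pow ((prime_ρ.dvd_or_dvd hw).resolve_left not_ρ_dvd_θ_sq)))

end

theorem exists_eq_sq_or_eq_neg_sq {x y : CbrtTwo ℚ} (hx : x ≠ 0)
    (h : y ^ 2 = x * (x ^ 2 + θ ^ 2 * ρ * x - ρ ^ 2)) : ∃ v, x = v ^ 2 ∨ x = -v ^ 2 := by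
  replace h : y ^ 2 = x * (x ^ 2 + ι (θ ^ 2 * ρ) * x + ι (-ρ ^ 2)) := by
    simpa [ι_θ, ← sub_eq_add_neg] using h
  obtain ⟨S, v, hS, hSb, hxv⟩ := exists_squarefree_dvd_eq_mul_sq hx h
  have hv : v ≠ 0 := by rintro rfl; simp [hxv] at hx
  have hSρ : S ∣ ρ := (hS.dvd_pow_iff_dvd two_ne_zero).1 (dvd_neg.1 hSb)
  rcases prime_ρ.irreducible.dvd_iff.1 hSρ with hu | ⟨η, rfl⟩
  · obtain ⟨η, hη⟩ := hu.exists_right_inv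
    rcases exists_eq_sq_or_eq_neg_sq_or_residueNorm_of_isUnit hu with ⟨w, rfl | rfl⟩ | hSr
    · exact ⟨ι w * v, Or.inl (by rw [hxv, map_pow, mul_pow])⟩
    · exact ⟨ι w * v, Or.inr (by rw [hxv, map_neg, map_pow, mul_pow, neg_mul])⟩
    · obtain ⟨u, w, n, huw, hn⟩ := exists_isCoprime_sq_eq_quartic (D := -η * ρ ^ 2) hS.ne_zero hv
        (by linear_combination -ρ ^ 2 * hη) hxv h
      exact absurd hn (sq_ne_quartic_of_residueNorm hSr (by rw [mul_neg, hη]) huw)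
  · obtain ⟨u, w, n, huw, hn⟩ := exists_isCoprime_sq_eq_quartic
      (D := -((η⁻¹ : (CbrtTwo ℤ)ˣ) : CbrtTwo ℤ) * ρ) hS.ne_zero hv
      (by linear_combination -ρ ^ 2 * η.mul_inv) hxv h
    rw [mul_comm ρ] at hn
    exact absurd hn (sq_ne_ρ_mul_quartic (by rw [mul_neg, η.mul_inv]) huw)

/-! ### The prime `θ` above `2` -/

lemma θ_dvd_iff {x : CbrtTwo ℤ} : θ ∣ x ↔ 2 ∣ x.a := by
  constructor
  · rintro ⟨y, rfl⟩
    simp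
  · rintro ⟨k, hk⟩
    exact ⟨⟨x.b, x.c, k⟩, by ext <;> simp [hk]⟩

lemma prime_θ : Prime (θ : CbrtTwo ℤ) := by
  refine ⟨fun h => ?_, fun h => ?_, fun x y h => ?_⟩
  · simpa using congrArg b h
  · simpa using θ_dvd_iff.1 (h.dvd (a := 1))
  · simp only [θ_dvd_iff, mul_a] at h ⊢
    exact Int.prime_two.dvd_or_dvd ((dvd_add_left (dvd_mul_right _ _)).1 h)

lemma θ_dvd_sub {x y : CbrtTwo ℤ} (hx : ¬θ ∣ x) (hy : ¬θ ∣ y) : θ ∣ x - y := by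
  rw [θ_dvd_iff] at hx hy ⊢
  rw [sub_a]
  omega

lemma θ_sq_dvd_of_dvd {x : CbrtTwo ℤ} (ha : 2 ∣ x.a) (hb : 2 ∣ x.b) : θ ^ 2 ∣ x := by
  obtain ⟨k, hk⟩ := ha
  obtain ⟨l, hl⟩ := hb
  exact ⟨⟨x.c, k, l⟩, by ext <;> simp [sq, hk, hl]⟩

lemma odd_norm_iff {x : CbrtTwo ℤ} : Odd (norm x) ↔ ¬θ ∣ x := by
  rw [θ_dvd_iff, ← even_iff_two_dvd, Int.not_even_iff_odd, norm_apply]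
  simp [parity_simps, show Even (4 : ℤ) by decide, show Even (6 : ℤ) by decide]

lemma exists_eq_add_two_mul_θ_mul (x : CbrtTwo ℤ) :
    ∃ (a : Fin 4) (b c : Fin 2) (y : CbrtTwo ℤ),
      x = ⟨(a : ℕ), (b : ℕ), (c : ℕ)⟩ + 2 * θ * y := by
  refine ⟨⟨(x.a % 4).toNat, by omega⟩, ⟨(x.b % 2).toNat, by omega⟩, ⟨(x.c % 2).toNat, by omega⟩,
    ⟨x.b / 2, x.c / 2, x.a / 4⟩, ?_⟩
  ext <;> simp <;> omega

/-! ### Descent on `y² = x(x² - 2ρx + 5ρ)` -/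

/-- The leading coefficient of the two-covering `n² = A u⁴ - 2ρ u²w² + D w⁴` in which `A` is the
class of `ε πʲ ρᵏ`. -/
def leadCoeff (j k : Fin 2) : CbrtTwo ℤ := (ε : CbrtTwo ℤ) * π ^ (j : ℕ) * ρ ^ (k : ℕ)

/-- The coefficient `D` of the two-covering `n² = A u⁴ - 2ρ u²w² + D w⁴`, where `A D = 5ρ`. -/
def tailCoeff (j k : Fin 2) : CbrtTwo ℤ :=
  ((ε⁻¹ : (CbrtTwo ℤ)ˣ) : CbrtTwo ℤ) * π ^ (1 - j : ℕ) * ρ ^ (2 - k : ℕ)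

lemma leadCoeff_mul_tailCoeff (j k : Fin 2) : leadCoeff j k * tailCoeff j k = 5 * ρ := by
  revert j k
  decide

lemma not_θ_dvd_tailCoeff (j k : Fin 2) : ¬θ ∣ tailCoeff j k := by
  rw [θ_dvd_iff]
  revert j k
  decide

section

variable (j k : Fin 2)

lemma sq_eq_quartic_mod_two (u₀ u₁ u₂ w₀ w₁ w₂ n₀ n₁ n₂ : ZMod 2) (huw : ¬(u₀ = 0 ∧ w₀ = 0))
    (h : (⟨n₀, n₁, n₂⟩ : CbrtTwo (ZMod 2)) ^ 2 =
      map (Int.castRingHom (ZMod 2)) (leadCoeff j k) * ⟨u₀, u₁, u₂⟩ ^ 4 +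
        map (Int.castRingHom (ZMod 2)) (tailCoeff j k) * ⟨w₀, w₁, w₂⟩ ^ 4) :
    u₀ ≠ 0 ∧ w₀ ≠ 0 ∧ n₀ = 0 ∧ n₁ = 0 := by
  revert j k u₀ u₁ u₂ w₀ w₁ w₂ n₀ n₁ n₂
  decide +kernel

lemma not_θ_dvd_of_sq_eq_quartic {u w n : CbrtTwo ℤ} (huw : IsCoprime u w)
    (h : n ^ 2 = leadCoeff j k * u ^ 4 + (-2 * ρ) * u ^ 2 * w ^ 2 + tailCoeff j k * w ^ 4) :
    ¬θ ∣ u ∧ ¬θ ∣ w ∧ θ ^ 2 ∣ n := by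
  have hmod (z : ℤ) : (z : ZMod 2) = 0 ↔ 2 ∣ z := ZMod.intCast_zmod_eq_zero_iff_dvd z 2
  obtain ⟨hu, hw, h₀, h₁⟩ := sq_eq_quartic_mod_two j k u.a u.b u.c w.a w.b w.c n.a n.b n.c
    (by
      rw [hmod, hmod, ← θ_dvd_iff, ← θ_dvd_iff]
      exact fun ⟨hu, hw⟩ => prime_θ.not_isUnit (huw.isUnit_of_dvd' hu hw))
    (by
      have h2 : (2 : CbrtTwo (ZMod 2)) = 0 := rfl
      have := congrArg (map (Int.castRingHom (ZMod 2))) h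
      simp only [map_pow, map_add, map_mul, map_neg, map_ofNat, h2, neg_zero, zero_mul,
        add_zero] at this
      exact this)
  rw [θ_dvd_iff, θ_dvd_iff, ← hmod, ← hmod]
  exact ⟨hu, hw, θ_sq_dvd_of_dvd ((hmod _).1 h₀) ((hmod _).1 h₁)⟩

lemma eight_mul_θ_sq_dvd_iff {x : CbrtTwo ℤ} :
    8 * θ ^ 2 ∣ x ↔ 16 ∣ x.a ∧ 16 ∣ x.b ∧ 8 ∣ x.c := by
  constructor
  · rintro ⟨y, rfl⟩
    simp only [sq, mul_a, mul_b, mul_c, ofNat_a, ofNat_b, ofNat_c, θ_a, θ_b, θ_c]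
    omega
  · rintro ⟨⟨k, hk⟩, ⟨l, hl⟩, m, hm⟩
    exact ⟨⟨m, k, l⟩, by ext <;> simp [sq, hk, hl, hm] <;> ring⟩

lemma not_dvd_quartic_sub_of_residues (a a' : Fin 4) (b c b' c' : Fin 2)
    (ha : ¬θ ∣ (⟨(a : ℕ), (b : ℕ), (c : ℕ)⟩ : CbrtTwo ℤ)) :
    ¬8 * θ ^ 2 ∣ leadCoeff j k - 2 * ρ * ⟨(a : ℕ), (b : ℕ), (c : ℕ)⟩ ^ 2 +
      tailCoeff j k * ⟨(a : ℕ), (b : ℕ), (c : ℕ)⟩ ^ 4 -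
      θ ^ 4 * ⟨(a' : ℕ), (b' : ℕ), (c' : ℕ)⟩ ^ 2 := by
  rw [eight_mul_θ_sq_dvd_iff]
  rw [θ_dvd_iff] at ha
  revert j k a a' b c b' c'
  decide +kernel

lemma not_dvd_quartic_sub {w : CbrtTwo ℤ} (hw : ¬θ ∣ w) (n : CbrtTwo ℤ) :
    ¬8 * θ ^ 2 ∣ leadCoeff j k - 2 * ρ * w ^ 2 + tailCoeff j k * w ^ 4 - θ ^ 4 * n ^ 2 := by
  obtain ⟨a, b, c, y, rfl⟩ := exists_eq_add_two_mul_θ_mul w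
  obtain ⟨a', b', c', z, rfl⟩ := exists_eq_add_two_mul_θ_mul n
  set r : CbrtTwo ℤ := ⟨(a : ℕ), (b : ℕ), (c : ℕ)⟩
  set s : CbrtTwo ℤ := ⟨(a' : ℕ), (b' : ℕ), (c' : ℕ)⟩
  have hr : ¬θ ∣ r := fun h => hw (h.add ⟨2 * y, by ring⟩)
  obtain ⟨q, hq⟩ : θ ∣ tailCoeff j k * r ^ 2 - ρ :=
    θ_dvd_sub (prime_θ.not_dvd_mul (not_θ_dvd_tailCoeff j k)
      fun h => hr (prime_θ.dvd_of_dvd_pow h)) (by rw [θ_dvd_iff]; decide)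
  have hθ3 : (θ : CbrtTwo ℤ) ^ 3 = 2 := θ_pow_three
  refine fun h => not_dvd_quartic_sub_of_residues j k a a' b c b' c' hr ?_
  refine (dvd_iff_dvd_of_dvd_sub ?_).1 h
  refine ⟨r * y * q - ρ * y ^ 2 + tailCoeff j k * (3 * r ^ 2 * y ^ 2 + 4 * θ * r * y ^ 3 +
    2 * θ ^ 2 * y ^ 4) - s * z - θ * z ^ 2, ?_⟩
  linear_combination 8 * θ * r * y * hq - (4 * θ ^ 2 * s * z + 4 * θ ^ 3 * z ^ 2) * hθ3

lemma sq_ne_leadCoeff_quartic {u w n : CbrtTwo ℤ} (huw : IsCoprime u w) :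
    n ^ 2 ≠ leadCoeff j k * u ^ 4 + (-2 * ρ) * u ^ 2 * w ^ 2 + tailCoeff j k * w ^ 4 := by
  intro h
  obtain ⟨hu, hw, n, rfl⟩ := not_θ_dvd_of_sq_eq_quartic j k huw h
  have hadj : ¬θ ∣ adj u := fun h => Int.not_even_iff_odd.2 (odd_norm_iff.2 hu)
    (even_iff_two_dvd.2 (θ_dvd_iff.1 (mul_adj u ▸ h.mul_left u)))
  obtain ⟨q, hq⟩ : ∃ q, (u * adj u) ^ 2 = 1 + 8 * q := by
    obtain ⟨q, hq⟩ := Int.eight_dvd_sq_sub_one_of_odd (odd_norm_iff.2 hu)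
    refine ⟨const q, ?_⟩
    rw [mul_adj, ← map_pow, sub_eq_iff_eq_add'.1 hq, map_add, map_one, map_mul, map_ofNat]
  refine not_dvd_quartic_sub j k (w := w * adj u) (fun h => (prime_θ.dvd_or_dvd h).elim hw hadj)
    (n * adj u ^ 2) ?_
  have hθ3 : (θ : CbrtTwo ℤ) ^ 3 = 2 := θ_pow_three
  refine ⟨θ * (ρ * (w * adj u) ^ 2 * q - leadCoeff j k * (q + 4 * q ^ 2)), ?_⟩
  linear_combination -adj u ^ 4 * h +
    (2 * ρ * w ^ 2 * adj u ^ 2 - leadCoeff j k * (u ^ 2 * adj u ^ 2 + 1 + 8 * q)) * hq +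
    (leadCoeff j k * (8 * q + 32 * q ^ 2) - 8 * ρ * (w * adj u) ^ 2 * q) * hθ3

end

lemma norm_ρ : norm (ρ : CbrtTwo ℤ) = 25 := rfl

lemma prime_π : Prime (π : CbrtTwo ℤ) := by
  have : IsLocalHom (norm : CbrtTwo ℤ →* ℤ) := ⟨fun _ h => isUnit_iff_isUnit_norm.2 h⟩
  refine (Irreducible.of_map (f := (norm : CbrtTwo ℤ →* ℤ)) ?_).prime
  rw [norm_π]
  exact (Nat.prime_iff_prime_int.1 Nat.prime_five).irreducible

lemma exists_eq_mul_π_pow_mul_ρ_pow {S : CbrtTwo ℤ} (hS : Squarefree S) (h : S ∣ 5 * ρ) :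
    ∃ (η : (CbrtTwo ℤ)ˣ) (j k : Fin 2), S = (η : CbrtTwo ℤ) * (π ^ (j : ℕ) * ρ ^ (k : ℕ)) := by
  have hπρ : S ∣ π * ρ := (hS.dvd_pow_iff_dvd two_ne_zero).1
    (h.trans ⟨π, by rw [← π_mul_ρ]; ring⟩)
  obtain ⟨s, t, hs, ht, rfl⟩ := exists_dvd_and_dvd_of_dvd_mul hπρ
  obtain ⟨j, hj, hs⟩ := (dvd_prime_pow prime_π 1).1 (hs.trans (pow_one _).symm.dvd)
  obtain ⟨k, hk, ht⟩ := (dvd_prime_pow prime_ρ 1).1 (ht.trans (pow_one _).symm.dvd)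
  obtain ⟨η, hη⟩ := (hs.mul_mul ht).symm
  exact ⟨η, ⟨j, by omega⟩, ⟨k, by omega⟩, by rw [← hη, mul_comm]⟩

lemma toReal_pos_of_sq_eq {x y : CbrtTwo ℚ} (hx : x ≠ 0)
    (h : y ^ 2 = x * (x ^ 2 - 2 * ρ * x + 5 * ρ)) : 0 < toReal x := by
  have hρ : toReal ρ = 1 + 2 * toReal θ - toReal θ ^ 2 := by simp [ρ_eq, map_ofNat]
  have hρ0 : 0 < toReal ρ := by nlinarith [toReal_θ_gt, toReal_θ_lt]
  have hρ5 : toReal ρ < 5 := by nlinarith [toReal_θ_gt, toReal_θ_lt]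
  have h' := congrArg toReal h
  simp only [map_mul, map_add, map_sub, map_pow, map_ofNat] at h'
  have hq : 0 < toReal x ^ 2 - 2 * toReal ρ * toReal x + 5 * toReal ρ := by
    linarith [sq_nonneg (toReal x - toReal ρ), mul_pos hρ0 (sub_pos.2 hρ5)]
  refine lt_of_le_of_ne ?_ ((map_ne_zero toReal).2 hx).symm
  exact nonneg_of_mul_nonneg_left (h' ▸ sq_nonneg _) hq

theorem exists_eq_π_pow_mul_ρ_pow_mul_sq {x y : CbrtTwo ℚ} (hx : x ≠ 0)
    (h : y ^ 2 = x * (x ^ 2 - 2 * ρ * x + 5 * ρ)) :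
    ∃ (j k : Fin 2) (v : CbrtTwo ℚ), x = π ^ (j : ℕ) * ρ ^ (k : ℕ) * v ^ 2 := by
  have hpos := toReal_pos_of_sq_eq hx h
  replace h : y ^ 2 = x * (x ^ 2 + ι (-2 * ρ) * x + ι (5 * ρ)) := by
    simpa [← sub_eq_add_neg, map_ofNat] using h
  obtain ⟨S, v, hS, hSb, hxv⟩ := exists_squarefree_dvd_eq_mul_sq hx h
  obtain ⟨η, j, k, rfl⟩ := exists_eq_mul_π_pow_mul_ρ_pow hS hSb
  have hη : norm (η : CbrtTwo ℤ) = 1 := by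
    rw [hxv, map_mul, map_pow] at hpos
    have hN := norm_pos_iff.2 (pos_of_mul_pos_left hpos (sq_nonneg _))
    rw [norm_ι, Int.cast_pos, map_mul, map_mul, map_pow, map_pow, norm_π, norm_ρ] at hN
    have hN' := pos_of_mul_pos_left hN (by positivity)
    exact (Int.isUnit_iff.1 (isUnit_iff_isUnit_norm.1 η.isUnit)).resolve_right (by omega)
  obtain ⟨w, hw | hw⟩ := exists_eq_sq_or_eq_ε_mul_sq hη
  · exact ⟨j, k, ι w * v, by rw [hxv, hw]; simp; ring⟩
  · have hx' : x = ι (leadCoeff j k) * (ι w * v) ^ 2 := by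
      rw [hxv, hw, leadCoeff]
      simp only [map_mul, map_pow]
      ring
    have hwv : ι w * v ≠ 0 := by
      rintro h0
      simp [hx', h0] at hx
    have hlead : leadCoeff j k ≠ 0 := by
      rintro h0
      simp [hx', h0] at hx
    obtain ⟨u, w', n, huw, hn⟩ := exists_isCoprime_sq_eq_quartic hlead hwv
      (leadCoeff_mul_tailCoeff j k) hx' h
    exact absurd hn (sq_ne_leadCoeff_quartic j k huw)

/-! ### The local ring at the prime above two -/

lemma exists_odd_mul_eq_ι {x : CbrtTwo ℚ} {p q : CbrtTwo ℤ} (hq : ¬θ ∣ q) (h : x * ι q = ι p) :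
    ∃ m : ℤ, Odd m ∧ ∃ p : CbrtTwo ℤ, x * m = ι p := by
  refine ⟨norm q, odd_norm_iff.2 hq, p * adj q, ?_⟩
  have hn : ((norm q : ℤ) : CbrtTwo ℚ) = ι (q * adj q) := by
    rw [mul_adj, ← map_intCast ι]
    rfl
  rw [hn, map_mul, map_mul, ← h, mul_assoc]

/-- The local ring of `ℚ(∛2)` at the prime `θ`: the fractions with odd integral denominator. -/
def integersAtTwo : ValuationSubring (CbrtTwo ℚ) where
  carrier := {x | ∃ m : ℤ, Odd m ∧ ∃ p : CbrtTwo ℤ, x * m = ι p}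
  mul_mem' := by
    rintro x y ⟨m, hm, p, hp⟩ ⟨n, hn, q, hq⟩
    refine ⟨m * n, hm.mul hn, p * q, ?_⟩
    rw [map_mul, ← hp, ← hq, Int.cast_mul]
    ring
  one_mem' := ⟨1, odd_one, 1, by simp⟩
  add_mem' := by
    rintro x y ⟨m, hm, p, hp⟩ ⟨n, hn, q, hq⟩
    refine ⟨m * n, hm.mul hn, p * n + q * m, ?_⟩
    rw [map_add, map_mul, map_mul, ← hp, ← hq, map_intCast, map_intCast, Int.cast_mul]
    ring
  zero_mem' := ⟨1, odd_one, 0, by simp⟩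
  neg_mem' := by
    rintro x ⟨m, hm, p, hp⟩
    exact ⟨m, hm, -p, by rw [neg_mul, hp, map_neg]⟩
  mem_or_inv_mem' x := by
    obtain ⟨p, q, hpq, h⟩ := IsFractionRing.exists_reduced_fraction (A := CbrtTwo ℤ) x
    rw [← h]
    by_cases hq : θ ∣ (q : CbrtTwo ℤ)
    · have hp : ¬θ ∣ p := fun hp => prime_θ.not_isUnit (hpq hp hq)
      have hp₀ : ι p ≠ 0 :=
        (map_ne_zero_iff ι ι_injective).2 (by rintro rfl; exact hp (dvd_zero θ))
      right
      refine exists_odd_mul_eq_ι (q := p) (p := q) hp ?_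
      rw [IsFractionRing.mk'_eq_div, inv_div, div_mul_cancel₀ _ hp₀]
    · exact .inl (exists_odd_mul_eq_ι hq (IsLocalization.mk'_spec _ _ _))

local notation "𝒪" => integersAtTwo

/-- The prime element `θ` of `𝒪`. -/
def ϖ : 𝒪 := ⟨θ, 1, odd_one, θ, by simp [ι_θ]⟩

@[simp] lemma coe_ϖ : (ϖ : CbrtTwo ℚ) = θ := rfl

lemma ϖ_pow_three : ϖ ^ 3 = 2 := Subtype.ext θ_pow_three

lemma not_isUnit_ϖ : ¬IsUnit ϖ := by
  intro h
  obtain ⟨⟨z, m, hm, p, hp⟩, hz⟩ := isUnit_iff_exists_inv.1 h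
  have hz' : (θ : CbrtTwo ℚ) * z = 1 := congrArg Subtype.val hz
  have hθp : (θ * p : CbrtTwo ℤ) = m := by
    apply ι_injective
    rw [map_mul, ι_θ, ← hp, map_intCast]
    linear_combination (m : CbrtTwo ℚ) * hz'
  have h₂ : (2 : ℤ) ∣ m := θ_dvd_iff.1 (hθp ▸ dvd_mul_right θ p)
  exact Int.not_even_iff_odd.2 hm (even_iff_two_dvd.2 h₂)

lemma ϖ_dvd_or_ϖ_dvd_sub_one (z : 𝒪) : ϖ ∣ z ∨ ϖ ∣ z - 1 := by
  have key : ∀ z : 𝒪, ∀ m : ℤ, Odd m → ∀ p : CbrtTwo ℤ, θ ∣ p → z * (m : CbrtTwo ℚ) = ι p →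
      ϖ ∣ z := by
    rintro z m hm _ ⟨p, rfl⟩ h
    have hm₀ : (m : CbrtTwo ℚ) ≠ 0 := Int.cast_ne_zero.2 (by rintro rfl; simp at hm)
    refine ⟨⟨ι p / m, m, hm, p, div_mul_cancel₀ _ hm₀⟩, Subtype.ext ?_⟩
    rw [map_mul, ι_θ] at h
    push_cast
    rw [coe_ϖ, mul_div_assoc', eq_div_iff hm₀, h]
  obtain ⟨m, hm, p, hp⟩ := z.2
  by_cases hθ : θ ∣ p
  · exact .inl (key z m hm p hθ hp)
  · refine .inr (key (z - 1) m hm (p - m) (θ_dvd_sub hθ ?_) ?_)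
    · simpa [θ_dvd_iff, ← even_iff_two_dvd] using hm
    · rw [map_sub, map_intCast, ← hp]
      exact sub_one_mul _ _

lemma mem_maximalIdeal_iff {z : 𝒪} : z ∈ maximalIdeal 𝒪 ↔ ϖ ∣ z := by
  have hϖ : ϖ ∈ maximalIdeal 𝒪 := not_isUnit_ϖ
  refine ⟨fun hz => (ϖ_dvd_or_ϖ_dvd_sub_one z).resolve_right fun h => ?_,
    fun h => Ideal.mem_of_dvd _ h hϖ⟩
  refine (Ideal.ne_top_iff_one _).1 (Ideal.IsPrime.ne_top' (I := maximalIdeal 𝒪)) ?_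
  simpa using sub_mem hz (Ideal.mem_of_dvd _ h hϖ)

lemma exists_not_two_pow_dvd {z : 𝒪} (hz : z ≠ 0) : ∃ n : ℕ, ¬2 ^ n ∣ z := by
  obtain ⟨m, hm, p, hp⟩ := z.2
  have hN : norm p ≠ 0 := by
    rintro h₀
    rw [norm_int_eq_zero_iff.1 h₀, map_zero] at hp
    exact hz (Subtype.ext ((mul_eq_zero.1 hp).resolve_right
      (Int.cast_ne_zero.2 (by rintro rfl; simp at hm))))
  obtain ⟨n, hn⟩ := Int.finiteMultiplicity_iff.2 ⟨show (2 : ℤ).natAbs ≠ 1 by decide, hN⟩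
  refine ⟨n + 1, ?_⟩
  rintro ⟨y, rfl⟩
  obtain ⟨m', hm', p', hp'⟩ := y.2
  have hp₂ : (2 ^ (n + 1) * (y : CbrtTwo ℚ)) * m = ι p := hp
  have hpp : p * m' = 2 ^ (n + 1) * (p' * m) := by
    apply ι_injective
    rw [map_mul, map_mul, map_mul, map_pow, map_intCast, map_intCast, ← hp₂, ← hp', map_ofNat]
    ring
  have hnorm := congrArg norm hpp
  rw [map_mul, map_mul, map_pow, show norm (m' : CbrtTwo ℤ) = m' ^ 3 by simp [norm_apply],
    show norm (2 : CbrtTwo ℤ) = 2 ^ 3 by simp [norm_apply]] at hnorm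
  have hcop : IsCoprime (2 ^ (n + 1)) (m' ^ 3) :=
    (hm'.elim fun k hk => ⟨-k, 1, by rw [hk]; ring⟩ : IsCoprime 2 m').pow
  refine hn (hcop.dvd_of_dvd_mul_right (hnorm ▸ Dvd.dvd.mul_right ?_ _))
  exact pow_dvd_pow_of_dvd (dvd_pow_self 2 three_ne_zero) _

lemma one_add_two_mul_c_ne_zero (z : 𝒪) : 1 + 2 * (z : CbrtTwo ℚ).c ≠ 0 := by
  obtain ⟨m, hm, p, hp⟩ := z.2
  intro h
  have hc : (z : CbrtTwo ℚ).c * m = p.c := by simpa using congrArg c hp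
  have : m + 2 * p.c = 0 := by
    have : (m + 2 * p.c : ℚ) = 0 := by linear_combination m * h - 2 * hc
    exact_mod_cast this
  obtain ⟨k, rfl⟩ := hm
  omega

open twoTorsionCurve

/-! ### Descent through multiplication by two -/

lemma one_add_θ_sq_mul_ρ {R : Type*} [CommRing R] : ((1 + θ ^ 2) * ρ : CbrtTwo R) = 5 := by
  rw [← π_eq, π_mul_ρ]

/-- The prime element `ρ` above five as an element of `𝒪`. -/
def ϱ : 𝒪 := ⟨ρ, 1, odd_one, ρ, by simp⟩

/-- The elliptic curve `y² = x(x² - 2ρx + 5ρ)` over `ℚ(∛2)`. -/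
noncomputable abbrev E : Affine (CbrtTwo ℚ) :=
  twoTorsionCurve ((-2 * ϱ : 𝒪) : CbrtTwo ℚ) (5 * ϱ : 𝒪)

lemma equation_E_iff {x y : CbrtTwo ℚ} :
    E.Equation x y ↔ y ^ 2 = x * (x ^ 2 - 2 * ρ * x + 5 * ρ) := by
  rw [twoTorsionCurve.equation_iff, show ((-2 * ϱ : 𝒪) : CbrtTwo ℚ) = -2 * ρ from rfl,
    show ((5 * ϱ : 𝒪) : CbrtTwo ℚ) = 5 * ρ from rfl, neg_mul, neg_mul, ← sub_eq_add_neg]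

lemma θ_ne_zero : (θ : CbrtTwo ℚ) ≠ 0 := fun h => by
  have := θ_pow_three (R := ℚ)
  simp [h] at this

lemma π_ne_zero : (π : CbrtTwo ℚ) ≠ 0 := fun h => by
  have := π_mul_ρ (R := ℚ)
  simp [h] at this

lemma ρ_ne_zero : (ρ : CbrtTwo ℚ) ≠ 0 := fun h => by
  have := π_mul_ρ (R := ℚ)
  simp [h] at this

lemma five_mul_ρ_ne_zero : ((5 * ϱ : 𝒪) : CbrtTwo ℚ) ≠ 0 :=
  mul_ne_zero (by norm_num : (5 : CbrtTwo ℚ) ≠ 0) ρ_ne_zero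

instance : E.IsElliptic := by
  refine isElliptic (mul_ne_zero (mul_ne_zero (by norm_num) (pow_ne_zero 2 five_mul_ρ_ne_zero)) ?_)
  have hdisc : (-2 * ρ) ^ 2 - 4 * (5 * ρ) = -(2 * ρ * θ : CbrtTwo ℚ) ^ 2 := by
    linear_combination 4 * ρ * one_add_θ_sq_mul_ρ (R := ℚ)
  change (-2 * ρ) ^ 2 - 4 * (5 * ρ) ≠ (0 : CbrtTwo ℚ)
  rw [hdisc]
  exact neg_ne_zero.2 (pow_ne_zero 2 (mul_ne_zero (mul_ne_zero two_ne_zero ρ_ne_zero) θ_ne_zero))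

theorem exists_add_self_eq_some_sq {v y : CbrtTwo ℚ} (hv : v ≠ 0) (h : E.Nonsingular (v ^ 2) y) :
    ∃ S : E.Point, S + S = .some _ _ h := by
  obtain ⟨n, rfl⟩ : ∃ n, y = v * n := ⟨y / v, (mul_div_cancel₀ y hv).symm⟩
  have hn : n ^ 2 = v ^ 4 - 2 * ρ * v ^ 2 + 5 * ρ :=
    mul_left_cancel₀ (pow_ne_zero 2 hv) (by linear_combination equation_E_iff.1 h.1)
  have h2θ : (2 * θ : CbrtTwo ℚ) ≠ 0 := mul_ne_zero two_ne_zero θ_ne_zero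
  obtain ⟨X, hX⟩ : ∃ X, 2 * v ^ 2 - 2 * ρ + 2 * n = 2 * θ * X :=
    ⟨_, (mul_div_cancel₀ _ h2θ).symm⟩
  have hXX' : 2 * θ * X * (2 * v ^ 2 - 2 * ρ - 2 * n) = -(2 * ρ * θ) ^ 2 := by
    linear_combination -(2 * v ^ 2 - 2 * ρ - 2 * n) * hX - 4 * hn +
      4 * ρ * one_add_θ_sq_mul_ρ (R := ℚ)
  have hX₀ : X ≠ 0 := by
    rintro rfl
    refine pow_ne_zero 2 (mul_ne_zero (mul_ne_zero two_ne_zero ρ_ne_zero) θ_ne_zero) ?_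
    linear_combination hXX'
  obtain ⟨g, rfl | rfl⟩ := exists_eq_sq_or_eq_neg_sq (y := v * θ * X) hX₀ <| by
    linear_combination θ * X / 2 * (-hn + (n + θ * X - v ^ 2 + ρ) / 2 * hX +
      ρ * one_add_θ_sq_mul_ρ (R := ℚ)) + (X ^ 3 - ρ ^ 2 * X) / 2 * θ_pow_three (R := ℚ)
  · have hg₀ : g ≠ 0 := ne_zero_pow two_ne_zero hX₀
    refine twoTorsionCurve.exists_add_self_eq_some (g := θ ^ 2 * g) two_ne_zero
      five_mul_ρ_ne_zero hv ?_ (mul_ne_zero (pow_ne_zero 2 θ_ne_zero) hg₀) h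
    change 2 * v ^ 2 + -2 * ρ + 2 * n = _
    linear_combination hX - θ * g ^ 2 * θ_pow_three (R := ℚ)
  · have hg₀ : g ≠ 0 := by
      rintro rfl
      simp at hX₀
    have hg : 2 * (-v) ^ 2 + ((-2 * ϱ : 𝒪) : CbrtTwo ℚ) + 2 * -n = (2 * ρ / (θ * g)) ^ 2 := by
      rw [div_pow, eq_div_iff (pow_ne_zero 2 (mul_ne_zero θ_ne_zero hg₀))]
      change (2 * (-v) ^ 2 + -2 * ρ + 2 * -n) * _ = _
      refine mul_left_cancel₀ h2θ ?_
      linear_combination -θ ^ 2 * hXX' + 4 * ρ ^ 2 * θ * θ_pow_three (R := ℚ)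
    obtain ⟨S, hS⟩ := twoTorsionCurve.exists_add_self_eq_some two_ne_zero five_mul_ρ_ne_zero
      (neg_ne_zero.2 hv) hg
      (div_ne_zero (mul_ne_zero two_ne_zero ρ_ne_zero) (mul_ne_zero θ_ne_zero hg₀))
      (by rwa [neg_sq, neg_mul_neg])
    exact ⟨S, hS.trans (by rw [Point.some.injEq]; exact ⟨neg_sq v, neg_mul_neg v n⟩)⟩

lemma nonsingular_T : E.Nonsingular 0 0 :=
  equation_iff_nonsingular.1 (equation_E_iff.2 (by ring))

/-- The point `(0, 0)` of order two. -/
def T : E.Point := .some 0 0 nonsingular_T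

lemma T_add_T : T + T = 0 := origin_add_origin nonsingular_T

lemma nonsingular_P : E.Nonsingular (5 * θ / 2) (5 * ρ / 2) := by
  refine equation_iff_nonsingular.1 (equation_E_iff.2 ?_)
  rw [ρ_eq]
  linear_combination (-25 / 4 * θ - 25 / 8) * θ_pow_three (R := ℚ)

/-- The point `(5θ/2, 5ρ/2)`; together with `T` it generates `E(ℚ(∛2))` modulo doubling. -/
noncomputable def P : E.Point := .some _ _ nonsingular_P

lemma some_eq_T {x y : CbrtTwo ℚ} (h : E.Nonsingular x y) (hx : x = 0) : .some x y h = T := by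
  subst hx
  rw [T, Point.some.injEq]
  exact ⟨rfl, y_eq_zero h.1⟩

lemma exists_eq_zsmul_T_add_add_self {x y : CbrtTwo ℚ} (h : E.Nonsingular x y) {j : ℕ}
    {v : CbrtTwo ℚ} (hv : x = π ^ j * v ^ 2) : ∃ (m : ℤ) (S : E.Point),
      .some x y h = m • T + (S + S) := by
  by_cases hx : x = 0
  · exact ⟨1, 0, by simp [some_eq_T h hx]⟩
  obtain ⟨k, rfl | rfl⟩ := j.even_or_odd'
  · obtain rfl : x = (π ^ k * v) ^ 2 := by linear_combination hv
    obtain ⟨S, hS⟩ := exists_add_self_eq_some_sq (ne_zero_pow two_ne_zero hx) h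
    exact ⟨0, S, by rw [hS, zero_zsmul T, zero_add]⟩
  · obtain ⟨x', y', h', hadd, hxx'⟩ := exists_some_add_origin h nonsingular_T hx
    have hv' : π ^ k * v ≠ 0 := by
      intro h₀
      exact hx (by linear_combination hv + π * (π ^ k * v) * h₀)
    obtain rfl : x' = (ρ / (π ^ k * v)) ^ 2 := by
      rw [div_pow, eq_div_iff (pow_ne_zero 2 hv')]
      apply mul_left_cancel₀ π_ne_zero
      have hxx' : x * x' = 5 * ρ := hxx'
      linear_combination hxx' - x' * hv - ρ * π_mul_ρ (R := ℚ)
    obtain ⟨S, hS⟩ := exists_add_self_eq_some_sq (div_ne_zero ρ_ne_zero hv') h'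
    exact ⟨-1, S, by rw [hS, ← hadd, neg_one_zsmul]; exact (neg_add_cancel_comm_assoc _ _).symm⟩

theorem exists_eq_zsmul_T_add_zsmul_P_add_add_self (R : E.Point) :
    ∃ (m n : ℤ) (S : E.Point), R = m • T + n • P + (S + S) := by
  rcases R with _ | ⟨x, y, h⟩
  · exact ⟨0, 0, 0, by simp; rfl⟩
  by_cases hx : x = 0
  · exact ⟨1, 0, 0, by simp [some_eq_T h hx]⟩
  obtain ⟨j, k, v, hv⟩ := exists_eq_π_pow_mul_ρ_pow_mul_sq hx (equation_E_iff.1 h.1)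
  have hv₀ : v ≠ 0 := by
    rintro rfl
    simp [hx] at hv
  obtain rfl | rfl := Fin.exists_fin_two.1 ⟨k, rfl⟩
  · obtain ⟨m, S, hS⟩ := exists_eq_zsmul_T_add_add_self h (j := j) (v := v) (by simpa using hv)
    exact ⟨m, 0, S, by simpa using hS⟩
  rw [Fin.val_one, pow_one] at hv
  by_cases hxP : x = 5 * θ / 2
  · subst hxP
    rcases some_eq_or_eq_neg h nonsingular_P with h' | h'
    · exact ⟨0, 1, 0, Eq.trans (b := P) h' (by simp)⟩
    · exact ⟨0, -1, 0, Eq.trans (b := -P) h' (by simp)⟩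
  obtain ⟨ℓ, n, x₃, h₃, hadd, -, -, hchord⟩ :=
    exists_some_add_some h nonsingular_P fun h => hxP h.1
  have hx₃ : x₃ * (π ^ (j + 1 : ℕ) * (ρ * v) ^ 2) = (θ * n) ^ 2 := by
    linear_combination θ ^ 2 * hchord.prod - 5 / 2 * x * x₃ * θ_pow_three (R := ℚ) +
      π ^ (j : ℕ) * ρ * v ^ 2 * x₃ * π_mul_ρ (R := ℚ) - 5 * x₃ * hv
  have hd : π ^ (j + 1 : ℕ) * (ρ * v) ≠ 0 :=
    mul_ne_zero (pow_ne_zero _ π_ne_zero) (mul_ne_zero ρ_ne_zero hv₀)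
  obtain ⟨m, S, hS⟩ := exists_eq_zsmul_T_add_add_self h₃ (j := j + 1)
    (v := θ * n / (π ^ (j + 1 : ℕ) * (ρ * v))) (by
      rw [div_pow, ← hx₃, mul_div_assoc', eq_div_iff (pow_ne_zero 2 hd)]
      ring)
  exact ⟨m, -1, S, by
    rw [add_right_comm, ← hS, ← hadd, neg_one_zsmul]; exact (add_neg_cancel_right _ _).symm⟩

/-! ### The kernel of reduction at the prime above two -/

lemma ϱ_eq : ϱ = 1 + 2 * ϖ - ϖ ^ 2 := Subtype.ext ρ_eq

lemma ϱ_sub_one : ϱ - 1 = ϖ ^ 2 * (ϖ ^ 2 - 1) := by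
  linear_combination ϱ_eq - ϖ * ϖ_pow_three

lemma exists_mul_eq_one {z : 𝒪} (hz : ϖ ∣ z - 1) : ∃ u, z * u = 1 := by
  simpa using exists_one_add_mul_eq_one (mem_maximalIdeal_iff.2 hz)

lemma not_ϖ_dvd_of_ϖ_dvd_sub_one {z : 𝒪} (hz : ϖ ∣ z - 1) : ¬ϖ ∣ z := fun h =>
  not_isUnit_ϖ (isUnit_of_dvd_one (by simpa using dvd_sub h hz))

lemma ϖ_sq_dvd_sub_one {x : 𝒪} {y : CbrtTwo ℚ} (h : E.Equation x y) (hx : ϖ ∣ x - 1) :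
    ϖ ^ 2 ∣ x - 1 := by
  have hx₀ : (x : CbrtTwo ℚ) ≠ 0 := by
    intro h₀
    obtain rfl : x = 0 := Subtype.ext h₀
    exact not_ϖ_dvd_of_ϖ_dvd_sub_one hx (dvd_zero ϖ)
  obtain ⟨j, k, v, hv⟩ := exists_eq_π_pow_mul_ρ_pow_mul_sq hx₀ (equation_E_iff.1 h)
  set c : 𝒪 := (1 + ϖ ^ 2) ^ (j : ℕ) * ϱ ^ (k : ℕ)
  have hc₁ : ϖ ^ 2 ∣ c - 1 := by
    simpa using dvd_mul_sub_mul ((dvd_of_eq (by ring)).trans (sub_dvd_pow_sub_pow (1 + ϖ ^ 2) 1 j))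
      ((Dvd.intro _ ϱ_sub_one.symm).trans (sub_dvd_pow_sub_pow ϱ 1 k))
  obtain ⟨u, hu⟩ := exists_mul_eq_one ((dvd_pow_self ϖ two_ne_zero).trans hc₁)
  have hcu : π ^ (j : ℕ) * ρ ^ (k : ℕ) * (u : CbrtTwo ℚ) = 1 := by
    rw [π_eq]
    exact congrArg Subtype.val hu
  obtain ⟨v, rfl⟩ := exists_coe_eq_of_sq_eq (v := v) (m := x * u) (by
    push_cast
    linear_combination -(u : CbrtTwo ℚ) * hv - v ^ 2 * hcu)
  have hxv : x = c * v ^ 2 := Subtype.ext <| by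
    rw [hv, π_eq]
    rfl
  have hv₁ : ϖ ∣ v - 1 := (ϖ_dvd_or_ϖ_dvd_sub_one v).resolve_left fun hv =>
    not_ϖ_dvd_of_ϖ_dvd_sub_one hx (hxv ▸ (hv.trans (dvd_pow_self v two_ne_zero)).mul_left c)
  obtain ⟨s, hs⟩ := hv₁
  have hv₂ : ϖ ^ 2 ∣ v ^ 2 - 1 :=
    ⟨s ^ 2 + ϖ ^ 2 * s, by linear_combination (v + 1 + ϖ * s) * hs - ϖ * s * ϖ_pow_three⟩
  simpa [hxv] using dvd_mul_sub_mul hc₁ hv₂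

/-- The points of `E` that reduce to `0` at `θ`. -/
def E₁ : AddSubgroup E.Point where
  carrier := {R | ∃ t w : 𝒪, HasFormalCoords R t w}
  zero_mem' := ⟨0, 0, .zero⟩
  add_mem' := by
    rintro R₁ R₂ ⟨t₁, w₁, h₁⟩ ⟨t₂, w₂, h₂⟩
    obtain ⟨m, w, h⟩ := h₁.exists_add h₂ ⟨-ϱ, by ring⟩
    exact ⟨_, w, h⟩
  neg_mem' := by
    rintro R ⟨t, w, h⟩
    exact ⟨-t, -w, h.neg⟩

lemma T_not_mem_E₁ : T ∉ E₁ := by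
  rintro ⟨t, w, -, ⟨h, -⟩ | ⟨x, y, hxy, h, -, hy⟩⟩
  · cases h
  · obtain ⟨rfl, rfl⟩ := Point.some.inj h
    simp at hy

lemma some_mem_E₁ {x y : CbrtTwo ℚ} (h : E.Nonsingular x y) {g : 𝒪} (hg : ϖ ∣ g)
    (hx : x * g = 1) : .some x y h ∈ E₁ :=
  HasFormalCoords.exists_of_mul_eq_one (mem_maximalIdeal_iff.2 hg) hx

lemma exists_sq_eq_θ_sq_mul {x : 𝒪} {y : CbrtTwo ℚ} (h : E.Equation x y) (hx : ϖ ^ 2 ∣ x - 1) :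
    ∃ η : 𝒪, y ^ 2 = θ ^ 2 * (η : CbrtTwo ℚ) := by
  obtain ⟨s, hs⟩ : ϖ ^ 2 ∣ x - ϱ := by
    simpa using dvd_sub hx (Dvd.intro _ ϱ_sub_one.symm)
  have hs' : (x : CbrtTwo ℚ) - ρ = θ ^ 2 * (s : CbrtTwo ℚ) := congrArg Subtype.val hs
  refine ⟨x * (ϱ ^ 2 + ϖ ^ 2 * s ^ 2), ?_⟩
  change _ = θ ^ 2 * ((x : CbrtTwo ℚ) * (ρ ^ 2 + θ ^ 2 * (s : CbrtTwo ℚ) ^ 2))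
  linear_combination equation_E_iff.1 h - x * ρ * one_add_θ_sq_mul_ρ (R := ℚ) +
    x * (x - ρ + θ ^ 2 * s) * hs'

lemma exists_sq_sub_five_mul_ϱ_eq {x : 𝒪} (hx : ϖ ^ 2 ∣ x - 1) :
    ∃ κ, ϖ ∣ κ - 1 ∧ x ^ 2 - 5 * ϱ = ϖ ^ 2 * κ := by
  obtain ⟨z, hz⟩ := hx
  refine ⟨1 + ϖ * (ϖ * z ^ 2 + ϖ ^ 2 * z + 2 * ϖ ^ 2 - 5 * ϖ - ϖ ^ 3), by simp, ?_⟩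
  linear_combination (x + 1 + ϖ ^ 2 * z) * hz - 5 * ϱ_sub_one +
    (ϖ ^ 3 + 2 - 2 * ϖ ^ 2 - ϖ ^ 2 * z) * ϖ_pow_three

lemma add_self_mem_E₁_of_ϖ_dvd_sub_one {x : 𝒪} {y : CbrtTwo ℚ} (h : E.Nonsingular x y)
    (hx : ϖ ∣ x - 1) : Point.some _ _ h + .some _ _ h ∈ E₁ := by
  by_cases hy : y = 0
  · rw [Point.add_self_of_Y_eq (by rw [negY_eq, hy, neg_zero])]
    exact zero_mem _
  obtain ⟨x₃, y₃, h₃, hadd, hx₃⟩ := exists_some_add_self h (mul_ne_zero two_ne_zero hy)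
  have hx₂ := ϖ_sq_dvd_sub_one h.1 hx
  obtain ⟨η, hηy⟩ := exists_sq_eq_θ_sq_mul h.1 hx₂
  obtain ⟨κ, hκ, hκx⟩ := exists_sq_sub_five_mul_ϱ_eq hx₂
  obtain ⟨κ', hκ'⟩ := exists_mul_eq_one hκ
  have hκx' : (x : CbrtTwo ℚ) ^ 2 - ((5 * ϱ : 𝒪) : CbrtTwo ℚ) = θ ^ 2 * (κ : CbrtTwo ℚ) :=
    congrArg Subtype.val hκx
  have hκ₁ : (κ * κ' : CbrtTwo ℚ) = 1 := congrArg Subtype.val hκ'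
  rw [hadd]
  refine some_mem_E₁ h₃ (g := ϖ ^ 4 * η * κ' ^ 2) ?_ ?_
  · exact (((dvd_pow_self ϖ four_ne_zero).mul_right η).mul_right _)
  · change x₃ * (θ ^ 4 * (η : CbrtTwo ℚ) * (κ' : CbrtTwo ℚ) ^ 2) = 1
    rw [hκx', mul_pow, hηy] at hx₃
    have hηκ : x₃ * (θ ^ 4 * (η : CbrtTwo ℚ)) = (κ : CbrtTwo ℚ) ^ 2 := by
      refine mul_left_cancel₀ (pow_ne_zero 4 θ_ne_zero) ?_
      linear_combination hx₃ + x₃ * η * θ ^ 2 * (θ ^ 3 + 2) * θ_pow_three (R := ℚ)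
    linear_combination κ' ^ 2 * hηκ + (κ * κ' + 1) * hκ₁

lemma add_self_mem_E₁_of_mem {S : E.Point} (hS : S ∈ E₁ ∨ S + T ∈ E₁) : S + S ∈ E₁ := by
  rcases hS with hS | hS
  · exact add_mem hS hS
  · have h := add_mem hS hS
    rwa [add_add_add_comm, T_add_T, add_zero] at h

theorem add_self_mem_E₁ (S : E.Point) : S + S ∈ E₁ := by
  rcases S with _ | ⟨x, y, h⟩
  · exact add_mem (zero_mem _) (zero_mem _)
  obtain ⟨x, rfl⟩ | ⟨g, hg, hxg⟩ := exists_coe_eq_or_exists_mul_eq_one 𝒪 x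
  swap
  · exact add_self_mem_E₁_of_mem (.inl (some_mem_E₁ h (mem_maximalIdeal_iff.1 hg) hxg))
  rcases ϖ_dvd_or_ϖ_dvd_sub_one x with hx | hx
  swap
  · exact add_self_mem_E₁_of_ϖ_dvd_sub_one h hx
  by_cases hx₀ : (x : CbrtTwo ℚ) = 0
  · rw [some_eq_T h hx₀, T_add_T]
    exact zero_mem _
  obtain ⟨x', y', h', hadd, hxx'⟩ := exists_some_add_origin h nonsingular_T hx₀
  refine add_self_mem_E₁_of_mem (.inr ?_)
  rw [T, hadd]
  obtain ⟨x', rfl⟩ | ⟨g, hg, hxg⟩ := exists_coe_eq_or_exists_mul_eq_one 𝒪 x'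
  · exfalso
    have hxx' : x * x' = 5 * ϱ := Subtype.ext hxx'
    refine not_ϖ_dvd_of_ϖ_dvd_sub_one (z := 5 * ϱ) ?_ (hxx' ▸ hx.mul_right x')
    exact ⟨ϖ * (2 * ϖ + 5 * (ϖ ^ 2 - 1)), by
      linear_combination 5 * ϱ_sub_one - 2 * ϖ_pow_three⟩
  · exact some_mem_E₁ h' (mem_maximalIdeal_iff.1 hg) hxg

/-! ### The parameters of the points in the kernel of reduction -/

/-- The group `1 + 2𝒪` of higher units, as a submonoid of `𝒪`. -/
def oneModTwo : Submonoid 𝒪 where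
  carrier := {z | 2 ∣ z - 1}
  one_mem' := by simp
  mul_mem' {z z'} hz hz' := by simpa using dvd_mul_sub_mul hz hz'

lemma one_add_mem_oneModTwo {z : 𝒪} (hz : 2 ∣ z) : 1 + z ∈ oneModTwo := by
  change 2 ∣ 1 + z - 1
  rwa [add_sub_cancel_left]

lemma ϖ_ne_zero : ϖ ≠ 0 := fun h => θ_ne_zero (congrArg Subtype.val h)

lemma ϖ_dvd_two : ϖ ∣ 2 := Dvd.intro_left (ϖ ^ 2) ϖ_pow_three

lemma exists_mem_oneModTwo_mul_eq_one {z : 𝒪} (hz : z ∈ oneModTwo) :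
    ∃ u ∈ oneModTwo, z * u = 1 := by
  obtain ⟨u, hu⟩ := exists_mul_eq_one (ϖ_dvd_two.trans hz)
  refine ⟨u, ?_, hu⟩
  obtain ⟨c, hc⟩ := hz
  exact ⟨-(c * u), by linear_combination hu - u * hc⟩

lemma exists_hasFormalCoords_P : ∃ u w : 𝒪, ϱ * u = 1 ∧ HasFormalCoords P (ϖ * u) w := by
  obtain ⟨u, hu⟩ := exists_mul_eq_one ((dvd_pow_self ϖ two_ne_zero).trans
    (Dvd.intro _ ϱ_sub_one.symm))
  obtain ⟨f, hf⟩ := exists_mul_eq_one (z := 5) ⟨2 * ϖ ^ 2, by linear_combination -2 * ϖ_pow_three⟩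
  have hu' : ρ * (u : CbrtTwo ℚ) = 1 := congrArg Subtype.val hu
  have hf' : 5 * (f : CbrtTwo ℚ) = 1 := congrArg Subtype.val hf
  refine ⟨u, 2 * f * u, hu, mem_maximalIdeal_iff.2 (dvd_mul_right ϖ u),
    .inr ⟨_, _, nonsingular_P, rfl, ?_, ?_⟩⟩
  · change 5 * θ / 2 * (2 * (f : CbrtTwo ℚ) * (u : CbrtTwo ℚ)) = θ * (u : CbrtTwo ℚ)
    linear_combination θ * u * hf'
  · change 5 * ρ / 2 * (2 * (f : CbrtTwo ℚ) * (u : CbrtTwo ℚ)) = 1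
    linear_combination ρ * u * hf' + hu'

lemma P_mem_E₁ : P ∈ E₁ :=
  let ⟨_, w, _, h⟩ := exists_hasFormalCoords_P
  ⟨_, w, h⟩

lemma zsmul_T_eq (m : ℤ) : m • T = 0 ∨ m • T = T := by
  have hT (k : ℤ) : (2 * k) • T = 0 := by rw [mul_comm, mul_zsmul, two_zsmul, T_add_T, zsmul_zero]
  rcases Int.even_or_odd' m with ⟨k, rfl | rfl⟩
  · exact .inl (hT k)
  · exact .inr (by rw [add_zsmul, hT, zero_add, one_zsmul])

lemma exists_mem_E₁_add_self_eq (S : E.Point) : ∃ S' ∈ E₁, S' + S' = S + S := by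
  obtain ⟨m, n, S₀, hS⟩ := exists_eq_zsmul_T_add_zsmul_P_add_add_self S
  refine ⟨n • P + (S₀ + S₀), add_mem (zsmul_mem P_mem_E₁ n) (add_self_mem_E₁ S₀), ?_⟩
  have hT : m • T + m • T = 0 := by rw [← zsmul_add, T_add_T, zsmul_zero]
  rw [← zero_add (_ + _), ← hT, hS]
  abel

theorem exists_eq_add_self_or_eq_P_add_add_self {R : E.Point} (hR : R ∈ E₁) :
    ∃ S ∈ E₁, R = S + S ∨ R = P + (S + S) := by
  obtain ⟨m, n, S₀, h⟩ := exists_eq_zsmul_T_add_zsmul_P_add_add_self R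
  obtain ⟨S, hS, hSS⟩ := exists_mem_E₁_add_self_eq S₀
  have hmT : m • T = 0 := (zsmul_T_eq m).resolve_right fun hT => T_not_mem_E₁ <| by
    rw [← hT, show m • T = R - n • P - (S + S) by rw [h, hSS]; abel]
    exact sub_mem (sub_mem hR (zsmul_mem P_mem_E₁ n)) (add_mem hS hS)
  rw [hmT, zero_add, ← hSS] at h
  rcases Int.even_or_odd' n with ⟨k, rfl | rfl⟩
  · exact ⟨k • P + S, add_mem (zsmul_mem P_mem_E₁ k) hS, .inl (by rw [h]; module)⟩
  · exact ⟨k • P + S, add_mem (zsmul_mem P_mem_E₁ k) hS, .inr (by rw [h]; module)⟩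

theorem exists_eq_two_pow_mul {u w₀ : 𝒪} (hu : ϱ * u = 1)
    (hP : HasFormalCoords P (ϖ * u) w₀) {n : ℕ} {R : E.Point} {t w : 𝒪}
    (h : HasFormalCoords R t w) (hn : ¬2 ^ n ∣ t) :
    ∃ k : ℕ, ∃ v ∈ oneModTwo, t = 2 ^ k * (ϖ * u) * v := by
  have ha : (2 : 𝒪) ∣ -2 * ϱ := ⟨-ϱ, by ring⟩
  induction n generalizing R t w with
  | zero => simp at hn
  | succ n ih =>
    obtain ⟨S, ⟨s, ws, hs⟩, hR⟩ := exists_eq_add_self_or_eq_P_add_add_self ⟨t, w, h⟩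
    obtain ⟨m, w', h₂⟩ := hs.exists_add hs ha
    rcases hR with hR | hR
    · have ht := (h.unique (hR ▸ h₂)).1
      obtain ⟨k, v, hv, rfl⟩ := ih hs fun ⟨c, hc⟩ => hn ⟨c * (1 + 2 * m), by rw [ht, hc]; ring⟩
      exact ⟨k + 1, v * (1 + 2 * m), mul_mem hv (one_add_mem_oneModTwo (dvd_mul_right 2 m)),
        by rw [ht]; ring⟩
    · obtain ⟨m', w'', h₃⟩ := hP.exists_add h₂ ha
      obtain ⟨s', rfl⟩ := mem_maximalIdeal_iff.1 hs.1
      refine ⟨0, (1 + 2 * (ϱ * s' * (1 + 2 * m))) * (1 + 2 * m'),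
        mul_mem (one_add_mem_oneModTwo (dvd_mul_right ..))
          (one_add_mem_oneModTwo (dvd_mul_right ..)), ?_⟩
      rw [(h.unique (hR ▸ h₃)).1]
      linear_combination -2 * ϖ * s' * (1 + 2 * m) * (1 + 2 * m') * hu

/-! ### Chabauty's argument in the residue class of `P` -/

lemma exists_eq_of_mul_add_one_eq {c h : 𝒪} (hc : c * (c + 1) = 2 * h) (hϖ : ϖ ∣ c) :
    ∃ v ∈ oneModTwo, c = 2 * h * v := by
  obtain ⟨u, hu⟩ := exists_mul_eq_one (z := c + 1) (by simpa using hϖ)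
  refine ⟨1 + 2 * (-(h * u ^ 2)), one_add_mem_oneModTwo (dvd_mul_right ..), ?_⟩
  linear_combination (2 * h - c * (1 - 2 * h * u)) * hu + u * (1 - 2 * h * u) * hc

lemma exists_eq_one_add_of_sq_eq {x h : 𝒪} (hx : x ^ 2 = 1 + 8 * h) :
    ∃ v ∈ oneModTwo, x = 1 + 4 * h * v ∨ x = -(1 + 4 * h * v) := by
  obtain ⟨c, hc⟩ | ⟨g, hg, hxg⟩ := exists_coe_eq_or_exists_mul_eq_one 𝒪 ((x - 1) / 2 : CbrtTwo ℚ)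
  swap
  · exfalso
    have hx' : (x : CbrtTwo ℚ) ^ 2 = 1 + 8 * (h : CbrtTwo ℚ) := congrArg Subtype.val hx
    refine hg (.of_mul_eq_one (2 * h * g - 1) (Subtype.ext ?_))
    change (g : CbrtTwo ℚ) * (2 * (h : CbrtTwo ℚ) * (g : CbrtTwo ℚ) - 1) = 1
    linear_combination ((x - 1) / 2 * g + 1 + g) * hxg - (g : CbrtTwo ℚ) ^ 2 / 4 * hx'
  have hxc : x = 1 + 2 * c := Subtype.ext <| by
    change (x : CbrtTwo ℚ) = 1 + 2 * (c : CbrtTwo ℚ)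
    rw [hc]
    ring
  subst hxc
  have hcc : c * (c + 1) = 2 * h := Subtype.ext <| by
    change (c : CbrtTwo ℚ) * ((c : CbrtTwo ℚ) + 1) = 2 * (h : CbrtTwo ℚ)
    have hx' : (1 + 2 * (c : CbrtTwo ℚ)) ^ 2 = 1 + 8 * (h : CbrtTwo ℚ) := congrArg Subtype.val hx
    linear_combination hx' / 4
  rcases ϖ_dvd_or_ϖ_dvd_sub_one c with hϖ | hϖ
  · obtain ⟨v, hv, rfl⟩ := exists_eq_of_mul_add_one_eq hcc hϖ
    exact ⟨v, hv, .inl (by ring)⟩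
  · obtain ⟨v, hv, h'⟩ := exists_eq_of_mul_add_one_eq (c := -(c + 1)) (h := h)
      (by linear_combination hcc)
      (dvd_neg.2 ((dvd_add hϖ ϖ_dvd_two).trans (dvd_of_eq (by ring))))
    exact ⟨v, hv, .inr (by linear_combination -2 * h')⟩

lemma exists_sq_sub_sq_eq {g : 𝒪} {y : CbrtTwo ℚ}
    (h : E.Nonsingular (5 * θ / 2 - 4 * θ * ρ * (g : CbrtTwo ℚ)) y) {s ws : 𝒪}
    (hs : HasFormalCoords P s ws) :
    ∃ t w, HasFormalCoords (.some _ _ h) t w ∧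
      ∃ v ∈ oneModTwo, t ^ 2 - s ^ 2 = 8 * ϖ ^ 2 * ϱ * g * v := by
  obtain ⟨f, hfm, hf⟩ := exists_mem_oneModTwo_mul_eq_one (z := 1 + 2 * 2)
    (one_add_mem_oneModTwo (dvd_mul_right ..))
  obtain ⟨v, hvm, hv⟩ := exists_mem_oneModTwo_mul_eq_one (z := 1 + 2 * (-4 * ϱ * g * f))
    (one_add_mem_oneModTwo (dvd_mul_right ..))
  have hf' : (1 + 2 * 2) * (f : CbrtTwo ℚ) = 1 := congrArg Subtype.val hf
  have hv' : (1 + 2 * (-4 * ρ * (g : CbrtTwo ℚ) * (f : CbrtTwo ℚ))) * (v : CbrtTwo ℚ) = 1 :=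
    congrArg Subtype.val hv
  have hx : (5 * θ / 2 - 4 * θ * ρ * (g : CbrtTwo ℚ)) * ((ϖ ^ 2 * f * v : 𝒪) : CbrtTwo ℚ) = 1 := by
    change _ * (θ ^ 2 * (f : CbrtTwo ℚ) * (v : CbrtTwo ℚ)) = 1
    linear_combination (5 / 2 - 4 * ρ * (g : CbrtTwo ℚ)) * f * v * θ_pow_three (R := ℚ) +
      v * hf' + hv'
  obtain ⟨t, w, ht⟩ := HasFormalCoords.exists_of_mul_eq_one (h := h)
    (mem_maximalIdeal_iff.2 (((dvd_pow_self ϖ two_ne_zero).mul_right f).mul_right v)) hx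
  have ht' := ht.sq_mul_eq hx
  have hs' := HasFormalCoords.sq_mul_eq (g := ϖ ^ 2 * f) hs <| by
    change (5 * θ / 2) * (θ ^ 2 * (f : CbrtTwo ℚ)) = 1
    linear_combination 5 / 2 * f * θ_pow_three (R := ℚ) + hf'
  have hdvd (z z' : 𝒪) : 2 ∣ (ϖ ^ 2 * z) * (ϖ ^ 2 * z') :=
    ⟨ϖ * z * z', by linear_combination ϖ * z * z' * ϖ_pow_three⟩
  have hmem (z : 𝒪) : 1 + -2 * ϱ * (ϖ ^ 2 * z) + 5 * ϱ * (ϖ ^ 2 * z) ^ 2 ∈ oneModTwo := by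
    rw [add_assoc, pow_two (ϖ ^ 2 * z)]
    exact one_add_mem_oneModTwo (dvd_add ⟨-ϱ * (ϖ ^ 2 * z), by ring⟩ ((hdvd z z).mul_left _))
  have hmem' : 1 + -5 * ϱ * ((ϖ ^ 2 * (f * v)) * (ϖ ^ 2 * f)) ∈ oneModTwo :=
    one_add_mem_oneModTwo ((hdvd (f * v) f).mul_left _)
  obtain ⟨d, hdm, hd⟩ := exists_mem_oneModTwo_mul_eq_one (mul_mem (hmem (f * v)) (hmem f))
  refine ⟨t, w, ht, _, mul_mem (mul_mem (mul_mem (mul_mem hfm hfm) hvm) hmem') hdm, ?_⟩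
  linear_combination -(t ^ 2 - s ^ 2) * hd +
    d * (1 + -2 * ϱ * (ϖ ^ 2 * f) + 5 * ϱ * (ϖ ^ 2 * f) ^ 2) * ht' -
    d * (1 + -2 * ϱ * (ϖ ^ 2 * (f * v)) + 5 * ϱ * (ϖ ^ 2 * (f * v)) ^ 2) * hs' +
    d * (1 + -5 * ϱ * ((ϖ ^ 2 * (f * v)) * (ϖ ^ 2 * f))) * ϖ ^ 2 * f * hv

lemma four_mul_ϱ_mul_ne {q : ℚ} {g v : 𝒪} {k : ℕ} (hg : (g : CbrtTwo ℚ) = q)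
    (hv : v ∈ oneModTwo) : 4 * ϱ * g ≠ 2 ^ k * v := by
  intro h
  obtain ⟨c, hc⟩ := hv
  have h' : 4 * ρ * (g : CbrtTwo ℚ) = 2 ^ k * (v : CbrtTwo ℚ) := congrArg Subtype.val h
  have hc' : (v : CbrtTwo ℚ) - 1 = 2 * (c : CbrtTwo ℚ) := congrArg Subtype.val hc
  have hq : ((20 * q / 2 ^ k : ℚ) : CbrtTwo ℚ) =
      1 + θ ^ 2 + 2 * (((1 + ϖ ^ 2) * c : 𝒪) : CbrtTwo ℚ) := by
    change _ = 1 + θ ^ 2 + 2 * ((1 + θ ^ 2) * (c : CbrtTwo ℚ))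
    push_cast
    rw [← hg, div_eq_iff (pow_ne_zero k two_ne_zero)]
    linear_combination (1 + θ ^ 2) * h' + 2 ^ k * (1 + θ ^ 2) * hc' -
      4 * (g : CbrtTwo ℚ) * one_add_θ_sq_mul_ρ (R := ℚ)
  refine one_add_two_mul_c_ne_zero ((1 + ϖ ^ 2) * c) ?_
  generalize (1 + ϖ ^ 2) * c = z at hq ⊢
  have hz : (1 + θ ^ 2 + 2 * (z : CbrtTwo ℚ)).c = 0 := by rw [← hq, ratCast_c]
  simpa [pow_two, two_mul] using hz

lemma ϱ_sq_mem_oneModTwo : ϱ ^ 2 ∈ oneModTwo :=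
  ⟨ϖ ^ 2 * (ϖ ^ 2 - 1) + ϖ * (ϖ ^ 2 - 1) ^ 2, by
    linear_combination (ϱ + 1 + ϖ ^ 2 * (ϖ ^ 2 - 1)) * ϱ_sub_one +
      ϖ * (ϖ ^ 2 - 1) ^ 2 * ϖ_pow_three⟩

lemma exists_hasFormalCoords_mul_one_add {g u w₀ : 𝒪} {y : CbrtTwo ℚ} (hu : ϱ * u = 1)
    (hP : HasFormalCoords P (ϖ * u) w₀)
    (h : E.Nonsingular (5 * θ / 2 - 4 * θ * ρ * (g : CbrtTwo ℚ)) y) :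
    ∃ R : E.Point, ∃ v ∈ oneModTwo, ∃ w,
      HasFormalCoords R (ϖ * u * (1 + 4 * (ϱ * g * v))) w := by
  obtain ⟨t, w, ht, v, hv, htv⟩ := exists_sq_sub_sq_eq h hP
  obtain ⟨t', rfl⟩ := mem_maximalIdeal_iff.1 ht.1
  obtain ⟨v', hv', hx⟩ := exists_eq_one_add_of_sq_eq (x := ϱ * t') (h := ϱ * g * (ϱ ^ 2 * v)) <| by
    have hϖ : t' ^ 2 - u ^ 2 = 8 * ϱ * g * v :=
      mul_left_cancel₀ (pow_ne_zero 2 ϖ_ne_zero) (by linear_combination htv)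
    linear_combination ϱ ^ 2 * hϖ + (ϱ * u + 1) * hu
  have hm := mul_mem (mul_mem ϱ_sq_mem_oneModTwo hv) hv'
  rcases hx with hx | hx
  · refine ⟨.some _ _ h, _, hm, w, ?_⟩
    convert ht using 1
    linear_combination ϖ * t' * hu - ϖ * u * hx
  · refine ⟨-.some _ _ h, _, hm, -w, ?_⟩
    convert ht.neg using 1
    linear_combination -ϖ * t' * hu + ϖ * u * hx

theorem eq_zero_of_nonsingular {q : ℚ} {g : 𝒪} {y : CbrtTwo ℚ} (hg : (g : CbrtTwo ℚ) = q)
    (h : E.Nonsingular (5 * θ / 2 - 4 * θ * ρ * (g : CbrtTwo ℚ)) y) : q = 0 := by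
  by_contra hq
  obtain ⟨u, w₀, hu, hP⟩ := exists_hasFormalCoords_P
  obtain ⟨R, v, hv, w, hR⟩ := exists_hasFormalCoords_mul_one_add hu hP h
  obtain ⟨m, w', hRP⟩ := hR.exists_add hP.neg ⟨-ϱ, by ring⟩
  have hvm := mul_mem hv (one_add_mem_oneModTwo (dvd_mul_right 2 m))
  obtain ⟨d, hdm, hd⟩ := exists_mem_oneModTwo_mul_eq_one hvm
  have ht : (ϖ * u * (1 + 4 * (ϱ * g * v)) + -(ϖ * u)) * (1 + 2 * m) * d = 4 * ϖ * g := by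
    linear_combination 4 * ϖ * g * v * (1 + 2 * m) * d * hu + 4 * ϖ * g * hd
  have h₀ : 4 * ϖ * g ≠ 0 := fun h₀ => by
    have h₀ : 4 * θ * (g : CbrtTwo ℚ) = 0 := congrArg Subtype.val h₀
    simp [hg, hq, θ_ne_zero] at h₀
  obtain ⟨n, hn⟩ := exists_not_two_pow_dvd h₀
  obtain ⟨k, v', hv', hk⟩ := exists_eq_two_pow_mul hu hP hRP fun h =>
    hn (ht ▸ h.mul_right d)
  refine four_mul_ϱ_mul_ne hg (mul_mem hv' hdm) (k := k) (mul_left_cancel₀ ϖ_ne_zero ?_)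
  linear_combination ϱ * d * hk - ϱ * ht + 2 ^ k * ϖ * v' * d * hu

/-! ### Rational points on `z² = (τ² + 1)(1 - 2τ³)` -/

lemma equation_E_of_eq_sq {A B W F : CbrtTwo ℚ} (hB : B ≠ 0)
    (hW : θ ^ 2 * B ^ 2 - A = (1 + θ ^ 2) * W ^ 2) (hF : A ^ 2 + 4 * B ^ 4 = 5 * F ^ 2) :
    E.Equation (ρ * (θ ^ 2 * B ^ 2 - A) / (θ ^ 2 * B ^ 2)) (5 * ρ * W * F / (2 * B ^ 3)) := by
  rw [equation_E_iff]
  set X : CbrtTwo ℚ := ρ * (θ ^ 2 * B ^ 2 - A) / (θ ^ 2 * B ^ 2) with hX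
  rw [eq_div_iff (mul_ne_zero (pow_ne_zero 2 θ_ne_zero) (pow_ne_zero 2 hB))] at hX
  have hθ : (θ : CbrtTwo ℚ) ^ 6 = 4 := by linear_combination (θ ^ 3 + 2) * θ_pow_three (R := ℚ)
  have hXW : X * (θ ^ 2 * B ^ 2) = 5 * W ^ 2 := by
    linear_combination hX + ρ * hW + W ^ 2 * one_add_θ_sq_mul_ρ (R := ℚ)
  have hXF : (X ^ 2 - 2 * ρ * X + 5 * ρ) * (θ ^ 2 * B ^ 2) ^ 2 = 5 * ρ ^ 2 * F ^ 2 := by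
    linear_combination ((X - ρ) * (θ ^ 2 * B ^ 2) - ρ * A) * hX + ρ ^ 2 * B ^ 4 * hθ +
      ρ ^ 2 * hF - ρ * (θ ^ 2 * B ^ 2) ^ 2 * one_add_θ_sq_mul_ρ (R := ℚ)
  rw [div_pow, div_eq_iff (pow_ne_zero 2 (mul_ne_zero two_ne_zero (pow_ne_zero 3 hB)))]
  linear_combination -5 * ρ ^ 2 * F ^ 2 * hXW - X * (θ ^ 2 * B ^ 2) * hXF +
    X * (X ^ 2 - 2 * ρ * X + 5 * ρ) * B ^ 6 * hθ

lemma mul_div_eq_sub {B k : CbrtTwo ℚ} (hB : B ≠ 0) :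
    ρ * (θ ^ 2 * B ^ 2 - (8 * k - B ^ 2)) / (θ ^ 2 * B ^ 2) =
      5 * θ / 2 - 4 * θ * ρ * (k / B ^ 2) := by
  rw [div_eq_iff (mul_ne_zero (pow_ne_zero 2 θ_ne_zero) (pow_ne_zero 2 hB))]
  have hk : k / B ^ 2 * B ^ 2 = k := div_mul_cancel₀ k (pow_ne_zero 2 hB)
  linear_combination B ^ 2 * one_add_θ_sq_mul_ρ (R := ℚ) +
    (4 * ρ * (k / B ^ 2) - 5 / 2) * B ^ 2 * θ_pow_three (R := ℚ) + 8 * ρ * hk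

lemma eq_zero_of_eq_π_mul_sq {k β e : ℤ} {w : CbrtTwo ℤ} (hβ : Odd β)
    (he : (8 * k - β ^ 2) ^ 2 + 4 * β ^ 4 = 5 * e ^ 2)
    (hw : (⟨-(8 * k - β ^ 2), 0, β ^ 2⟩ : CbrtTwo ℤ) = π * w ^ 2) : k = 0 := by
  have hβ_ne : β ≠ 0 := by rintro rfl; simp at hβ
  have hβ₀ : (β : CbrtTwo ℚ) ≠ 0 := Int.cast_ne_zero.2 hβ_ne
  have hW : θ ^ 2 * (β : CbrtTwo ℚ) ^ 2 - (8 * (k : CbrtTwo ℚ) - (β : CbrtTwo ℚ) ^ 2) =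
      (1 + θ ^ 2) * ι w ^ 2 := by
    have h := congrArg ι hw
    rw [map_mul, map_pow, ι_π, π_eq] at h
    rw [← h]
    ext <;> simp [pow_two]
  have hF : (8 * k - β ^ 2 : CbrtTwo ℚ) ^ 2 + 4 * β ^ 4 = 5 * e ^ 2 := mod_cast he
  have h := equation_E_of_eq_sq hβ₀ hW hF
  rw [mul_div_eq_sub hβ₀] at h
  have hg : (k : CbrtTwo ℚ) / β ^ 2 ∈ 𝒪 := by
    refine ⟨β ^ 2, hβ.pow, k, ?_⟩
    rw [map_intCast]
    push_cast
    exact div_mul_cancel₀ _ (pow_ne_zero 2 hβ₀)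
  have hq := eq_zero_of_nonsingular (g := ⟨_, hg⟩) (q := k / β ^ 2) (by push_cast; rfl)
    (equation_iff_nonsingular.1 h)
  simpa using (div_eq_zero_iff.1 hq).resolve_right (pow_ne_zero 2 (Int.cast_ne_zero.2 hβ_ne))

theorem eq_zero_or_eq_neg_half_of_sq_eq {τ z : ℚ} (h : z ^ 2 = (τ ^ 2 + 1) * (1 - 2 * τ ^ 3)) :
    τ = 0 ∨ τ = -1 / 2 := by
  refine (eq_zero_or_exists_eq_π_mul_sq h).imp_right ?_
  rintro ⟨a, β, e, w, rfl, hβ, ha, he, hw⟩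
  obtain ⟨k, rfl⟩ : ∃ k : ℤ, a = 8 * k - β ^ 2 := by
    obtain ⟨c, hc⟩ := Int.eight_dvd_sq_sub_one_of_odd hβ
    exact ⟨(a + β ^ 2) / 8, by omega⟩
  obtain rfl := eq_zero_of_eq_π_mul_sq hβ he hw
  have hβ₀ : (β : ℚ) ≠ 0 := Int.cast_ne_zero.2 (by rintro rfl; simp at hβ)
  push_cast
  field_simp
  ring

end CbrtTwo

/-! ### Parametrization of `ℬ₄` -/

lemma cube_add_six_mul_sq_ne (c : ℚ) : c ^ 3 + 6 * c ^ 2 ≠ 24 := by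
  intro h
  have hc : IsIntegral ℤ c := by
    refine ⟨Polynomial.X ^ 3 + (6 * Polynomial.X ^ 2 - 24), ?_, ?_⟩
    · monicity!
    · simp only [Polynomial.eval₂_add, Polynomial.eval₂_sub, Polynomial.eval₂_mul,
        Polynomial.eval₂_X_pow, Polynomial.eval₂_ofNat]
      linear_combination h
  obtain ⟨n, rfl⟩ := IsIntegrallyClosed.isIntegral_iff.1 hc
  rw [eq_intCast] at h
  have hn : n ^ 2 * (n + 6) = 24 := by
    have h' : n ^ 3 + 6 * n ^ 2 = 24 := mod_cast h
    linear_combination h'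
  have hle : n ^ 2 ≤ 24 := Int.le_of_dvd (by norm_num) ⟨n + 6, hn.symm⟩
  have h₁ : -5 < n := by nlinarith
  have h₂ : n < 5 := by nlinarith
  interval_cases n <;> omega

/- The equation says that `(p, q)` lies on the conic `p² + 2 (e² + 4 e + 2 c) q = 0`, and the
parameter is `τ = p / q`. -/
lemma exists_parameter {c e : ℚ}
    (h : 3 * c ^ 2 * (e ^ 2 - 4) + 4 * ((e + 2 + c) ^ 3 - 12 * (e + 2 + c) + 20) = 0) :
    ∃ τ, 3 * c * τ ^ 2 = 2 * (τ ^ 3 - 2) ∧ 3 * e * τ + 4 + 6 * τ + 6 * τ ^ 2 + τ ^ 3 = 0 := by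
  set p := e * c + 4 + 2 * c + 4 * e
  set q := c ^ 2 + 2 * c + 2 * e - 4
  have hconic : p ^ 2 + 2 * (e ^ 2 + 4 * e + 2 * c) * q = 0 := by linear_combination h
  have hq₀ : q ≠ 0 := by
    intro hq₀
    have hp₀ : p = 0 := by simpa [hq₀] using hconic
    exact cube_add_six_mul_sq_ne c (by linear_combination (c + 4) * hq₀ - 2 * hp₀)
  refine ⟨p / q, ?_, ?_⟩
  · field_simp
    linear_combination (-24 + 6 * c ^ 2 + c ^ 3) * h
  · field_simp
    linear_combination (-12 + 6 * c + 6 * c ^ 2 + c ^ 3 + 12 * e + 3 * e * c) * h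

lemma eq_and_sq_eq_of_cubic_eq {c e x : ℚ} (hx : x ^ 2 = 9 * c ^ 2 - 12 * c + 12 * e + 24)
    (h : 3 * c ^ 2 * (e ^ 2 - 4) + 4 * ((e + 2 + c) ^ 3 - 12 * (e + 2 + c) + 20) = 0) :
    c = -17 / 3 ∧ x ^ 2 = 400 := by
  obtain ⟨τ, hc, he⟩ := exists_parameter h
  have hz : (x * τ ^ 2 / 4) ^ 2 = (τ ^ 2 + 1) * (1 - 2 * τ ^ 3) := by
    linear_combination τ ^ 4 / 16 * hx + τ ^ 3 / 4 * he +
      (3 * c * τ ^ 2 + 2 * (τ ^ 3 - 2) - 4 * τ ^ 2) / 16 * hc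
  obtain rfl | rfl := CbrtTwo.eq_zero_or_eq_neg_half_of_sq_eq hz
  · norm_num at hc
  · exact ⟨by linarith, by linarith⟩

/-- The rational points of the curve `ℬ₄ : x⁶ − p(t)x⁴ + q(t)x² + r(t) = 0`, where
`p(t) = 2(4t − 9)(4t + 3)`, `q(t) = 256t⁴ − 1792t³ − 2592t² − 432t − 1431` and
`r(t) = 16(16t² − 8t + 5)(64t³ + 144t² + 108t + 135)`, are exactly `(−5, ±20)`. -/
theorem curve_B4_points (t x : ℚ) :
    x ^ 6 - (2 * (4 * t - 9) * (4 * t + 3)) * x ^ 4 +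
      (256 * t ^ 4 - 1792 * t ^ 3 - 2592 * t ^ 2 - 432 * t - 1431) * x ^ 2 +
      16 * (16 * t ^ 2 - 8 * t + 5) * (64 * t ^ 3 + 144 * t ^ 2 + 108 * t + 135) = 0 ↔
    (t = -5 ∧ x = 20) ∨ (t = -5 ∧ x = -20) := by
  constructor
  · intro h
    obtain ⟨hc, hx⟩ := eq_and_sq_eq_of_cubic_eq (c := (4 * t + 3) / 3)
      (e := (x ^ 2 - (4 * t + 3) ^ 2 + 4 * (4 * t + 3)) / 12 - 2) (x := x)
      (by ring) (by linear_combination h / 432)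
    have ht : t = -5 := by linarith
    have hx' : x = 20 ∨ x = -20 := sq_eq_sq_iff_eq_or_eq_neg.1 (by linear_combination hx)
    exact hx'.imp (⟨ht, ·⟩) (⟨ht, ·⟩)
  · rintro (⟨rfl, rfl⟩ | ⟨rfl, rfl⟩) <;> norm_num
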